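/- Every planar 2-connected cubic simple graph on n > 4 vertices has a cycle double cover of size at most n/2. -/

import Mathlib

open SimpleGraph

attribute [local instance] Classical.propDecidable

/-- A cycle in a graph: a connected, 2-regular subgraph. -/
def IsCycleSubgraph {V : Type*} {G : SimpleGraph V} (C : G.Subgraph) : Prop :=
  C.coe.Connected ∧ ∀ v ∈ C.verts, (C.neighborSet v).ncard = 2

/-- A cycle double cover: a multiset of cycles covering every edge exactly twice
(counted with multiplicity). -/
def IsCDC {V : Type*} (G : SimpleGraph V) (S : Multiset G.Subgraph) : Prop :=
  (∀ C ∈ S, IsCycleSubgraph C) ∧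
  ∀ e ∈ G.edgeSet, S.countP (fun C => e ∈ C.edgeSet) = 2

/-- Graph minor relation (via branch sets). -/
def HasGraphMinor {V : Type*} {W : Type*} (G : SimpleGraph V) (H : SimpleGraph W) : Prop :=
  ∃ f : W → Set V,
    (∀ w, (f w).Nonempty) ∧
    (∀ w, (G.induce (f w)).Connected) ∧
    (Pairwise fun w₁ w₂ => Disjoint (f w₁) (f w₂)) ∧
    ∀ ⦃w₁ w₂⦄, H.Adj w₁ w₂ → ∃ v₁ ∈ f w₁, ∃ v₂ ∈ f w₂, G.Adj v₁ v₂

/-- Planarity, via Wagner's theorem: no `K₅` minor and no `K_{3,3}` minor. -/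
def IsPlanar {V : Type*} (G : SimpleGraph V) : Prop :=
  ¬ HasGraphMinor G (completeGraph (Fin 5)) ∧
  ¬ HasGraphMinor G (completeBipartiteGraph (Fin 3) (Fin 3))

/-- `k`-connectivity: more than `k` vertices, and removing fewer than `k`
vertices leaves a connected graph. -/
def IsKConnected {V : Type*} [Fintype V] (k : ℕ) (G : SimpleGraph V) : Prop :=
  k < Fintype.card V ∧ ∀ s : Set V, s.ncard < k → (G.induce sᶜ).Connected

/-- A Hamiltonian cycle: a cycle through all vertices. -/
def IsHamCycle {V : Type*} (G : SimpleGraph V) (C : G.Subgraph) : Prop :=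
  IsCycleSubgraph C ∧ C.verts = Set.univ

/-!
The argument takes place in the class of loopless 2-edge-connected multigraphs with all degrees at
most 3, some vertex of degree 3, and no `K₃,₃` minor (`Multigraph.Admissible`); cycles are minimal
nonempty sets of edges with even degrees. No embedding in the plane is used: the role of the faces
is played by a double cover of maximal size.

*A double cover by `|E| - |V| + 2` circuits* (`Admissible.hasEulerCover`), by induction. Vertices
of degree 2 are suppressed. Across a cut with at most three edges and at least two vertices on each
side the graph is split into two smaller ones by contracting either side, and their covers are glued
along the cut. Otherwise the graph is cubic and essentially 4-edge-connected; an edge `uv` is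
deleted. A cover of the remaining graph by the maximal number of circuits behaves like the set of
faces of a plane graph: sets of its members are dual to edge cuts. If some member passes through
both `u` and `v`, it is divided into two circuits through `uv`; otherwise the duality exhibits a
`K₃,₃` minor of the original graph.

*Saving circuits* (`Admissible.exists_hasDoubleCover_lt`). In an essentially 4-edge-connected cubic
graph take a member `C` of such a cover. The members meeting `C` correspond to the edges of `C`;
colouring these edges with three colours and adding up, within each colour, `C` and its neighbours
of that colour replaces `|C| + 1` members by three, a saving of `|C| - 2`.

*Assembling.* One circuit can be saved in a graph on at least three vertices that is cubic except
perhaps at a root vertex, at which all parallel edges meet (`Admissible.hasSlackCover_one`), and two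
in a cubic graph without parallel edges on more than four vertices (`Admissible.hasSlackCover_two`):
such a graph either is essentially 4-edge-connected or splits along a small cut into two graphs
rooted at the contracted vertices, each saving one. As `2|E| = 3|V|` in a cubic graph, the resulting
bound `|E| - |V|` equals `|V| / 2`.
-/

/-- A finite loopless multigraph: vertices and edges are finite sets in fixed ambient types, and
every edge `e` joins `src e` to `tgt e`. In contrast to `Graph`, the two ends are chosen (their
order carries no meaning), so that boundaries and contractions are given by formulas; fixing the
ambient types lets deletions and contractions be compared by equality of edge sets. -/
structure Multigraph (α β : Type*) where
  verts : Finset α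
  edges : Finset β
  src : β → α
  tgt : β → α
  src_mem : ∀ e ∈ edges, src e ∈ verts
  tgt_mem : ∀ e ∈ edges, tgt e ∈ verts
  src_ne_tgt : ∀ e ∈ edges, src e ≠ tgt e

namespace Multigraph

open Finset
open scoped symmDiff

variable {α β : Type*} {G : Multigraph α β}

/-! ### Incidence and cuts -/

/-- `v` is an end of `e`. -/
def Inc (G : Multigraph α β) (e : β) (v : α) : Prop := G.src e = v ∨ G.tgt e = v

/-- `e` joins `a` and `b`. -/
def IsLink (G : Multigraph α β) (e : β) (a b : α) : Prop :=
  (G.src e = a ∧ G.tgt e = b) ∨ (G.src e = b ∧ G.tgt e = a)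

/-- The edge cut of `X`: the set of edges with exactly one end in `X`. The cut of `{v}` is the set
of edges at `v`, whose size is the degree of `v`. -/
noncomputable def cut (G : Multigraph α β) (X : Finset α) : Finset β :=
  {e ∈ G.edges | ¬(G.src e ∈ X ↔ G.tgt e ∈ X)}

lemma isLink_src_tgt (e : β) : G.IsLink e (G.src e) (G.tgt e) := Or.inl ⟨rfl, rfl⟩

lemma IsLink.symm {e : β} {a b : α} (h : G.IsLink e a b) : G.IsLink e b a := Or.symm h

lemma IsLink.inc_left {e : β} {a b : α} (h : G.IsLink e a b) : G.Inc e a :=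
  h.imp And.left And.right

lemma IsLink.inc_right {e : β} {a b : α} (h : G.IsLink e a b) : G.Inc e b := h.symm.inc_left

lemma Inc.exists_isLink {e : β} {a : α} (h : G.Inc e a) : ∃ b, G.IsLink e a b := by
  rcases h with rfl | rfl
  · exact ⟨_, isLink_src_tgt e⟩
  · exact ⟨_, (isLink_src_tgt e).symm⟩

lemma Inc.isLink_of_ne {e : β} {a b : α} (ha : G.Inc e a) (hb : G.Inc e b) (hab : a ≠ b) :
    G.IsLink e a b := by
  unfold Inc IsLink at *
  grind

lemma IsLink.inc_iff {e : β} {a b c : α} (h : G.IsLink e a b) : G.Inc e c ↔ c = a ∨ c = b := by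
  unfold Inc IsLink at *
  grind

lemma IsLink.ne {e : β} {a b : α} (h : G.IsLink e a b) (he : e ∈ G.edges) : a ≠ b := by
  rcases h with ⟨rfl, rfl⟩ | ⟨rfl, rfl⟩
  · exact G.src_ne_tgt e he
  · exact (G.src_ne_tgt e he).symm

lemma Inc.mem_verts {e : β} {v : α} (h : G.Inc e v) (he : e ∈ G.edges) : v ∈ G.verts := by
  rcases h with rfl | rfl
  · exact G.src_mem e he
  · exact G.tgt_mem e he

lemma cut_subset_edges (X : Finset α) : G.cut X ⊆ G.edges := filter_subset _ _

lemma mem_cut {X : Finset α} {e : β} :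
    e ∈ G.cut X ↔ e ∈ G.edges ∧ ¬(G.src e ∈ X ↔ G.tgt e ∈ X) := mem_filter

lemma IsLink.mem_cut_iff {e : β} {a b : α} (h : G.IsLink e a b) {X : Finset α} :
    e ∈ G.cut X ↔ e ∈ G.edges ∧ ¬(a ∈ X ↔ b ∈ X) := by
  rcases h with ⟨rfl, rfl⟩ | ⟨rfl, rfl⟩
  · exact mem_cut
  · rw [mem_cut, iff_comm (a := G.src e ∈ X)]

lemma exists_isLink_of_mem_cut {e : β} {X : Finset α} (h : e ∈ G.cut X) :
    ∃ a ∈ X, ∃ b ∉ X, G.IsLink e a b := by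
  have hX := (mem_cut.1 h).2
  by_cases hs : G.src e ∈ X
  · exact ⟨_, hs, _, fun ht => hX (iff_of_true hs ht), isLink_src_tgt e⟩
  · exact ⟨_, by tauto, _, hs, (isLink_src_tgt e).symm⟩

lemma mem_cut_singleton {v : α} {e : β} : e ∈ G.cut {v} ↔ e ∈ G.edges ∧ G.Inc e v := by
  rw [mem_cut, mem_singleton, mem_singleton]
  refine and_congr_right fun he => ?_
  have := G.src_ne_tgt e he
  unfold Inc
  grind

lemma cut_sdiff_verts (X : Finset α) : G.cut (G.verts \ X) = G.cut X := by
  ext e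
  simp only [mem_cut, mem_sdiff]
  refine and_congr_right fun he => ?_
  have := G.src_mem e he
  have := G.tgt_mem e he
  tauto

lemma cut_empty : G.cut ∅ = ∅ := by
  ext e
  simp [mem_cut]

lemma cut_verts : G.cut G.verts = ∅ := by
  rw [← cut_empty (G := G), ← cut_sdiff_verts, sdiff_self, bot_eq_empty]

/-! ### Boundaries, even sets and circuits -/

/-- The mod 2 boundary of an edge set: the parity of its degree at `v`. -/
noncomputable def boundary (G : Multigraph α β) (F : Finset β) (v : α) : ZMod 2 :=
  ∑ e ∈ F, ((if G.src e = v then 1 else 0) + (if G.tgt e = v then 1 else 0))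

/-- An edge set all of whose degrees are even. -/
def IsEven (G : Multigraph α β) (F : Finset β) : Prop := ∀ v, G.boundary F v = 0

/-- A circuit: a minimal nonempty edge set with even degrees, that is, the edge set of a cycle. -/
structure IsCircuit (G : Multigraph α β) (C : Finset β) : Prop where
  subset_edges : C ⊆ G.edges
  nonempty : C.Nonempty
  isEven : G.IsEven C
  eq_of_subset : ∀ D ⊆ C, D.Nonempty → G.IsEven D → D = C

lemma isEven_empty : G.IsEven ∅ := fun _ => sum_empty

lemma boundary_singleton (e : β) (v : α) :
    G.boundary {e} v = (if G.src e = v then 1 else 0) + (if G.tgt e = v then 1 else 0) :=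
  sum_singleton _ _

lemma boundary_union {A B : Finset β} (h : Disjoint A B) (v : α) :
    G.boundary (A ∪ B) v = G.boundary A v + G.boundary B v := sum_union h

lemma boundary_sdiff {A B : Finset β} (h : B ⊆ A) (v : α) :
    G.boundary (A \ B) v = G.boundary A v + G.boundary B v := by
  have hsum : G.boundary (A \ B) v + G.boundary B v = G.boundary A v := sum_sdiff h
  rw [← hsum, add_assoc, CharTwo.add_self_eq_zero, add_zero]

lemma boundary_symmDiff (A B : Finset β) (v : α) :
    G.boundary (A ∆ B) v = G.boundary A v + G.boundary B v := by
  rw [symmDiff_eq_sup_sdiff_inf, sup_eq_union, inf_eq_inter,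
    boundary_sdiff (inter_subset_left.trans subset_union_left)]
  have hsum : G.boundary (A ∪ B) v + G.boundary (A ∩ B) v = G.boundary A v + G.boundary B v :=
    sum_union_inter
  exact hsum

lemma IsEven.symmDiff {A B : Finset β} (hA : G.IsEven A) (hB : G.IsEven B) : G.IsEven (A ∆ B) :=
  fun v => by rw [boundary_symmDiff, hA v, hB v, add_zero]

lemma IsEven.sdiff {A B : Finset β} (hA : G.IsEven A) (hB : G.IsEven B) (h : B ⊆ A) :
    G.IsEven (A \ B) :=
  fun v => by rw [boundary_sdiff h, hA v, hB v, add_zero]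

lemma boundary_filter_inc (F : Finset β) (v : α) :
    G.boundary {e ∈ F | G.Inc e v} v = G.boundary F v := by
  refine sum_filter_of_ne fun e _ => ?_
  unfold Inc
  grind

lemma boundary_congr {F F' : Finset β} {v : α} (h : ∀ e, G.Inc e v → (e ∈ F ↔ e ∈ F')) :
    G.boundary F v = G.boundary F' v := by
  rw [← boundary_filter_inc F, ← boundary_filter_inc F']
  congr 1
  grind

lemma boundary_eq_zero_of_not_inc {F : Finset β} {v : α} (h : ∀ e ∈ F, ¬G.Inc e v) :
    G.boundary F v = 0 := by
  rw [← boundary_filter_inc, filter_false_of_mem h]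
  exact isEven_empty v

lemma sum_boundary (X : Finset α) (F : Finset β) :
    ∑ v ∈ X, G.boundary F v = (#{e ∈ F | ¬(G.src e ∈ X ↔ G.tgt e ∈ X)} : ZMod 2) := by
  unfold boundary
  rw [sum_comm, natCast_card_filter]
  refine sum_congr rfl fun e _ => ?_
  rw [sum_add_distrib, sum_ite_eq, sum_ite_eq]
  by_cases hs : G.src e ∈ X <;> by_cases ht : G.tgt e ∈ X <;>
    simp [hs, ht, CharTwo.add_self_eq_zero]

lemma sum_boundary_eq_card_inter_cut {F : Finset β} (hF : F ⊆ G.edges) (X : Finset α) :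
    ∑ v ∈ X, G.boundary F v = (#(F ∩ G.cut X) : ZMod 2) := by
  rw [sum_boundary, cut, inter_filter, inter_eq_left.2 hF]

lemma sum_verts_boundary {F : Finset β} (hF : F ⊆ G.edges) : ∑ v ∈ G.verts, G.boundary F v = 0 := by
  rw [sum_boundary_eq_card_inter_cut hF, cut_verts, inter_empty, card_empty, Nat.cast_zero]

lemma boundary_eq_card_inter_cut {F : Finset β} (hF : F ⊆ G.edges) (v : α) :
    G.boundary F v = (#(F ∩ G.cut {v}) : ZMod 2) := by
  rw [← sum_boundary_eq_card_inter_cut hF, sum_singleton]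

lemma IsEven.even_card_inter_cut {F : Finset β} (h : G.IsEven F) (hF : F ⊆ G.edges)
    (X : Finset α) : Even #(F ∩ G.cut X) := by
  rw [← ZMod.natCast_eq_zero_iff_even, ← sum_boundary_eq_card_inter_cut hF]
  exact sum_eq_zero fun v _ => h v

lemma IsEven.filter_src_mem {F : Finset β} (h : G.IsEven F) {X : Finset α}
    (hX : ∀ e ∈ F, (G.src e ∈ X ↔ G.tgt e ∈ X)) : G.IsEven {e ∈ F | G.src e ∈ X} := by
  intro v
  by_cases hv : v ∈ X
  · rw [← h v]
    refine boundary_congr fun e he => ?_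
    unfold Inc at he
    grind
  · refine boundary_eq_zero_of_not_inc fun e he hev => ?_
    unfold Inc at hev
    grind

lemma IsCircuit.exists_mem_cut {C : Finset β} (hC : G.IsCircuit C) {X : Finset α} {x y : α}
    {f g : β} (hx : x ∈ X) (hy : y ∉ X) (hf : f ∈ C) (hfx : G.Inc f x) (hg : g ∈ C)
    (hgy : G.Inc g y) : ∃ e ∈ C, e ∈ G.cut X := by
  by_contra! hcut
  have hX : ∀ e ∈ C, (G.src e ∈ X ↔ G.tgt e ∈ X) := fun e he => by
    by_contra h
    exact hcut e he (mem_cut.2 ⟨hC.subset_edges he, h⟩)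
  have hfC : f ∈ C.filter (G.src · ∈ X) := by
    unfold Inc at hfx
    grind
  have hgX : g ∈ C.filter (G.src · ∈ X) := by
    rwa [hC.eq_of_subset _ (filter_subset _ _) ⟨f, hfC⟩ (hC.isEven.filter_src_mem hX)]
  unfold Inc at hgy
  grind

lemma IsCircuit.mem_inter_cut {C : Finset β} (hC : G.IsCircuit C) {e : β} {v : α} (he : e ∈ C)
    (hev : G.Inc e v) : e ∈ C ∩ G.cut {v} :=
  mem_inter.2 ⟨he, mem_cut_singleton.2 ⟨hC.subset_edges he, hev⟩⟩

lemma IsCircuit.two_le_card_inter_cut {C : Finset β} (hC : G.IsCircuit C) {e : β} {v : α}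
    (he : e ∈ C) (hev : G.Inc e v) : 2 ≤ #(C ∩ G.cut {v}) := by
  have hpos : 0 < #(C ∩ G.cut {v}) := card_pos.2 ⟨e, hC.mem_inter_cut he hev⟩
  have heven := hC.isEven.even_card_inter_cut hC.subset_edges {v}
  grind

lemma IsCircuit.card_inter_cut_eq_two {C : Finset β} (hC : G.IsCircuit C) {v : α}
    (hv : #(G.cut {v}) ≤ 3) {e : β} (he : e ∈ C) (hev : G.Inc e v) : #(C ∩ G.cut {v}) = 2 := by
  have hle : #(C ∩ G.cut {v}) ≤ 3 := (card_le_card inter_subset_right).trans hv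
  have htwo := hC.two_le_card_inter_cut he hev
  have heven := hC.isEven.even_card_inter_cut hC.subset_edges {v}
  grind

lemma IsCircuit.exists_ne_inc {C : Finset β} (hC : G.IsCircuit C) {v : α} {e : β} (he : e ∈ C)
    (hev : G.Inc e v) : ∃ f ∈ C, f ≠ e ∧ G.Inc f v := by
  obtain ⟨f, hf, hfe⟩ := exists_mem_ne (hC.two_le_card_inter_cut he hev) e
  rw [mem_inter, mem_cut_singleton] at hf
  exact ⟨f, hf.1, hfe, hf.2.2⟩

lemma IsCircuit.two_le_card {C : Finset β} (hC : G.IsCircuit C) : 2 ≤ #C := by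
  obtain ⟨e, he⟩ := hC.nonempty
  exact (hC.two_le_card_inter_cut he (Or.inl rfl)).trans (card_le_card inter_subset_left)

lemma IsCircuit.exists_common_inc {C D : Finset β} (hC : G.IsCircuit C) (hD : G.IsCircuit D)
    {v : α} (hv : #(G.cut {v}) ≤ 3) {e f : β} (he : e ∈ C) (hev : G.Inc e v) (hf : f ∈ D)
    (hfv : G.Inc f v) : ∃ g ∈ C, g ∈ D ∧ G.Inc g v := by
  by_contra! hCD
  have hdisj : Disjoint (C ∩ G.cut {v}) (D ∩ G.cut {v}) :=
    disjoint_left.2 fun g hgC hgD => by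
      rw [mem_inter, mem_cut_singleton] at hgC hgD
      exact hCD g hgC.1 hgD.1 hgC.2.2
  have hcard := card_union_of_disjoint hdisj
  have hle : #(C ∩ G.cut {v} ∪ D ∩ G.cut {v}) ≤ #(G.cut {v}) :=
    card_le_card (union_subset inter_subset_right inter_subset_right)
  have hC2 := hC.card_inter_cut_eq_two hv he hev
  have hD2 := hD.card_inter_cut_eq_two hv hf hfv
  omega

/-! ### Quotients and connectivity -/

/-- The quotient of `G` by the fibres of `f`: vertices are moved along `f`, and edges whose ends
become equal are dropped. -/
noncomputable def map {γ : Type*} (G : Multigraph α β) (f : α → γ) : Multigraph γ β where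
  verts := G.verts.image f
  edges := {e ∈ G.edges | f (G.src e) ≠ f (G.tgt e)}
  src e := f (G.src e)
  tgt e := f (G.tgt e)
  src_mem _ he := mem_image_of_mem f (G.src_mem _ (mem_filter.1 he).1)
  tgt_mem _ he := mem_image_of_mem f (G.tgt_mem _ (mem_filter.1 he).1)
  src_ne_tgt _ he := (mem_filter.1 he).2

/-- Some edge joins a vertex of `A` to a vertex of `B`. -/
def Linked (G : Multigraph α β) (A B : Finset α) : Prop :=
  ∃ e ∈ G.edges, ∃ a ∈ A, ∃ b ∈ B, G.IsLink e a b

/-- `X` induces a connected subgraph (or is empty): the two parts of any splitting of `X` by a set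
`Z` are linked. -/
def PreconnectedOn (G : Multigraph α β) (X : Finset α) : Prop :=
  ∀ Z : Finset α, (X ∩ Z).Nonempty → (X \ Z).Nonempty → G.Linked (X ∩ Z) (X \ Z)

/-- There is a `K_{3,3}` minor, given by its branch sets. -/
def HasK33Minor (G : Multigraph α β) : Prop :=
  ∃ B : Fin 3 ⊕ Fin 3 → Finset α,
    (∀ w, (B w).Nonempty ∧ B w ⊆ G.verts ∧ G.PreconnectedOn (B w)) ∧
    (Pairwise fun w₁ w₂ => Disjoint (B w₁) (B w₂)) ∧
    ∀ i j, G.Linked (B (Sum.inl i)) (B (Sum.inr j))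

/-- Every edge cut separating two vertices has at least two edges. -/
def TwoEdgeConnected (G : Multigraph α β) : Prop :=
  ∀ X : Finset α, (G.verts ∩ X).Nonempty → (G.verts \ X).Nonempty → 2 ≤ #(G.cut X)

/-- All degrees are at most 3. -/
def IsSubcubic (G : Multigraph α β) : Prop := ∀ v ∈ G.verts, #(G.cut {v}) ≤ 3

lemma Linked.symm {A B : Finset α} (h : G.Linked A B) : G.Linked B A := by
  obtain ⟨e, he, a, ha, b, hb, hab⟩ := h
  exact ⟨e, he, b, hb, a, ha, hab.symm⟩

lemma Linked.mono {A A' B B' : Finset α} (h : G.Linked A B) (hA : A ⊆ A') (hB : B ⊆ B') :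
    G.Linked A' B' := by
  obtain ⟨e, he, a, ha, b, hb, hab⟩ := h
  exact ⟨e, he, a, hA ha, b, hB hb, hab⟩

section Map

variable {γ : Type*} {f : α → γ}

lemma mem_edges_map {e : β} :
    e ∈ (G.map f).edges ↔ e ∈ G.edges ∧ f (G.src e) ≠ f (G.tgt e) := mem_filter

lemma edges_map_subset : (G.map f).edges ⊆ G.edges := filter_subset _ _

lemma IsLink.exists_of_map {e : β} {a b : γ} (h : (G.map f).IsLink e a b) :
    ∃ a' b', f a' = a ∧ f b' = b ∧ G.IsLink e a' b' := by
  rcases h with ⟨ha, hb⟩ | ⟨hb, ha⟩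
  · exact ⟨_, _, ha, hb, isLink_src_tgt e⟩
  · exact ⟨_, _, ha, hb, (isLink_src_tgt e).symm⟩

lemma Linked.of_map {A B : Finset γ} (h : (G.map f).Linked A B) :
    G.Linked {v ∈ G.verts | f v ∈ A} {v ∈ G.verts | f v ∈ B} := by
  obtain ⟨e, he, _, ha, _, hb, hlink⟩ := h
  obtain ⟨a, b, rfl, rfl, hab⟩ := hlink.exists_of_map
  have heG := edges_map_subset he
  exact ⟨e, heG, a, mem_filter.2 ⟨hab.inc_left.mem_verts heG, ha⟩, b,
    mem_filter.2 ⟨hab.inc_right.mem_verts heG, hb⟩, hab⟩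

lemma cut_map (Z : Finset γ) : (G.map f).cut Z = G.cut {v ∈ G.verts | f v ∈ Z} := by
  ext e
  simp only [mem_cut, mem_edges_map, mem_filter, and_assoc]
  refine and_congr_right fun he => ?_
  simp only [map, G.src_mem e he, G.tgt_mem e he, true_and, and_iff_right_iff_imp]
  exact fun h heq => h (by rw [heq])

lemma boundary_map_inter_edges {D : Finset β} (hD : D ⊆ G.edges) (w : γ) :
    (G.map f).boundary (D ∩ (G.map f).edges) w = ∑ v ∈ G.verts with f v = w, G.boundary D v := by
  rw [boundary_eq_card_inter_cut inter_subset_right, sum_boundary_eq_card_inter_cut hD,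
    inter_assoc, inter_eq_right.2 (cut_subset_edges _), cut_map]
  simp only [mem_singleton]

lemma IsEven.inter_edges_map {D : Finset β} (hD : D ⊆ G.edges) (h : G.IsEven D) :
    (G.map f).IsEven (D ∩ (G.map f).edges) := fun w => by
  rw [boundary_map_inter_edges hD, sum_eq_zero fun v _ => h v]

lemma TwoEdgeConnected.map (h : G.TwoEdgeConnected) : (G.map f).TwoEdgeConnected := by
  rintro Z ⟨_, hw⟩ ⟨_, hw'⟩
  simp only [Multigraph.map, mem_inter, mem_sdiff, mem_image] at hw hw'
  obtain ⟨⟨v, hv, rfl⟩, hvZ⟩ := hw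
  obtain ⟨⟨v', hv', rfl⟩, hvZ'⟩ := hw'
  rw [cut_map]
  exact h _ ⟨v, mem_inter.2 ⟨hv, mem_filter.2 ⟨hv, hvZ⟩⟩⟩
    ⟨v', mem_sdiff.2 ⟨hv', fun h => hvZ' (mem_filter.1 h).2⟩⟩

lemma PreconnectedOn.of_map (hf : ∀ w, G.PreconnectedOn {v ∈ G.verts | f v = w}) {W : Finset γ}
    (hW : (G.map f).PreconnectedOn W) : G.PreconnectedOn {v ∈ G.verts | f v ∈ W} := by
  intro Z hin hout
  by_cases hsplit : ∃ w ∈ W, ({v ∈ G.verts | f v = w} ∩ Z).Nonempty ∧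
      ({v ∈ G.verts | f v = w} \ Z).Nonempty
  · obtain ⟨w, hw, h₁, h₂⟩ := hsplit
    have hsub : {v ∈ G.verts | f v = w} ⊆ {v ∈ G.verts | f v ∈ W} :=
      monotone_filter_right _ fun v _ hv => hv ▸ hw
    exact (hf w Z h₁ h₂).mono (inter_subset_inter_right hsub) (sdiff_subset_sdiff hsub le_rfl)
  have hfib : ∀ a ∈ G.verts, ∀ b ∈ G.verts, f a ∈ W → f a = f b → a ∈ Z → b ∈ Z := by
    intro a ha b hb haW hab haZ
    by_contra hbZ
    exact hsplit ⟨f a, haW, ⟨a, by simp [ha, haZ]⟩, ⟨b, by simp [hb, hbZ, hab]⟩⟩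
  obtain ⟨a, ha⟩ := hin
  obtain ⟨b, hb⟩ := hout
  simp only [mem_inter, mem_sdiff, mem_filter] at ha hb
  have hlink := hW ({v ∈ G.verts | f v ∈ W ∧ v ∈ Z}.image f)
    ⟨f a, by simp only [mem_inter, mem_image, mem_filter]; exact ⟨ha.1.2, a, by tauto⟩⟩
    ⟨f b, by
      simp only [mem_sdiff, mem_image, mem_filter]
      exact ⟨hb.1.2, fun ⟨c, hc, hcb⟩ => hb.2 (hfib c hc.1 b hb.1.1 hc.2.1 hcb hc.2.2)⟩⟩
  refine hlink.of_map.mono (fun v hv => ?_) fun v hv => ?_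
  · simp only [mem_filter, mem_inter, mem_image] at hv ⊢
    obtain ⟨hvG, hvW, c, hc, hcv⟩ := hv
    exact ⟨⟨hvG, hvW⟩, hfib c hc.1 v hvG hc.2.1 hcv hc.2.2⟩
  · simp only [mem_filter, mem_sdiff, mem_image] at hv ⊢
    exact ⟨⟨hv.1, hv.2.1⟩, fun hvZ => hv.2.2 ⟨v, ⟨hv.1, hv.2.1, hvZ⟩, rfl⟩⟩

lemma HasK33Minor.of_map (hf : ∀ w, G.PreconnectedOn {v ∈ G.verts | f v = w})
    (h : (G.map f).HasK33Minor) : G.HasK33Minor := by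
  obtain ⟨B, hB, hdisj, hlink⟩ := h
  refine ⟨fun w => {v ∈ G.verts | f v ∈ B w}, fun w => ⟨?_, filter_subset _ _, ?_⟩,
    fun w w' hww => ?_, fun i j => (hlink i j).of_map⟩
  · obtain ⟨b, hb⟩ := (hB w).1
    obtain ⟨a, ha, rfl⟩ := mem_image.1 ((hB w).2.1 hb)
    exact ⟨a, mem_filter.2 ⟨ha, hb⟩⟩
  · exact .of_map hf (hB w).2.2
  · exact disjoint_left.2 fun a ha ha' =>
      disjoint_left.1 (hdisj hww) (mem_filter.1 ha).2 (mem_filter.1 ha').2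

end Map

lemma preconnectedOn_singleton (v : α) : G.PreconnectedOn {v} := by
  rintro Z ⟨a, ha⟩ ⟨b, hb⟩
  simp only [mem_inter, mem_sdiff, mem_singleton] at ha hb
  exact absurd (hb.1.trans ha.1.symm ▸ ha.2) hb.2

/-- If `X` split into two parts that are not linked, the two cuts of the parts would be disjoint
subsets of `G.cut X` with at least two edges each. -/
lemma TwoEdgeConnected.preconnectedOn (hG : G.TwoEdgeConnected) {X : Finset α} (hX : X ⊆ G.verts)
    (hne : (G.verts \ X).Nonempty) (h3 : #(G.cut X) ≤ 3) : G.PreconnectedOn X := by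
  intro Z hin hout
  by_contra hlink
  have hno : ∀ e ∈ G.edges, ¬(G.src e ∈ X ∩ Z ∧ G.tgt e ∈ X \ Z) ∧
      ¬(G.tgt e ∈ X ∩ Z ∧ G.src e ∈ X \ Z) := fun e he =>
    ⟨fun h => hlink ⟨e, he, _, h.1, _, h.2, isLink_src_tgt e⟩,
      fun h => hlink ⟨e, he, _, h.1, _, h.2, (isLink_src_tgt e).symm⟩⟩
  simp only [mem_inter, mem_sdiff] at hno
  have htwo : ∀ Y ⊆ X, Y.Nonempty → 2 ≤ #(G.cut Y) := fun Y hY hYn =>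
    hG Y (by rwa [inter_eq_right.2 (hY.trans hX)]) (hne.mono (sdiff_subset_sdiff le_rfl hY))
  have hdisj : Disjoint (G.cut (X ∩ Z)) (G.cut (X \ Z)) := by
    refine disjoint_left.2 fun e h₁ h₂ => ?_
    have := hno e (cut_subset_edges _ h₁)
    simp only [mem_cut, mem_inter, mem_sdiff] at h₁ h₂
    tauto
  have hsub : G.cut (X ∩ Z) ∪ G.cut (X \ Z) ⊆ G.cut X := by
    refine union_subset ?_ ?_ <;> intro e he <;>
      have := hno e (cut_subset_edges _ he) <;>
      simp only [mem_cut, mem_inter, mem_sdiff] at he ⊢ <;> tauto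
  have hcard := card_le_card hsub
  rw [card_union_of_disjoint hdisj] at hcard
  have h₁ := htwo _ inter_subset_left hin
  have h₂ := htwo _ sdiff_subset hout
  omega

/-! ### Contractions and admissible graphs -/

/-- The contraction of the vertex set `X` to its vertex `x`. -/
noncomputable def contract (G : Multigraph α β) (X : Finset α) (x : α) : Multigraph α β :=
  G.map fun a => if a ∈ X then x else a

/-- The class of graphs on which the induction runs: 2-edge-connected, all degrees 2 or 3,
at least one vertex of degree 3, and no `K_{3,3}` minor. -/
structure Admissible (G : Multigraph α β) : Prop where
  twoEdgeConnected : G.TwoEdgeConnected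
  isSubcubic : G.IsSubcubic
  exists_branch : ∃ v ∈ G.verts, #(G.cut {v}) = 3
  not_hasK33Minor : ¬G.HasK33Minor

section Contract

variable {X : Finset α} {x : α}

lemma edges_contract_subset : (G.contract X x).edges ⊆ G.edges := edges_map_subset

lemma verts_contract (hX : X ⊆ G.verts) (hx : x ∈ X) :
    (G.contract X x).verts = insert x (G.verts \ X) := by
  ext a
  simp only [contract, map, mem_image, mem_insert, mem_sdiff]
  grind

lemma self_mem_verts_contract (hX : X ⊆ G.verts) (hx : x ∈ X) :
    x ∈ (G.contract X x).verts :=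
  verts_contract hX hx ▸ mem_insert_self x _

lemma card_verts_contract (hX : X ⊆ G.verts) (hx : x ∈ X) :
    #(G.contract X x).verts + #X = #G.verts + 1 := by
  rw [verts_contract hX hx, card_insert_of_notMem (by simp [hx]), ← card_sdiff_add_card_eq_card hX]
  omega

lemma mem_edges_contract (hx : x ∈ X) {e : β} :
    e ∈ (G.contract X x).edges ↔ e ∈ G.edges ∧ ¬(G.src e ∈ X ∧ G.tgt e ∈ X) := by
  refine mem_edges_map.trans (and_congr_right fun he => ?_)
  have := G.src_ne_tgt e he
  grind

lemma filter_contract_eq_self (hX : X ⊆ G.verts) (hx : x ∈ X) :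
    {v ∈ G.verts | (if v ∈ X then x else v) = x} = X := by
  grind

lemma filter_contract_eq_other {v : α} (hx : x ∈ X) (hv : v ∈ G.verts \ X) :
    {a ∈ G.verts | (if a ∈ X then x else a) = v} = {v} := by
  grind

lemma cut_contract_self (hX : X ⊆ G.verts) (hx : x ∈ X) :
    (G.contract X x).cut {x} = G.cut X := by
  rw [contract, cut_map]
  simp only [mem_singleton]
  rw [filter_contract_eq_self hX hx]

lemma cut_contract_other {v : α} (hx : x ∈ X) (hv : v ∈ G.verts \ X) :
    (G.contract X x).cut {v} = G.cut {v} := by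
  rw [contract, cut_map]
  simp only [mem_singleton]
  rw [filter_contract_eq_other hx hv]

lemma edges_contract_union {y : α} (hx : x ∈ X) (hy : y ∈ G.verts \ X) :
    (G.contract X x).edges ∪ (G.contract (G.verts \ X) y).edges = G.edges := by
  ext e
  have := G.src_mem e
  have := G.tgt_mem e
  simp only [mem_union, mem_edges_contract hx, mem_edges_contract hy, mem_sdiff]
  tauto

lemma edges_contract_inter {y : α} (hx : x ∈ X) (hy : y ∈ G.verts \ X) :
    (G.contract X x).edges ∩ (G.contract (G.verts \ X) y).edges = G.cut X := by
  ext e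
  have := G.src_mem e
  have := G.tgt_mem e
  simp only [mem_inter, mem_edges_contract hx, mem_edges_contract hy, mem_sdiff, mem_cut]
  tauto

lemma card_edges_contract_add {y : α} (hx : x ∈ X) (hy : y ∈ G.verts \ X) :
    #(G.contract X x).edges + #(G.contract (G.verts \ X) y).edges = #G.edges + #(G.cut X) := by
  rw [← card_union_add_card_inter, edges_contract_union hx hy, edges_contract_inter hx hy]

lemma preconnectedOn_fiber_contract (hX : X ⊆ G.verts) (hx : x ∈ X) (hc : G.PreconnectedOn X)
    (w : α) : G.PreconnectedOn {v ∈ G.verts | (if v ∈ X then x else v) = w} := by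
  by_cases hw : w ∈ G.verts \ X
  · rw [filter_contract_eq_other hx hw]
    exact preconnectedOn_singleton w
  by_cases hwx : w = x
  · rwa [hwx, filter_contract_eq_self hX hx]
  · rintro Z ⟨a, ha⟩
    grind

lemma Admissible.contract (hG : G.Admissible) (hX : X ⊆ G.verts) (hx : x ∈ X)
    (h3 : #(G.cut X) ≤ 3) (hc : G.PreconnectedOn X)
    (hb : #(G.cut X) = 3 ∨ ∃ v ∈ G.verts \ X, #(G.cut {v}) = 3) :
    (G.contract X x).Admissible where
  twoEdgeConnected := hG.twoEdgeConnected.map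
  isSubcubic v hv := by
    rw [verts_contract hX hx, mem_insert] at hv
    rcases hv with rfl | hv
    · rwa [cut_contract_self hX hx]
    · rw [cut_contract_other hx hv]
      exact hG.isSubcubic v (mem_sdiff.1 hv).1
  exists_branch := by
    rw [verts_contract hX hx]
    rcases hb with h | ⟨v, hv, h⟩
    · exact ⟨x, mem_insert_self _ _, by rwa [cut_contract_self hX hx]⟩
    · exact ⟨v, mem_insert_of_mem hv, by rwa [cut_contract_other hx hv]⟩
  not_hasK33Minor h :=
    hG.not_hasK33Minor (.of_map (preconnectedOn_fiber_contract hX hx hc) h)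

end Contract

/-! ### Gluing double covers along a small cut -/

/-- A cycle double cover, as an indexed family of circuits. -/
structure IsDoubleCover {ι : Type*} [Fintype ι] (G : Multigraph α β) (S : ι → Finset β) :
    Prop where
  isCircuit : ∀ i, G.IsCircuit (S i)
  card_eq_two : ∀ e ∈ G.edges, #{i | e ∈ S i} = 2

/-- `G` has a cycle double cover by `m` circuits. -/
def HasDoubleCover (G : Multigraph α β) (m : ℕ) : Prop :=
  ∃ S : Fin m → Finset β, G.IsDoubleCover S

lemma IsDoubleCover.hasDoubleCover {ι : Type*} [Fintype ι] {S : ι → Finset β}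
    (hS : G.IsDoubleCover S) : G.HasDoubleCover (Fintype.card ι) := by
  refine ⟨S ∘ (Fintype.equivFin ι).symm, fun k => hS.isCircuit _, fun e he => ?_⟩
  rw [← hS.card_eq_two e he, card_filter, card_filter,
    ← Equiv.sum_comp (Fintype.equivFin ι).symm]
  rfl

section Glue

variable {X : Finset α} {x y : α}

lemma boundary_inter_edges_contract {D : Finset β} {v : α} (hD : D ⊆ G.edges) (hx : x ∈ X)
    (hv : v ∈ G.verts \ X) :
    (G.contract X x).boundary (D ∩ (G.contract X x).edges) v = G.boundary D v := by
  rw [contract, boundary_map_inter_edges hD, filter_contract_eq_other hx hv, sum_singleton]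

lemma isEven_of_contract {D : Finset β} (hx : x ∈ X) (hy : y ∈ G.verts \ X)
    (hD : D ⊆ G.edges) (h₁ : (G.contract X x).IsEven (D ∩ (G.contract X x).edges))
    (h₂ : (G.contract (G.verts \ X) y).IsEven (D ∩ (G.contract (G.verts \ X) y).edges)) :
    G.IsEven D := fun v => by
  by_cases hv : v ∈ G.verts
  · by_cases hvX : v ∈ X
    · rw [← boundary_inter_edges_contract hD hy (by simp [hv, hvX]), h₂]
    · rw [← boundary_inter_edges_contract hD hx (mem_sdiff.2 ⟨hv, hvX⟩), h₁]
  · exact boundary_eq_zero_of_not_inc fun e he hev => hv (hev.mem_verts (hD he))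

lemma IsCircuit.of_contract {C : Finset β} (hC : (G.contract X x).IsCircuit C)
    (hx : x ∈ X) (hy : y ∈ G.verts \ X) (hcut : Disjoint C (G.cut X)) :
    G.IsCircuit C where
  subset_edges := hC.subset_edges.trans edges_contract_subset
  nonempty := hC.nonempty
  isEven := by
    refine isEven_of_contract hx hy (hC.subset_edges.trans edges_contract_subset) ?_ ?_
    · rw [inter_eq_left.2 hC.subset_edges]
      exact hC.isEven
    · rw [← inter_eq_left.2 hC.subset_edges, inter_assoc, edges_contract_inter hx hy,
        disjoint_iff_inter_eq_empty.1 hcut]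
      exact isEven_empty
  eq_of_subset D hD hDn hDe := by
    refine hC.eq_of_subset D hD hDn ?_
    rw [← inter_eq_left.2 (hD.trans hC.subset_edges)]
    exact hDe.inter_edges_map ((hD.trans hC.subset_edges).trans edges_contract_subset)

lemma union_inter_of_trace_eq {C₁ C₂ E₁ E₂ : Finset β} (h₁ : C₁ ⊆ E₁) (h₂ : C₂ ⊆ E₂)
    (htr : C₁ ∩ (E₁ ∩ E₂) = C₂ ∩ (E₁ ∩ E₂)) : (C₁ ∪ C₂) ∩ E₁ = C₁ := by
  rw [union_inter_distrib_right, inter_eq_left.2 h₁, union_eq_left, ← inter_eq_left.2 h₂,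
    inter_assoc, inter_comm E₂, ← htr]
  exact inter_subset_left

lemma IsCircuit.union_of_contract {C₁ C₂ : Finset β} (h₁ : (G.contract X x).IsCircuit C₁)
    (h₂ : (G.contract (G.verts \ X) y).IsCircuit C₂) (hx : x ∈ X) (hy : y ∈ G.verts \ X)
    (htr : C₁ ∩ G.cut X = C₂ ∩ G.cut X) (hne : (C₁ ∩ G.cut X).Nonempty) :
    G.IsCircuit (C₁ ∪ C₂) := by
  have hinter := edges_contract_inter hx hy
  have hunion := edges_contract_union hx hy
  rw [← hinter] at htr
  have hU₁ := union_inter_of_trace_eq h₁.subset_edges h₂.subset_edges htr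
  have hU₂ := union_inter_of_trace_eq h₂.subset_edges h₁.subset_edges
    (by rw [inter_comm _ (G.contract X x).edges, htr])
  rw [union_comm] at hU₂
  have hsub : C₁ ∪ C₂ ⊆ G.edges :=
    hunion ▸ union_subset_union h₁.subset_edges h₂.subset_edges
  refine ⟨hsub, h₁.nonempty.mono subset_union_left, ?_, fun D hD hDn hDe => ?_⟩
  · refine isEven_of_contract hx hy hsub ?_ ?_
    · rw [hU₁]; exact h₁.isEven
    · rw [hU₂]; exact h₂.isEven
  have hDG := hD.trans hsub
  have hD₁ : (D ∩ (G.contract X x).edges).Nonempty → D ∩ (G.contract X x).edges = C₁ := fun h =>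
    h₁.eq_of_subset _ (by rw [← hU₁]; exact inter_subset_inter_right hD) h
      (hDe.inter_edges_map hDG)
  have hD₂ : (D ∩ (G.contract (G.verts \ X) y).edges).Nonempty →
      D ∩ (G.contract (G.verts \ X) y).edges = C₂ := fun h =>
    h₂.eq_of_subset _ (by rw [← hU₂]; exact inter_subset_inter_right hD) h
      (hDe.inter_edges_map hDG)
  obtain ⟨g, hg⟩ := hne
  have hgD : g ∈ D := by
    obtain ⟨e, he⟩ := hDn
    rcases mem_union.1 (hunion ▸ hDG he) with h | h
    · have := hD₁ ⟨e, mem_inter.2 ⟨he, h⟩⟩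
      grind
    · have := hD₂ ⟨e, mem_inter.2 ⟨he, h⟩⟩
      grind
  rw [← hinter] at hg
  have h₁' := hD₁ ⟨g, by grind⟩
  have h₂' := hD₂ ⟨g, by grind⟩
  exact hD.antisymm (union_subset (h₁' ▸ inter_subset_left) (h₂' ▸ inter_subset_left))

end Glue

section Trace

variable {ι κ : Type*} [Fintype ι] [Fintype κ] {S : ι → Finset β} {R : κ → Finset β} {δ : Finset β}

lemma card_eq_two_of_even {A : Finset β} (hev : Even #A) (h3 : #A ≤ 3) (hne : A.Nonempty) :
    #A = 2 := by
  have := hne.card_pos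
  grind

lemma card_filter_trace_nonempty (h3 : #δ ≤ 3) (hev : ∀ i, Even #(S i ∩ δ))
    (htwo : ∀ e ∈ δ, #{i | e ∈ S i} = 2) : #{i | (S i ∩ δ).Nonempty} = #δ := by
  have hdouble : ∑ i, #(S i ∩ δ) = #δ * 2 := by
    rw [← sum_const_nat htwo]
    simp_rw [inter_comm _ δ, ← filter_mem_eq_inter]
    exact sum_card_bipartiteAbove_eq_sum_card_bipartiteBelow fun i e => e ∈ S i
  have htrace : ∑ i, #(S i ∩ δ) = #{i | (S i ∩ δ).Nonempty} * 2 := by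
    rw [← sum_filter_of_ne (p := fun i => (S i ∩ δ).Nonempty)
      fun i _ h => card_ne_zero.1 h]
    exact sum_const_nat fun i hi => card_eq_two_of_even (hev i)
      ((card_le_card inter_subset_right).trans h3) (mem_filter.1 hi).2
  omega

lemma card_filter_trace_eq (h2 : 2 ≤ #δ) (h3 : #δ ≤ 3) (hev : ∀ i, Even #(S i ∩ δ))
    (htwo : ∀ e ∈ δ, #{i | e ∈ S i} = 2) {T : Finset β} (hTδ : T ⊆ δ) (hT : #T = 2) :
    #{i | S i ∩ δ = T} = 4 - #δ := by
  have hcard : ∀ i, (S i ∩ δ).Nonempty → #(S i ∩ δ) = 2 := fun i =>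
    card_eq_two_of_even (hev i) ((card_le_card inter_subset_right).trans h3)
  have hmeet : ∀ i, S i ∩ δ = T ↔ (S i ∩ δ).Nonempty ∧ Disjoint (S i) (δ \ T) := by
    refine fun i => ⟨fun h => ⟨?_, ?_⟩, fun ⟨hne, hdisj⟩ => ?_⟩
    · rw [h]
      exact card_pos.1 (by omega)
    · exact disjoint_left.2 fun e he heT => (mem_sdiff.1 heT).2
        (h ▸ mem_inter.2 ⟨he, (mem_sdiff.1 heT).1⟩)
    · refine eq_of_subset_of_card_le (fun e he => ?_) (by rw [hcard i hne, hT])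
      by_contra heT
      exact disjoint_left.1 hdisj (mem_inter.1 he).1 (mem_sdiff.2 ⟨(mem_inter.1 he).2, heT⟩)
  have hall := card_filter_trace_nonempty h3 hev htwo
  have hrest : #(δ \ T) = #δ - 2 := by rw [card_sdiff_of_subset hTδ, hT]
  obtain hδ | hδ : #δ = 2 ∨ #δ = 3 := by omega
  · rw [hδ, Nat.sub_self, card_eq_zero] at hrest
    simp only [hmeet, hrest, disjoint_empty_right, and_true]
    omega
  · rw [hδ] at hrest
    obtain ⟨c, hc⟩ := card_eq_one.1 hrest
    have hcδ : c ∈ δ := (mem_sdiff.1 (hc ▸ mem_singleton_self c)).1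
    have hsplit := card_filter_add_card_filter_not (s := {i | (S i ∩ δ).Nonempty})
      (fun i => c ∈ S i)
    have hmem : ∀ i, ((S i ∩ δ).Nonempty ∧ c ∈ S i) ↔ c ∈ S i := fun i =>
      and_iff_right_of_imp fun h => ⟨c, mem_inter.2 ⟨h, hcδ⟩⟩
    simp only [filter_filter, hmem, htwo c hcδ] at hsplit
    simp only [hmeet, hc, disjoint_singleton_right]
    omega

lemma exists_equiv_of_card_fiber_eq {A B T : Type*} [Finite A] [Finite B] (f : A → T)
    (g : B → T) (h : ∀ t, Nat.card {a // f a = t} = Nat.card {b // g b = t}) :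
    ∃ σ : A ≃ B, ∀ a, g (σ a) = f a := by
  let τ t : {a // f a = t} ≃ {b // g b = t} := (Finite.card_eq.1 (h t)).some
  exact ⟨(Equiv.sigmaFiberEquiv f).symm.trans
    ((Equiv.sigmaCongrRight τ).trans (Equiv.sigmaFiberEquiv g)), fun a => (τ (f a) ⟨a, rfl⟩).2⟩

lemma natCard_subtype_subtype (p q : ι → Prop) :
    Nat.card {i : {i // p i} // q i} = #{i | p i ∧ q i} := by
  rw [← Fintype.card_subtype, ← Nat.card_eq_fintype_card]
  exact Nat.card_congr (Equiv.subtypeSubtypeEquivSubtypeInter p q)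

lemma exists_equiv_of_trace (h2 : 2 ≤ #δ) (h3 : #δ ≤ 3) (hS : ∀ i, Even #(S i ∩ δ))
    (hS2 : ∀ e ∈ δ, #{i | e ∈ S i} = 2) (hR : ∀ k, Even #(R k ∩ δ))
    (hR2 : ∀ e ∈ δ, #{k | e ∈ R k} = 2) :
    ∃ σ : {i // (S i ∩ δ).Nonempty} ≃ {k // (R k ∩ δ).Nonempty},
      ∀ i, R (σ i) ∩ δ = S i ∩ δ := by
  refine exists_equiv_of_card_fiber_eq (fun i : {i // (S i ∩ δ).Nonempty} => S i ∩ δ)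
    (fun k : {k // (R k ∩ δ).Nonempty} => R k ∩ δ) fun T => ?_
  rw [natCard_subtype_subtype (fun i => (S i ∩ δ).Nonempty) fun i => S i ∩ δ = T,
    natCard_subtype_subtype (fun k => (R k ∩ δ).Nonempty) fun k => R k ∩ δ = T]
  by_cases hT : T ⊆ δ ∧ #T = 2
  · have hTn : T.Nonempty := card_pos.1 (by omega)
    have hmem : ∀ A : Finset β, A.Nonempty ∧ A = T ↔ A = T := fun A =>
      and_iff_right_of_imp fun h => h ▸ hTn
    simp only [hmem, card_filter_trace_eq h2 h3 hS hS2 hT.1 hT.2,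
      card_filter_trace_eq h2 h3 hR hR2 hT.1 hT.2]
  · have hfalse : ∀ A : Finset β, Even #(A ∩ δ) → ¬((A ∩ δ).Nonempty ∧ A ∩ δ = T) := by
      rintro A hA ⟨hne, rfl⟩
      exact hT ⟨inter_subset_right,
        card_eq_two_of_even hA ((card_le_card inter_subset_right).trans h3) hne⟩
    simp only [hfalse _ (hS _), hfalse _ (hR _), filter_false, card_empty]

end Trace

/-- Circuits of the two sides with the same nonempty trace on the cut are matched by `σ` and joined;
the others are kept. The two parts of a member are recorded separately in `P` and `Q`. -/
lemma exists_joint_family {ι κ : Type*} [Fintype ι] [Fintype κ] {S : ι → Finset β}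
    {R : κ → Finset β} {p : ι → Prop} {q : κ → Prop} (σ : {i // p i} ≃ {k // q k}) :
    ∃ P Q : ({i // p i} ⊕ {i // ¬p i}) ⊕ {k // ¬q k} → Finset β,
      (∀ e, #{t | e ∈ P t} = #{i | e ∈ S i} ∧ #{t | e ∈ Q t} = #{k | e ∈ R k}) ∧
      ∀ t, (∃ i : {i // p i}, P t = S i ∧ Q t = R (σ i)) ∨
        (∃ i, ¬p i ∧ P t = S i ∧ Q t = ∅) ∨ ∃ k, ¬q k ∧ P t = ∅ ∧ Q t = R k := by
  refine ⟨Sum.elim (Sum.elim (fun i => S i) fun i => S i) fun _ => ∅,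
    Sum.elim (Sum.elim (fun i => R (σ i)) fun _ => ∅) fun k => R k, fun e => ⟨?_, ?_⟩, ?_⟩
  · simp only [card_filter, Fintype.sum_sum_type, Sum.elim_inl, Sum.elim_inr, notMem_empty,
      if_false, sum_const_zero, add_zero]
    exact Fintype.sum_subtype_add_sum_subtype p fun i => if e ∈ S i then 1 else 0
  · simp only [card_filter, Fintype.sum_sum_type, Sum.elim_inl, Sum.elim_inr, notMem_empty,
      if_false, sum_const_zero, add_zero]
    rw [← Fintype.sum_subtype_add_sum_subtype q, ← Equiv.sum_comp σ]
    rfl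
  · rintro ((i | i) | k)
    · exact Or.inl ⟨i, rfl, rfl⟩
    · exact Or.inr (Or.inl ⟨i, i.2, rfl, rfl⟩)
    · exact Or.inr (Or.inr ⟨k, k.2, rfl, rfl⟩)

section Glue

variable {X : Finset α} {x y : α}

lemma isDoubleCover_glue {ι : Type*} [Fintype ι] {P Q : ι → Finset β} (hx : x ∈ X)
    (hy : y ∈ G.verts \ X) (hP : ∀ i, P i ⊆ (G.contract X x).edges)
    (hQ : ∀ i, Q i ⊆ (G.contract (G.verts \ X) y).edges)
    (hPQ : ∀ i, P i ∩ G.cut X = Q i ∩ G.cut X) (hcirc : ∀ i, G.IsCircuit (P i ∪ Q i))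
    (hP2 : ∀ e ∈ (G.contract X x).edges, #{i | e ∈ P i} = 2)
    (hQ2 : ∀ e ∈ (G.contract (G.verts \ X) y).edges, #{i | e ∈ Q i} = 2) :
    G.IsDoubleCover fun i => P i ∪ Q i := by
  refine ⟨hcirc, fun e he => ?_⟩
  have hcut := edges_contract_inter hx hy
  have hmem : ∀ i, e ∈ G.cut X → (e ∈ P i ↔ e ∈ Q i) := fun i heX => by
    have := Finset.ext_iff.1 (hPQ i) e
    simpa only [mem_inter, heX, and_true] using this
  rcases mem_union.1 (edges_contract_union hx hy ▸ he) with h | h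
  · rw [← hP2 e h]
    congr 1
    ext i
    have := hmem i
    have := @hQ i e
    grind
  · rw [← hQ2 e h]
    congr 1
    ext i
    have := hmem i
    have := @hP i e
    grind

lemma card_sum_compl {ι κ : Type*} [Fintype ι] [Fintype κ] (p : ι → Prop) (q : κ → Prop) :
    Fintype.card (({i // p i} ⊕ {i // ¬p i}) ⊕ {k // ¬q k}) + #{k | q k} =
      Fintype.card ι + Fintype.card κ := by
  have hι := Fintype.card_congr (Equiv.sumCompl p)
  have hκ := Fintype.card_congr (Equiv.sumCompl q)
  rw [Fintype.card_sum, Fintype.card_subtype] at hκ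
  rw [Fintype.card_sum, hι]
  omega

lemma IsDoubleCover.exists_glue {ι κ : Type*} [Fintype ι] [Fintype κ] {S : ι → Finset β}
    {R : κ → Finset β} (hS : (G.contract X x).IsDoubleCover S)
    (hR : (G.contract (G.verts \ X) y).IsDoubleCover R) (hX : X ⊆ G.verts) (hx : x ∈ X)
    (hy : y ∈ G.verts \ X) {p : ι → Prop} {q : κ → Prop} (hp : ∀ i, p i ↔ (S i ∩ G.cut X).Nonempty)
    (hq : ∀ k, q k ↔ (R k ∩ G.cut X).Nonempty) (σ : {i // p i} ≃ {k // q k})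
    (hσ : ∀ i, R (σ i) ∩ G.cut X = S i ∩ G.cut X) :
    ∃ m, G.HasDoubleCover m ∧ m + #{k | q k} = Fintype.card ι + Fintype.card κ := by
  obtain ⟨P, Q, hcount, hPQ⟩ := exists_joint_family (S := S) (R := R) σ
  have hp' : ∀ i, ¬p i → S i ∩ G.cut X = ∅ := fun i hi =>
    not_nonempty_iff_eq_empty.1 (mt (hp i).2 hi)
  have hq' : ∀ k, ¬q k → R k ∩ G.cut X = ∅ := fun k hk =>
    not_nonempty_iff_eq_empty.1 (mt (hq k).2 hk)
  refine ⟨_, (isDoubleCover_glue (P := P) (Q := Q) hx hy (fun t => ?_) (fun t => ?_) (fun t => ?_)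
    (fun t => ?_) (fun e he => (hcount e).1.trans (hS.card_eq_two e he))
    fun e he => (hcount e).2.trans (hR.card_eq_two e he)).hasDoubleCover, card_sum_compl p q⟩ <;>
  rcases hPQ t with ⟨i, hP, hQ⟩ | ⟨i, hi, hP, hQ⟩ | ⟨k, hk, hP, hQ⟩
  · rw [hP]; exact (hS.isCircuit i).subset_edges
  · rw [hP]; exact (hS.isCircuit i).subset_edges
  · rw [hP]; exact empty_subset _
  · rw [hQ]; exact (hR.isCircuit _).subset_edges
  · rw [hQ]; exact empty_subset _
  · rw [hQ]; exact (hR.isCircuit k).subset_edges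
  · rw [hP, hQ, hσ]
  · rw [hP, hQ, hp' i hi, empty_inter]
  · rw [hP, hQ, hq' k hk, empty_inter]
  · rw [hP, hQ]
    exact (hS.isCircuit i).union_of_contract (hR.isCircuit _) hx hy (hσ i).symm ((hp i).1 i.2)
  · rw [hP, hQ, union_empty]
    exact (hS.isCircuit i).of_contract hx hy (disjoint_iff_inter_eq_empty.2 (hp' i hi))
  · rw [hP, hQ, empty_union]
    refine (hR.isCircuit k).of_contract (y := x) hy ?_ ?_
    · rwa [Finset.sdiff_sdiff_eq_self hX]
    · rw [cut_sdiff_verts]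
      exact disjoint_iff_inter_eq_empty.2 (hq' k hk)

theorem HasDoubleCover.glue {m₁ m₂ : ℕ} (hm₁ : (G.contract X x).HasDoubleCover m₁)
    (hm₂ : (G.contract (G.verts \ X) y).HasDoubleCover m₂) (hX : X ⊆ G.verts) (hx : x ∈ X)
    (hy : y ∈ G.verts \ X) (h2 : 2 ≤ #(G.cut X)) (h3 : #(G.cut X) ≤ 3) :
    ∃ m, G.HasDoubleCover m ∧ m + #(G.cut X) = m₁ + m₂ := by
  obtain ⟨S, hS⟩ := hm₁
  obtain ⟨R, hR⟩ := hm₂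
  have hSeven : ∀ i, Even #(S i ∩ G.cut X) := fun i => by
    rw [← cut_contract_self hX hx]
    exact (hS.isCircuit i).isEven.even_card_inter_cut (hS.isCircuit i).subset_edges _
  have hReven : ∀ k, Even #(R k ∩ G.cut X) := fun k => by
    rw [← cut_sdiff_verts, ← cut_contract_self sdiff_subset hy]
    exact (hR.isCircuit k).isEven.even_card_inter_cut (hR.isCircuit k).subset_edges _
  have hcut := edges_contract_inter hx hy
  have hS2 : ∀ e ∈ G.cut X, #{i | e ∈ S i} = 2 := fun e he =>
    hS.card_eq_two e (mem_inter.1 (hcut ▸ he)).1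
  have hR2 : ∀ e ∈ G.cut X, #{k | e ∈ R k} = 2 := fun e he =>
    hR.card_eq_two e (mem_inter.1 (hcut ▸ he)).2
  obtain ⟨σ, hσ⟩ := exists_equiv_of_trace h2 h3 hSeven hS2 hReven hR2
  obtain ⟨m, hm, hcard⟩ := hS.exists_glue hR hX hx hy (fun _ => Iff.rfl) (fun _ => Iff.rfl) σ hσ
  refine ⟨m, hm, ?_⟩
  rw [Fintype.card_fin, Fintype.card_fin] at hcard
  rw [← hcard, ← card_filter_trace_nonempty h3 hReven hR2]
  congr!

end Glue

/-! ### Suppressing a vertex of degree two -/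

section Suppress

variable {v w : α} {e f : β}

lemma edges_contract_pair (hv : G.cut {v} = {e, f}) (hvw : G.IsLink e v w)
    (hfw : ¬G.Inc f w) : (G.contract {v, w} w).edges = G.edges.erase e := by
  ext g
  rw [mem_edges_contract (by simp), mem_erase, and_comm]
  refine and_congr_left fun hg => not_congr ?_
  have hgv : G.Inc g v ↔ g = e ∨ g = f := by
    simpa [hv, hg] using (mem_cut_singleton (G := G) (v := v) (e := g)).symm
  have := G.src_ne_tgt g hg
  unfold Inc IsLink at *
  simp only [mem_insert, mem_singleton]
  grind

lemma boundary_eq_zero_iff_of_cut_eq_pair (hef : e ≠ f) (hv : G.cut {v} = {e, f}) {D : Finset β}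
    (hD : D ⊆ G.edges) : G.boundary D v = 0 ↔ (e ∈ D ↔ f ∈ D) := by
  rw [boundary_eq_card_inter_cut hD, hv, ZMod.natCast_eq_zero_iff_even]
  by_cases he : e ∈ D <;> by_cases hf : f ∈ D <;>
    simp [he, hf, hef]

lemma isEven_iff_of_contract_pair (hef : e ≠ f) (hv : G.cut {v} = {e, f}) (hvw : G.IsLink e v w)
    (hfw : ¬G.Inc f w) {D : Finset β} (hD : D ⊆ G.edges) :
    G.IsEven D ↔ (e ∈ D ↔ f ∈ D) ∧ (G.contract {v, w} w).IsEven (D.erase e) := by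
  have hD' : D ∩ (G.contract {v, w} w).edges = D.erase e := by
    rw [edges_contract_pair hv hvw hfw, inter_erase, inter_eq_left.2 hD]
  have heE : e ∈ G.edges := cut_subset_edges {v} (by simp [hv])
  have hX : {v, w} ⊆ G.verts :=
    insert_subset (hvw.inc_left.mem_verts heE)
      (singleton_subset_iff.2 (hvw.inc_right.mem_verts heE))
  rw [← hD', ← boundary_eq_zero_iff_of_cut_eq_pair hef hv hD]
  refine ⟨fun h => ⟨h v, h.inter_edges_map hD⟩, fun ⟨hDv, h⟩ u => ?_⟩
  by_cases hu : u ∈ G.verts \ {v, w}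
  · rw [← boundary_inter_edges_contract (x := w) hD (by simp) hu, h]
  by_cases huV : u ∈ G.verts
  · simp only [mem_sdiff, huV, mem_insert, mem_singleton, true_and, not_not] at hu
    rcases hu with hu | hu <;> subst hu
    · exact hDv
    · have hsum := h u
      rwa [contract, boundary_map_inter_edges hD, filter_contract_eq_self hX (by simp),
        sum_pair (hvw.ne heE), hDv, zero_add] at hsum
  · exact boundary_eq_zero_of_not_inc fun g hg hgu => huV (hgu.mem_verts (hD hg))

lemma IsCircuit.of_contract_pair (hef : e ≠ f) (hv : G.cut {v} = {e, f}) (hvw : G.IsLink e v w)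
    (hfw : ¬G.Inc f w) {C : Finset β} (hC : (G.contract {v, w} w).IsCircuit C) :
    G.IsCircuit (if f ∈ C then insert e C else C) := by
  have hE := edges_contract_pair hv hvw hfw
  have heE : e ∈ G.edges := cut_subset_edges {v} (by simp [hv])
  have heC : e ∉ C := fun h => by simpa [hE] using hC.subset_edges h
  set C' := if f ∈ C then insert e C else C
  have herase : C'.erase e = C := by grind
  have hpar : e ∈ C' ↔ f ∈ C' := by grind
  have hsub : C' ⊆ G.edges := by
    have := hC.subset_edges.trans edges_contract_subset
    grind
  refine ⟨hsub, ?_, ?_, fun D hD hDn hDe => ?_⟩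
  · exact hC.nonempty.mono (herase ▸ erase_subset _ _)
  · rw [isEven_iff_of_contract_pair hef hv hvw hfw hsub, herase]
    exact ⟨hpar, hC.isEven⟩
  · rw [isEven_iff_of_contract_pair hef hv hvw hfw (hD.trans hsub)] at hDe
    have hDC : D.erase e = C := by
      refine hC.eq_of_subset _ (herase ▸ erase_subset_erase e hD) ?_ hDe.2
      obtain ⟨g, hg⟩ := hDn
      by_cases hge : g = e
      · exact ⟨f, mem_erase.2 ⟨hef.symm, hDe.1.1 (hge ▸ hg)⟩⟩
      · exact ⟨g, mem_erase.2 ⟨hge, hg⟩⟩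
    refine hD.antisymm fun g hg => ?_
    grind

theorem HasDoubleCover.of_contract_pair (hef : e ≠ f) (hv : G.cut {v} = {e, f})
    (hvw : G.IsLink e v w) (hfw : ¬G.Inc f w) {m : ℕ}
    (hm : (G.contract {v, w} w).HasDoubleCover m) : G.HasDoubleCover m := by
  obtain ⟨S, hS⟩ := hm
  have hE := edges_contract_pair hv hvw hfw
  have hfE : f ∈ G.edges := cut_subset_edges {v} (by simp [hv])
  refine ⟨_, fun i => (hS.isCircuit i).of_contract_pair hef hv hvw hfw, fun g hg => ?_⟩
  have heS : ∀ i, e ∉ S i := fun i h => by simpa [hE] using (hS.isCircuit i).subset_edges h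
  by_cases hge : g = e
  · subst hge
    rw [← hS.card_eq_two f (by rw [hE]; exact mem_erase.2 ⟨hef.symm, hfE⟩)]
    congr 1
    grind
  · rw [← hS.card_eq_two g (by rw [hE]; exact mem_erase.2 ⟨hge, hg⟩)]
    congr 1
    grind

end Suppress

/-! ### Sets meeting every face evenly are cuts -/

/-- A double cover with as many members as a plane graph has faces (Euler's formula): a
combinatorial substitute for an embedding in the sphere. -/
structure IsEulerCover {ι : Type*} [Fintype ι] (G : Multigraph α β) (S : ι → Finset β) : Prop
    extends G.IsDoubleCover S where
  card_add : Fintype.card ι + #G.verts = #G.edges + 2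

lemma TwoEdgeConnected.eq_of_forall_edge {K : Type*} (hG : G.TwoEdgeConnected)
    {f : G.verts → K}
    (hf : ∀ e : G.edges, f ⟨G.src e, G.src_mem e e.2⟩ = f ⟨G.tgt e, G.tgt_mem e e.2⟩)
    (v w : G.verts) : f v = f w := by
  by_contra hne
  set X : Finset α := {u ∈ G.verts | ∃ h : u ∈ G.verts, f ⟨u, h⟩ = f v}
  have hv : (G.verts ∩ X).Nonempty :=
    ⟨v, mem_inter.2 ⟨v.2, mem_filter.2 ⟨v.2, v.2, rfl⟩⟩⟩
  have hw : (G.verts \ X).Nonempty :=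
    ⟨w, mem_sdiff.2 ⟨w.2, fun h => hne (mem_filter.1 h).2.2.symm⟩⟩
  have hcut := hG X hv hw
  obtain ⟨e, he⟩ := card_pos.1 (by omega : 0 < #(G.cut X))
  obtain ⟨heG, heX⟩ := mem_cut.1 he
  refine heX ?_
  simp only [X, mem_filter, G.src_mem e heG, G.tgt_mem e heG, true_and, exists_true_left]
  rw [hf ⟨e, heG⟩]

section Cover

variable {ι : Type*} [Fintype ι] {S : ι → Finset β}

lemma IsDoubleCover.exists_mem (hS : G.IsDoubleCover S) {e : β} (he : e ∈ G.edges) :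
    ∃ i, e ∈ S i := by
  obtain ⟨i, hi⟩ := card_pos.1 (by rw [hS.card_eq_two e he]; norm_num : 0 < #{i | e ∈ S i})
  exact ⟨i, (mem_filter.1 hi).2⟩

lemma IsDoubleCover.filter_mem_eq_pair (hS : G.IsDoubleCover S) {e : β} {i j : ι}
    (hij : i ≠ j) (hi : e ∈ S i) (hj : e ∈ S j) : ({k | e ∈ S k} : Finset ι) = {i, j} := by
  refine (eq_of_subset_of_card_le (by grind) ?_).symm
  rw [hS.card_eq_two e ((hS.isCircuit i).subset_edges hi), card_pair hij]

lemma IsDoubleCover.mem_iff (hS : G.IsDoubleCover S) {e : β} {i j : ι} (hij : i ≠ j)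
    (hi : e ∈ S i) (hj : e ∈ S j) {k : ι} : e ∈ S k ↔ k = i ∨ k = j := by
  simpa using Finset.ext_iff.1 (hS.filter_mem_eq_pair hij hi hj) k

lemma IsDoubleCover.even_card_inter_of_two_common (hS : G.IsDoubleCover S) {g g' : β} {i j : ι}
    (hij : i ≠ j) (hgg : g ≠ g') (hgi : g ∈ S i) (hgj : g ∈ S j) (hgi' : g' ∈ S i)
    (hgj' : g' ∈ S j) (k : ι) : Even #({g, g'} ∩ S k) := by
  have hiff : g ∈ S k ↔ g' ∈ S k := by
    rw [hS.mem_iff hij hgi hgj, hS.mem_iff hij hgi' hgj']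
  by_cases h : g ∈ S k
  · rw [inter_eq_left.2 (by simp [insert_subset_iff, h, ← hiff]), card_pair hgg]
    exact even_two
  · rw [disjoint_iff_inter_eq_empty.1 (by simp [h, ← hiff])]
    exact Even.zero

lemma IsDoubleCover.eq_of_forall_mem {K : Type*} (hS : G.IsDoubleCover S)
    (hG : G.TwoEdgeConnected) (hsub : G.IsSubcubic) {g : ι → K}
    (hg : ∀ i j e, e ∈ S i → e ∈ S j → g i = g j) (i j : ι) : g i = g j := by
  let f : G.verts → Set K := fun v => {k | ∃ i, g i = k ∧ ∃ e ∈ S i, G.Inc e v}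
  have hf : ∀ i e, e ∈ S i → ∀ v : G.verts, G.Inc e v → f v = {g i} := fun i e he v hev => by
    refine Set.eq_singleton_iff_unique_mem.2 ⟨⟨i, rfl, e, he, hev⟩, ?_⟩
    rintro _ ⟨j, rfl, e', he', hev'⟩
    obtain ⟨c, hcj, hci, -⟩ :=
      (hS.isCircuit j).exists_common_inc (hS.isCircuit i) (hsub v v.2) he' hev' he hev
    exact hg j i c hcj hci
  have hconst := hG.eq_of_forall_edge (f := f) fun e => by
    obtain ⟨k, hk⟩ := hS.exists_mem e.2
    rw [hf k e hk _ (Or.inl rfl), hf k e hk _ (Or.inr rfl)]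
  obtain ⟨e, he⟩ := (hS.isCircuit i).nonempty
  obtain ⟨e', he'⟩ := (hS.isCircuit j).nonempty
  refine Set.singleton_injective ?_
  rw [← hf i e he ⟨_, G.src_mem e ((hS.isCircuit i).subset_edges he)⟩ (Or.inl rfl),
    ← hf j e' he' ⟨_, G.src_mem e' ((hS.isCircuit j).subset_edges he')⟩ (Or.inl rfl)]
  exact hconst _ _

end Cover

section Duality

/-- The mod 2 coboundary of a set of vertices, both given by their indicator functions. -/
def coboundary (G : Multigraph α β) : (G.verts → ZMod 2) →ₗ[ZMod 2] G.edges → ZMod 2 where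
  toFun f e := f ⟨G.src e, G.src_mem e e.2⟩ + f ⟨G.tgt e, G.tgt_mem e e.2⟩
  map_add' _ _ := funext fun _ => add_add_add_comm _ _ _ _
  map_smul' c _ := funext fun _ => (mul_add c _ _).symm

/-- The indicator function of an edge set, a vector of the mod 2 edge space. -/
noncomputable def edgeIndicator (G : Multigraph α β) (T : Finset β) : G.edges → ZMod 2 :=
  fun e => if (e : β) ∈ T then 1 else 0

/-- The matrix whose rows are the members of a family of edge sets. -/
noncomputable def memberMatrix {ι : Type*} (G : Multigraph α β) (S : ι → Finset β) :
    Matrix ι G.edges (ZMod 2) := Matrix.of fun i => G.edgeIndicator (S i)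

lemma coboundary_eq_edgeIndicator (f : G.verts → ZMod 2) :
    G.coboundary f =
      G.edgeIndicator (G.cut {v ∈ G.verts | ∃ h : v ∈ G.verts, f ⟨v, h⟩ = 1}) := by
  ext ⟨e, he⟩
  simp only [coboundary, edgeIndicator, LinearMap.coe_mk, AddHom.coe_mk, mem_cut, mem_filter, he,
    G.src_mem e he, G.tgt_mem e he, true_and, exists_true_left]
  generalize f ⟨G.src e, _⟩ = a
  generalize f ⟨G.tgt e, _⟩ = b
  revert a b
  decide

lemma eq_of_edgeIndicator_eq {A B : Finset β} (hA : A ⊆ G.edges) (hB : B ⊆ G.edges)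
    (h : G.edgeIndicator A = G.edgeIndicator B) : A = B := by
  ext e
  by_cases he : e ∈ G.edges
  · have := congrFun h ⟨e, he⟩
    by_cases hA : e ∈ A <;> by_cases hB : e ∈ B <;> simp_all [edgeIndicator]
  · exact iff_of_false (fun h => he (hA h)) fun h => he (hB h)

lemma finrank_ker_coboundary_le_one (hG : G.TwoEdgeConnected) :
    Module.finrank (ZMod 2) (LinearMap.ker G.coboundary) ≤ 1 := by
  refine finrank_le_one (⟨fun _ => 1, ?_⟩ : LinearMap.ker G.coboundary) fun ⟨f, hf⟩ => ?_
  · exact LinearMap.mem_ker.2 (funext fun _ => CharTwo.add_self_eq_zero _)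
  have hconst := hG.eq_of_forall_edge fun e =>
    CharTwo.add_eq_zero.1 (congrFun (LinearMap.mem_ker.1 hf) e)
  obtain hV | ⟨⟨v⟩⟩ := isEmpty_or_nonempty G.verts
  · exact ⟨0, Subtype.ext (funext fun w => hV.elim w)⟩
  · exact ⟨f v, Subtype.ext (funext fun w => (mul_one _).trans (hconst v w))⟩

variable {ι : Type*} {S : ι → Finset β}

lemma memberMatrix_mulVec_edgeIndicator {T : Finset β} (hT : T ⊆ G.edges) (i : ι) :
    (G.memberMatrix S).mulVec (G.edgeIndicator T) i = #(T ∩ S i) := by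
  have hfilter : ({e ∈ G.edges | e ∈ T ∩ S i} : Finset β) = T ∩ S i := by grind
  rw [← hfilter, card_filter, Nat.cast_sum, ← sum_coe_sort]
  refine sum_congr rfl fun e _ => ?_
  by_cases hT : (e : β) ∈ T <;> by_cases hS : (e : β) ∈ S i <;>
    simp [memberMatrix, edgeIndicator, hT, hS]

lemma mem_ker_memberMatrix_iff {T : Finset β} (hT : T ⊆ G.edges) :
    G.edgeIndicator T ∈ LinearMap.ker (G.memberMatrix S).mulVecLin ↔ ∀ i, Even #(T ∩ S i) := by
  rw [LinearMap.mem_ker, funext_iff]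
  refine forall_congr' fun i => ?_
  rw [Matrix.mulVecLin_apply, memberMatrix_mulVec_edgeIndicator hT, Pi.zero_apply,
    ZMod.natCast_eq_zero_iff_even]

variable [Fintype ι]

lemma IsDoubleCover.finrank_ker_transpose_le_one (hS : G.IsDoubleCover S)
    (hG : G.TwoEdgeConnected) (hsub : G.IsSubcubic) :
    Module.finrank (ZMod 2) (LinearMap.ker (G.memberMatrix S).transpose.mulVecLin) ≤ 1 := by
  have happly : ∀ (g : ι → ZMod 2) (e : G.edges),
      (G.memberMatrix S).transpose.mulVecLin g e = ∑ i with (e : β) ∈ S i, g i := fun g e => by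
    rw [sum_filter]
    refine sum_congr rfl fun i _ => ?_
    simp [memberMatrix, edgeIndicator]
  refine finrank_le_one
    (⟨fun _ => 1, ?_⟩ : LinearMap.ker (G.memberMatrix S).transpose.mulVecLin) fun ⟨g, hg⟩ => ?_
  · refine LinearMap.mem_ker.2 (funext fun e => ?_)
    rw [happly, sum_const, hS.card_eq_two e e.2]
    rfl
  have hconst := hS.eq_of_forall_mem hG hsub (g := g) fun i j e hi hj => by
    by_cases hij : i = j
    · rw [hij]
    have hsum := congrFun (LinearMap.mem_ker.1 hg) ⟨e, (hS.isCircuit i).subset_edges hi⟩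
    rw [happly, hS.filter_mem_eq_pair hij hi hj, sum_pair hij] at hsum
    exact CharTwo.add_eq_zero.1 hsum
  obtain hι | ⟨⟨i⟩⟩ := isEmpty_or_nonempty ι
  · exact ⟨0, Subtype.ext (funext fun j => hι.elim j)⟩
  · exact ⟨g i, Subtype.ext (funext fun j => (mul_one _).trans (hconst i j))⟩

/-- By the count of members, they span a space of dimension `|E| - |V| + 1`, that of the cycle
space; its orthogonal complement is therefore the space of cuts. -/
lemma IsEulerCover.range_coboundary_eq_ker (hS : G.IsEulerCover S) (hG : G.TwoEdgeConnected)
    (hsub : G.IsSubcubic) :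
    LinearMap.range G.coboundary = LinearMap.ker (G.memberMatrix S).mulVecLin := by
  have hle : LinearMap.range G.coboundary ≤ LinearMap.ker (G.memberMatrix S).mulVecLin := by
    rintro _ ⟨f, rfl⟩
    rw [coboundary_eq_edgeIndicator, mem_ker_memberMatrix_iff (cut_subset_edges _)]
    intro i
    rw [inter_comm]
    exact (hS.isCircuit i).isEven.even_card_inter_cut (hS.isCircuit i).subset_edges _
  refine Submodule.eq_of_le_of_finrank_le hle ?_
  have hV := finrank_ker_coboundary_le_one hG
  have hι := hS.finrank_ker_transpose_le_one hG hsub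
  have hV' := G.coboundary.finrank_range_add_finrank_ker
  have hE' := (G.memberMatrix S).mulVecLin.finrank_range_add_finrank_ker
  have hι' := (G.memberMatrix S).transpose.mulVecLin.finrank_range_add_finrank_ker
  have hrank : (G.memberMatrix S).transpose.rank = (G.memberMatrix S).rank :=
    Matrix.rank_transpose _
  unfold Matrix.rank at hrank
  rw [Module.finrank_fintype_fun_eq_card, Fintype.card_coe] at hV' hE'
  rw [Module.finrank_fintype_fun_eq_card] at hι'
  have := hS.card_add
  omega

theorem IsEulerCover.exists_cut_eq (hS : G.IsEulerCover S) (hG : G.TwoEdgeConnected)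
    (hsub : G.IsSubcubic) {T : Finset β} (hT : T ⊆ G.edges) (hev : ∀ i, Even #(T ∩ S i)) :
    ∃ X ⊆ G.verts, G.cut X = T := by
  have hmem := (mem_ker_memberMatrix_iff hT).2 hev
  rw [← hS.range_coboundary_eq_ker hG hsub] at hmem
  obtain ⟨f, hf⟩ := hmem
  rw [coboundary_eq_edgeIndicator] at hf
  exact ⟨_, filter_subset _ _, eq_of_edgeIndicator_eq (cut_subset_edges _) hT hf⟩

end Duality

/-! ### Deleting and restoring an edge -/

/-- `G` without the edge `e`. -/
noncomputable def deleteEdge (G : Multigraph α β) (e : β) : Multigraph α β where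
  verts := G.verts
  edges := G.edges.erase e
  src := G.src
  tgt := G.tgt
  src_mem _ hf := G.src_mem _ (mem_of_mem_erase hf)
  tgt_mem _ hf := G.tgt_mem _ (mem_of_mem_erase hf)
  src_ne_tgt _ hf := G.src_ne_tgt _ (mem_of_mem_erase hf)

/-- All degrees are equal to 3. -/
def IsCubic (G : Multigraph α β) : Prop := ∀ v ∈ G.verts, #(G.cut {v}) = 3

lemma IsCubic.isSubcubic (h : G.IsCubic) : G.IsSubcubic := fun v hv => (h v hv).le

/-- Every cut separating two sets of at least two vertices has at least four edges. -/
def EssentiallyFourEdgeConnected (G : Multigraph α β) : Prop :=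
  ∀ X ⊆ G.verts, 2 ≤ #X → 2 ≤ #(G.verts \ X) → 4 ≤ #(G.cut X)

lemma EssentiallyFourEdgeConnected.exists_cut_eq_singleton (hG : G.EssentiallyFourEdgeConnected)
    {X : Finset α} (hX : X ⊆ G.verts) (hne : (G.cut X).Nonempty) (h3 : #(G.cut X) ≤ 3) :
    ∃ v ∈ G.verts, G.cut X = G.cut {v} := by
  have hX₀ : X.Nonempty := nonempty_iff_ne_empty.2 fun h =>
    hne.ne_empty (by rw [h, cut_empty])
  have hY₀ : (G.verts \ X).Nonempty := nonempty_iff_ne_empty.2 fun h =>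
    hne.ne_empty (by rw [← cut_sdiff_verts, h, cut_empty])
  have hcard : #X = 1 ∨ #(G.verts \ X) = 1 := by
    have := hG X hX
    have := hX₀.card_pos
    have := hY₀.card_pos
    omega
  rcases hcard with h | h <;> obtain ⟨v, hv⟩ := card_eq_one.1 h
  · exact ⟨v, hX (hv ▸ mem_singleton_self v), by rw [hv]⟩
  · exact ⟨v, (mem_sdiff.1 (hv ▸ mem_singleton_self v)).1, by rw [← hv, cut_sdiff_verts]⟩

section DeleteEdge

variable {e : β}

lemma cut_deleteEdge (X : Finset α) : (G.deleteEdge e).cut X = (G.cut X).erase e :=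
  filter_erase _ _ _

lemma IsCircuit.of_deleteEdge {C : Finset β} (hC : (G.deleteEdge e).IsCircuit C) :
    G.IsCircuit C :=
  ⟨hC.subset_edges.trans (erase_subset _ _), hC.nonempty, hC.isEven, hC.eq_of_subset⟩

lemma Linked.of_deleteEdge {A B : Finset α} (h : (G.deleteEdge e).Linked A B) : G.Linked A B := by
  obtain ⟨f, hf, hlink⟩ := h
  exact ⟨f, mem_of_mem_erase hf, hlink⟩

lemma HasK33Minor.of_deleteEdge (h : (G.deleteEdge e).HasK33Minor) : G.HasK33Minor := by
  obtain ⟨B, hB, hdisj, hlink⟩ := h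
  exact ⟨B, fun w => ⟨(hB w).1, (hB w).2.1, fun Z hZ hZ' => ((hB w).2.2 Z hZ hZ').of_deleteEdge⟩,
    hdisj, fun i j => (hlink i j).of_deleteEdge⟩

lemma TwoEdgeConnected.deleteEdge (hG : G.TwoEdgeConnected) (h3 : G.IsCubic)
    (h4 : G.EssentiallyFourEdgeConnected) : (G.deleteEdge e).TwoEdgeConnected := by
  intro X hX hX'
  have hX₂ := hG X hX hX'
  have herase := pred_card_le_card_erase (s := G.cut X) (a := e)
  have hcut : G.cut (G.verts \ (G.verts \ X)) = G.cut X := by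
    rw [cut_sdiff_verts, cut_sdiff_verts]
  rw [cut_deleteEdge]
  by_cases hle : #(G.cut X) ≤ 3
  · rw [← hcut] at hle hX₂
    obtain ⟨v, hv, hXv⟩ := h4.exists_cut_eq_singleton sdiff_subset (card_pos.1 (by omega)) hle
    have hv₃ := h3 v hv
    rw [← hXv, hcut] at hv₃
    omega
  · omega

theorem Admissible.deleteEdge (hG : G.Admissible) (h3 : G.IsCubic)
    (h4 : G.EssentiallyFourEdgeConnected) (hV : 3 ≤ #G.verts) : (G.deleteEdge e).Admissible where
  twoEdgeConnected := hG.twoEdgeConnected.deleteEdge h3 h4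
  isSubcubic v hv := by
    rw [cut_deleteEdge]
    exact card_erase_le.trans (hG.isSubcubic v hv)
  exists_branch := by
    obtain ⟨w, hw, hwe⟩ := exists_mem_notMem_of_card_lt_card
      (card_le_two.trans_lt hV : #{G.src e, G.tgt e} < #G.verts)
    refine ⟨w, hw, ?_⟩
    rw [cut_deleteEdge, erase_eq_of_notMem, h3 w hw]
    intro he
    have hew := (mem_cut_singleton.1 he).2
    unfold Inc at hew
    grind
  not_hasK33Minor h := hG.not_hasK33Minor h.of_deleteEdge

end DeleteEdge

lemma not_isEven_singleton {e : β} (he : e ∈ G.edges) : ¬G.IsEven {e} := fun h => by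
  have := h (G.src e)
  simp [boundary_singleton, (G.src_ne_tgt e he).symm] at this

lemma IsLink.boundary_singleton {e : β} {a b : α} (h : G.IsLink e a b) (v : α) :
    G.boundary {e} v = (if a = v then 1 else 0) + (if b = v then 1 else 0) := by
  rw [Multigraph.boundary_singleton]
  rcases h with ⟨rfl, rfl⟩ | ⟨rfl, rfl⟩
  · rfl
  · rw [add_comm]

lemma IsCircuit.insert_of_isEven {C A : Finset β} (hC : G.IsCircuit C) {e : β} (heC : e ∉ C)
    (he : e ∈ G.edges) (hA : A ⊆ C) (hev : G.IsEven (insert e A)) : G.IsCircuit (insert e A) := by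
  have hAC : A ≠ C := by
    rintro rfl
    refine not_isEven_singleton he ?_
    have := hev.sdiff hC.isEven (subset_insert e A)
    rwa [insert_sdiff_cancel heC] at this
  have hodd : ∀ D ⊆ A, D.Nonempty → ¬G.IsEven D := fun D hD hDn hDe =>
    hAC (hA.antisymm (hC.eq_of_subset D (hD.trans hA) hDn hDe ▸ hD))
  refine ⟨insert_subset he (hA.trans hC.subset_edges), insert_nonempty _ _, hev,
    fun D hD hDn hDe => ?_⟩
  have heD : e ∈ D := by
    by_contra heD
    exact hodd D ((subset_insert_iff_of_notMem heD).1 hD) hDn hDe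
  by_contra hne
  refine hodd (insert e A \ D) (by grind) ?_ (hev.sdiff hDe hD)
  exact sdiff_nonempty.2 fun h => hne (hD.antisymm h)

lemma IsCircuit.exists_subset_boundary_eq {C : Finset β} (hC : G.IsCircuit C) {f g : β} {x y : α}
    (hf : f ∈ C) (hfx : G.Inc f x) (hg : g ∈ C) (hgy : G.Inc g y) :
    ∃ A ⊆ C, ∀ v, G.boundary A v = (if x = v then 1 else 0) + (if y = v then 1 else 0) := by
  by_contra hy
  let X : Finset α := {w ∈ G.verts | ∃ A ⊆ C, ∀ v,
    G.boundary A v = (if x = v then 1 else 0) + (if w = v then 1 else 0)}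
  have hx : x ∈ X := mem_filter.2 ⟨hfx.mem_verts (hC.subset_edges hf), ∅, empty_subset _,
    fun v => by rw [isEven_empty, CharTwo.add_self_eq_zero]⟩
  obtain ⟨k, hkC, hk⟩ := hC.exists_mem_cut hx (fun h => hy (mem_filter.1 h).2) hf hfx hg hgy
  obtain ⟨a, ha, b, hb, hab⟩ := exists_isLink_of_mem_cut hk
  obtain ⟨A, hA, hAv⟩ := (mem_filter.1 ha).2
  refine hb (mem_filter.2 ⟨hab.inc_right.mem_verts (hC.subset_edges hkC), A ∆ {k}, ?_, fun v => ?_⟩)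
  · exact symmDiff_le_sup.trans (union_subset hA (singleton_subset_iff.2 hkC))
  · rw [boundary_symmDiff, hAv, hab.boundary_singleton, add_assoc,
      CharTwo.add_cancel_left]

lemma IsCircuit.exists_split {C : Finset β} (hC : G.IsCircuit C) {e f g : β} {x y : α}
    (heC : e ∉ C) (he : e ∈ G.edges) (hxy : G.IsLink e x y) (hf : f ∈ C) (hfx : G.Inc f x)
    (hg : g ∈ C) (hgy : G.Inc g y) :
    ∃ A ⊆ C, G.IsCircuit (insert e A) ∧ G.IsCircuit (insert e (C \ A)) := by
  obtain ⟨A, hA, hbd⟩ := hC.exists_subset_boundary_eq hf hfx hg hgy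
  have hins : ∀ D ⊆ C, ∀ v, G.boundary (insert e D) v = G.boundary {e} v + G.boundary D v :=
    fun D hD v => boundary_union (disjoint_singleton_left.2 fun h => heC (hD h)) v
  refine ⟨A, hA, hC.insert_of_isEven heC he hA fun v => ?_,
    hC.insert_of_isEven heC he sdiff_subset fun v => ?_⟩
  · rw [hins A hA, hbd, hxy.boundary_singleton, CharTwo.add_self_eq_zero]
  · rw [hins _ sdiff_subset, boundary_sdiff hA, hC.isEven, zero_add, hbd, hxy.boundary_singleton,
      CharTwo.add_self_eq_zero]

lemma card_filter_option_add {ι : Type*} [Fintype ι] {p : Option ι → Prop} {q : ι → Prop}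
    [DecidablePred p] [DecidablePred q] {i : ι} (hpq : ∀ j ≠ i, (p (some j) ↔ q j)) :
    #{o | p o} + (if q i then 1 else 0) =
      (if p none then 1 else 0) + (if p (some i) then 1 else 0) + #{j | q j} := by
  rw [card_filter, card_filter, Fintype.sum_option, ← add_sum_erase _ _ (mem_univ i),
    ← add_sum_erase _ (fun j => if q j then 1 else 0) (mem_univ i),
    sum_congr rfl fun j hj => if_congr (hpq j (ne_of_mem_erase hj)) rfl rfl]
  omega

/-- The member through both ends of `e` is split into two circuits through `e`. -/
theorem IsDoubleCover.hasDoubleCover_of_deleteEdge {ι : Type*} [Fintype ι] {S : ι → Finset β}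
    {e f g : β} {x y : α} {i : ι} (hS : (G.deleteEdge e).IsDoubleCover S) (he : e ∈ G.edges)
    (hxy : G.IsLink e x y) (hf : f ∈ S i) (hfx : G.Inc f x) (hg : g ∈ S i) (hgy : G.Inc g y) :
    G.HasDoubleCover (Fintype.card ι + 1) := by
  have heS : ∀ j, e ∉ S j := fun j h => notMem_erase e _ ((hS.isCircuit j).subset_edges h)
  obtain ⟨A, hA, hC₁, hC₂⟩ :=
    (hS.isCircuit i).of_deleteEdge.exists_split (heS i) he hxy hf hfx hg hgy
  rw [← Fintype.card_option]
  refine IsDoubleCover.hasDoubleCover (S := fun o : Option ι =>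
    o.elim (insert e A) (Function.update S i (insert e (S i \ A)))) ⟨?_, fun h hh => ?_⟩
  · rintro (_ | j)
    · exact hC₁
    · obtain rfl | hj := eq_or_ne j i
      · simpa using hC₂
      · simpa [hj] using (hS.isCircuit j).of_deleteEdge
  have hcount := card_filter_option_add (i := i)
    (p := fun o => h ∈ o.elim (insert e A) (Function.update S i (insert e (S i \ A))))
    (q := fun j => h ∈ S j) fun j hj => by simp [hj]
  obtain rfl | hne := eq_or_ne h e
  · simpa [heS] using hcount
  · have := hS.card_eq_two h (mem_erase.2 ⟨hne, hh⟩)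
    simp only [Option.elim_none, Option.elim_some, Function.update_self] at hcount
    grind

/-! ### The two-vertex cubic graph -/

lemma isCircuit_pair {e f : β} {a b : α} (he : e ∈ G.edges) (hf : f ∈ G.edges) (hef : e ≠ f)
    (hea : G.IsLink e a b) (hfa : G.IsLink f a b) : G.IsCircuit {e, f} := by
  refine ⟨by grind, insert_nonempty _ _, fun v => ?_, fun D hD hDn hDe => ?_⟩
  · rw [insert_eq, boundary_union (disjoint_singleton.2 hef), hea.boundary_singleton,
      hfa.boundary_singleton, CharTwo.add_self_eq_zero]
  · have hnot : ∀ g ∈ G.edges, D ≠ {g} := fun g hg h => not_isEven_singleton hg (h ▸ hDe)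
    have := hnot e he
    have := hnot f hf
    obtain ⟨g, hg⟩ := hDn
    grind

theorem hasDoubleCover_of_card_verts_eq_two (hV : #G.verts = 2) (h3 : G.IsCubic) :
    G.HasDoubleCover 3 ∧ #G.edges = 3 := by
  obtain ⟨a, b, -, hv⟩ := card_eq_two.1 hV
  have hlink : ∀ e ∈ G.edges, G.IsLink e a b := fun e he => by
    have hs := G.src_mem e he
    have ht := G.tgt_mem e he
    have := G.src_ne_tgt e he
    rw [hv] at hs ht
    unfold IsLink
    grind
  have hE : G.edges = G.cut {a} := by
    ext e
    rw [mem_cut_singleton]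
    exact ⟨fun he => ⟨he, (hlink e he).inc_left⟩, And.left⟩
  have hcard : #G.edges = 3 := by
    rw [hE]
    exact h3 a (by simp [hv])
  have hS : G.IsDoubleCover fun e : G.edges => G.edges.erase e := by
    refine ⟨fun e => ?_, fun f hf => ?_⟩
    · have hpair : #(G.edges.erase e) = 2 := by rw [card_erase_of_mem e.2, hcard]
      obtain ⟨f, g, hfg, hE'⟩ := card_eq_two.1 hpair
      have hf : f ∈ G.edges := mem_of_mem_erase (hE' ▸ mem_insert_self f _ : f ∈ G.edges.erase e)
      have hg : g ∈ G.edges := mem_of_mem_erase (by rw [hE']; simp : g ∈ G.edges.erase e)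
      rw [hE']
      exact isCircuit_pair hf hg hfg (hlink f hf) (hlink g hg)
    · have hfilter : ({e | f ∈ G.edges.erase e} : Finset G.edges) = univ.erase ⟨f, hf⟩ := by
        ext e
        simp [hf, Subtype.ext_iff, eq_comm]
      rw [hfilter, card_erase_of_mem (mem_univ _), card_univ, Fintype.card_coe, hcard]
  refine ⟨?_, hcard⟩
  rw [← hcard, ← Fintype.card_coe]
  exact hS.hasDoubleCover

/-! ### The obstruction to restoring an edge -/

/-- The vertices on the edge set `C`. -/
noncomputable def vertexSet (G : Multigraph α β) (C : Finset β) : Finset α :=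
  {x ∈ G.verts | ∃ f ∈ C, G.Inc f x}

lemma mem_vertexSet {C : Finset β} (hC : C ⊆ G.edges) {x : α} :
    x ∈ G.vertexSet C ↔ ∃ f ∈ C, G.Inc f x := by
  rw [vertexSet, mem_filter, and_iff_right_iff_imp]
  rintro ⟨f, hf, hfx⟩
  exact hfx.mem_verts (hC hf)

lemma Inc.eq_or_eq_or_eq {a b c e : β} {v : α} (hev : G.Inc e v) (he : e ∈ G.edges)
    (hv : G.cut {v} = {a, b, c}) : e = a ∨ e = b ∨ e = c := by
  simpa [hv] using mem_cut_singleton.2 ⟨he, hev⟩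

lemma IsCircuit.eq_of_inc_of_notMem {C : Finset β} (hC : G.IsCircuit C) {v : α}
    (hv : #(G.cut {v}) ≤ 3) {e f g : β} (he : e ∈ C) (hev : G.Inc e v) (hf : f ∈ G.cut {v})
    (hfC : f ∉ C) (hg : g ∈ G.cut {v}) (hgC : g ∉ C) : f = g := by
  have htwo := hC.card_inter_cut_eq_two hv he hev
  have hsum := card_sdiff_add_card_inter (G.cut {v}) C
  rw [inter_comm] at hsum
  exact card_le_one.1 (by omega : #(G.cut {v} \ C) ≤ 1) f (mem_sdiff.2 ⟨hf, hfC⟩) g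
    (mem_sdiff.2 ⟨hg, hgC⟩)

/-- An edge of `D` in the cut lies on `C` only at an end of `g`. If none lay at `y`, then `l` would
be the only edge of `D` in the cut. -/
lemma IsCircuit.exists_mem_cut_inc_of_inter_eq_singleton {C D : Finset β} (hC : G.IsCircuit C)
    (hD : G.IsCircuit D) (hG : G.IsSubcubic) {A : Finset α} {g l : β} {x y : α}
    (hDC : D ∩ C = {g}) (hg : G.IsLink g x y) (hCA : Disjoint C (G.cut A)) (hl : l ∈ G.cut A)
    (hlx : G.Inc l x) (hon : ∀ f ∈ D, f ∈ G.cut A → ∃ z ∈ G.vertexSet C, G.Inc f z) :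
    ∃ f ∈ D, f ∈ G.cut A ∧ G.Inc f y := by
  by_contra! hy
  have hmem : ∀ f, f ∈ D → f ∈ C → f = g := fun f hfD hfC =>
    mem_singleton.1 (hDC ▸ mem_inter.2 ⟨hfD, hfC⟩)
  obtain ⟨hgD, hgC⟩ := mem_inter.1 (hDC ▸ mem_singleton_self g)
  have hx := hG x (hg.inc_left.mem_verts (hC.subset_edges hgC))
  have hnot : ∀ f ∈ G.cut A, f ∉ C := fun f hf hfC => disjoint_left.1 hCA hfC hf
  have hlx' := mem_cut_singleton.2 ⟨cut_subset_edges A hl, hlx⟩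
  have hlD : l ∈ D := by
    obtain ⟨f, hf, hfg, hfx⟩ := hD.exists_ne_inc hgD hg.inc_left
    rwa [hC.eq_of_inc_of_notMem hx hgC hg.inc_left hlx' (hnot l hl)
      (mem_cut_singleton.2 ⟨hD.subset_edges hf, hfx⟩) fun h => hfg (hmem f hf h)]
  have hone : D ∩ G.cut A = {l} := by
    refine eq_singleton_iff_unique_mem.2 ⟨mem_inter.2 ⟨hlD, hl⟩, fun f hf => ?_⟩
    obtain ⟨hfD, hfA⟩ := mem_inter.1 hf
    obtain ⟨z, hz, hfz⟩ := hon f hfD hfA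
    obtain ⟨k, hk, hkz⟩ := (mem_vertexSet hC.subset_edges).1 hz
    obtain ⟨h, hhD, hhC, hhz⟩ := hD.exists_common_inc hC (hG z (mem_filter.1 hz).1) hfD hfz hk hkz
    rw [hmem h hhD hhC, hg.inc_iff] at hhz
    rcases hhz with hzx | hzy
    · subst hzx
      exact hC.eq_of_inc_of_notMem hx hgC hg.inc_left
        (mem_cut_singleton.2 ⟨hD.subset_edges hfD, hfz⟩) (hnot f hfA) hlx' (hnot l hl)
    · exact absurd (hzy ▸ hfz) (hy f hfD hfA)
  have heven := hD.isEven.even_card_inter_cut hD.subset_edges A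
  rw [hone, card_singleton] at heven
  exact absurd heven (by decide)

lemma exists_component {W : Finset α} {v : α} (hv : v ∈ W) :
    ∃ A ⊆ W, v ∈ A ∧ G.PreconnectedOn A ∧ ¬G.Linked A (W \ A) := by
  obtain ⟨A, hA, hmin⟩ := exists_min_image {A ∈ W.powerset | v ∈ A ∧ ¬G.Linked A (W \ A)} card
    ⟨W, mem_filter.2 ⟨mem_powerset_self W, hv, by rintro ⟨e, -, a, -, b, hb, -⟩; simp at hb⟩⟩
  obtain ⟨hAW, hvA, hAl⟩ := mem_filter.1 hA
  rw [mem_powerset] at hAW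
  have key : ∀ Z ⊆ A, v ∈ Z → (A \ Z).Nonempty → G.Linked Z (A \ Z) := by
    intro Z hZ hvZ hne
    by_contra hcon
    have hle : #A ≤ #Z := by
      refine hmin Z (mem_filter.2 ⟨mem_powerset.2 (hZ.trans hAW), hvZ, ?_⟩)
      rintro ⟨e, he, a, ha, b, hb, hab⟩
      by_cases hbA : b ∈ A
      · exact hcon ⟨e, he, a, ha, b, mem_sdiff.2 ⟨hbA, (mem_sdiff.1 hb).2⟩, hab⟩
      · exact hAl ⟨e, he, a, hZ ha, b, mem_sdiff.2 ⟨(mem_sdiff.1 hb).1, hbA⟩, hab⟩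
    rw [eq_of_subset_of_card_le hZ hle, sdiff_self] at hne
    exact not_nonempty_empty hne
  refine ⟨A, hAW, hvA, fun Z hZ hZ' => ?_, hAl⟩
  by_cases hvZ : v ∈ Z
  · rw [← sdiff_inter_self_left] at hZ' ⊢
    exact key _ inter_subset_left (mem_inter.2 ⟨hvA, hvZ⟩) hZ'
  · have h := key (A \ Z) sdiff_subset (mem_sdiff.2 ⟨hvA, hvZ⟩)
    rw [sdiff_sdiff_self_left] at h
    exact (h hZ).symm

lemma hasK33Minor_of_linked {u p q : α} {A B C : Finset α} (hu : u ∈ G.verts) (hp : p ∈ G.verts)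
    (hq : q ∈ G.verts) (hA : A ⊆ G.verts) (hB : B ⊆ G.verts) (hC : C ⊆ G.verts)
    (hAc : G.PreconnectedOn A) (hBc : G.PreconnectedOn B) (hCc : G.PreconnectedOn C)
    (hup : u ≠ p) (huq : u ≠ q) (hpq : p ≠ q) (hA' : Disjoint A {u, p, q})
    (hB' : Disjoint B {u, p, q}) (hC' : Disjoint C {u, p, q}) (hAB : Disjoint A B)
    (hAC : Disjoint A C) (hBC : Disjoint B C) (hlpu : G.Linked {p} {u}) (hlqu : G.Linked {q} {u})
    (hlpB : G.Linked {p} B) (hlpC : G.Linked {p} C) (hlqB : G.Linked {q} B)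
    (hlqC : G.Linked {q} C) (hlAu : G.Linked A {u}) (hlAB : G.Linked A B) (hlAC : G.Linked A C) :
    G.HasK33Minor := by
  have hAn : A.Nonempty := let ⟨_, _, a, ha, _⟩ := hlAu; ⟨a, ha⟩
  have hBn : B.Nonempty := let ⟨_, _, _, _, b, hb, _⟩ := hlAB; ⟨b, hb⟩
  have hCn : C.Nonempty := let ⟨_, _, _, _, b, hb, _⟩ := hlAC; ⟨b, hb⟩
  have hsingle : ∀ v ∈ G.verts, ({v} : Finset α).Nonempty ∧ {v} ⊆ G.verts ∧
      G.PreconnectedOn {v} := fun v hv =>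
    ⟨singleton_nonempty v, singleton_subset_iff.2 hv, preconnectedOn_singleton v⟩
  refine ⟨Sum.elim ![{p}, {q}, A] ![{u}, B, C], ?_, ?_, ?_⟩
  · rintro (k | k) <;> fin_cases k
    exacts [hsingle p hp, hsingle q hq, ⟨hAn, hA, hAc⟩, hsingle u hu, ⟨hBn, hB, hBc⟩,
      ⟨hCn, hC, hCc⟩]
  · simp only [disjoint_insert_right, disjoint_singleton_right] at hA' hB' hC'
    rintro (k | k) (k' | k') hne <;> fin_cases k <;> fin_cases k' <;>
      simp_all [disjoint_comm, eq_comm]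
  · intro k k'
    fin_cases k <;> fin_cases k'
    exacts [hlpu, hlpB, hlpC, hlqu, hlqB, hlqC, hlAu, hlAB, hlAC]

lemma IsEulerCover.inc_of_two_common {ι : Type*} [Fintype ι] {S : ι → Finset β} {e g g' : β}
    {u v : α} {i j : ι} (hS : (G.deleteEdge e).IsEulerCover S) (hG : G.TwoEdgeConnected)
    (h3 : G.IsCubic) (h4 : G.EssentiallyFourEdgeConnected) (huv : G.IsLink e u v) (hij : i ≠ j)
    (hgg : g ≠ g') (hgi : g ∈ S i) (hgj : g ∈ S j) (hgi' : g' ∈ S i) (hgj' : g' ∈ S j) :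
    (G.Inc g u ∧ G.Inc g' u) ∨ (G.Inc g v ∧ G.Inc g' v) := by
  obtain ⟨X, hX, hcut⟩ := hS.exists_cut_eq (hG.deleteEdge h3 h4)
    (fun w hw => by rw [cut_deleteEdge]; exact card_erase_le.trans (h3 w hw).le)
    (T := {g, g'}) (by simp [insert_subset_iff, (hS.isCircuit i).subset_edges hgi,
      (hS.isCircuit i).subset_edges hgi'])
    (hS.even_card_inter_of_two_common hij hgg hgi hgj hgi' hgj')
  rw [cut_deleteEdge] at hcut
  have hle := pred_card_le_card_erase (s := G.cut X) (a := e)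
  have hg : g ∈ G.cut X ∧ g' ∈ G.cut X :=
    ⟨mem_of_mem_erase (a := e) (by simp [hcut]), mem_of_mem_erase (a := e) (by simp [hcut])⟩
  have hcard : #((G.cut X).erase e) = 2 := by rw [hcut, card_pair hgg]
  obtain ⟨w, hw, hXw⟩ := h4.exists_cut_eq_singleton hX ⟨g, hg.1⟩ (by omega)
  have hw₃ := h3 w hw
  rw [hXw] at hcard hg
  have hew : e ∈ G.cut {w} := by
    by_contra h
    rw [erase_eq_of_notMem h] at hcard
    omega
  simp only [mem_cut_singleton, huv.inc_iff] at hew hg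
  rcases hew.2 with rfl | rfl
  · exact Or.inl ⟨hg.1.2, hg.2.2⟩
  · exact Or.inr ⟨hg.1.2, hg.2.2⟩

/-- A double cover `S` of `G - e`, `e = uv`, in which no member passes through both ends of `e` and
two members share several edges only around `u` or `v`, together with two of the members, `S i`
and `S j`, that run together through `u`, along `a₁` to `p` and along `a₂` to `q`, where they part:
`S i` leaves along `b₁` and `b₂`, and `S j` along `c₁` and `c₂`. -/
structure Obstruction (G : Multigraph α β) (e : β) (u v : α) {ι : Type*} [Fintype ι]
    (S : ι → Finset β) (i j : ι) (a₁ a₂ : β) (p q : α) (b₁ c₁ b₂ c₂ : β) : Prop where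
  twoEdgeConnected : G.TwoEdgeConnected
  isCubic : G.IsCubic
  essentiallyFourEdgeConnected : G.EssentiallyFourEdgeConnected
  isDoubleCover : (G.deleteEdge e).IsDoubleCover S
  mem_edges : e ∈ G.edges
  isLink : G.IsLink e u v
  not_inc : ∀ ⦃k f g⦄, f ∈ S k → G.Inc f u → g ∈ S k → ¬G.Inc g v
  inc_of_two_common : ∀ ⦃k l g g'⦄, k ≠ l → g ≠ g' → g ∈ S k → g ∈ S l → g' ∈ S k → g' ∈ S l →
    (G.Inc g u ∧ G.Inc g' u) ∨ (G.Inc g v ∧ G.Inc g' v)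
  inter_eq : S i ∩ S j = {a₁, a₂}
  isLink₁ : G.IsLink a₁ u p
  isLink₂ : G.IsLink a₂ u q
  ne : p ≠ q
  cut_u : G.cut {u} = {e, a₁, a₂}
  cut_p : G.cut {p} = {a₁, b₁, c₁}
  cut_q : G.cut {q} = {a₂, b₂, c₂}
  b₁_mem : b₁ ∈ S i \ S j
  c₁_mem : c₁ ∈ S j \ S i
  b₂_mem : b₂ ∈ S i \ S j
  c₂_mem : c₂ ∈ S j \ S i

namespace Obstruction

variable {ι : Type*} [Fintype ι] {S : ι → Finset β} {i j : ι} {e a₁ a₂ b₁ c₁ b₂ c₂ : β}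
  {u v p q : α}

lemma swap (c : G.Obstruction e u v S i j a₁ a₂ p q b₁ c₁ b₂ c₂) :
    G.Obstruction e u v S j i a₁ a₂ p q c₁ b₁ c₂ b₂ :=
  { c with
    inter_eq := by rw [inter_comm, c.inter_eq]
    cut_p := by rw [c.cut_p, pair_comm]
    cut_q := by rw [c.cut_q, pair_comm]
    b₁_mem := c.c₁_mem
    c₁_mem := c.b₁_mem
    b₂_mem := c.c₂_mem
    c₂_mem := c.b₂_mem }

lemma flip (c : G.Obstruction e u v S i j a₁ a₂ p q b₁ c₁ b₂ c₂) :
    G.Obstruction e u v S i j a₂ a₁ q p b₂ c₂ b₁ c₁ :=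
  { c with
    inter_eq := by rw [pair_comm, c.inter_eq]
    isLink₁ := c.isLink₂
    isLink₂ := c.isLink₁
    ne := c.ne.symm
    cut_u := by rw [c.cut_u, pair_comm a₁]
    cut_p := c.cut_q
    cut_q := c.cut_p
    b₁_mem := c.b₂_mem
    c₁_mem := c.c₂_mem
    b₂_mem := c.b₁_mem
    c₂_mem := c.c₁_mem }

variable (c : G.Obstruction e u v S i j a₁ a₂ p q b₁ c₁ b₂ c₂)
include c

lemma isCircuit (k : ι) : G.IsCircuit (S k) := (c.isDoubleCover.isCircuit k).of_deleteEdge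

lemma subset_edges (k : ι) : S k ⊆ G.edges := (c.isCircuit k).subset_edges

lemma ne_e {k : ι} {g : β} (hg : g ∈ S k) : g ≠ e :=
  ne_of_mem_erase ((c.isDoubleCover.isCircuit k).subset_edges hg)

lemma a₁_mem : a₁ ∈ S i ∩ S j := by simp [c.inter_eq]

lemma mem_vertexSet {k : ι} {x : α} : x ∈ G.vertexSet (S k) ↔ ∃ f ∈ S k, G.Inc f x :=
  Multigraph.mem_vertexSet (c.subset_edges k)

lemma not_inc_v {g : β} (hg : g ∈ S i) : ¬G.Inc g v :=
  c.not_inc (mem_inter.1 c.a₁_mem).1 c.isLink₁.inc_left hg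

lemma u_ne_p : u ≠ p := c.isLink₁.ne (c.subset_edges i (mem_inter.1 c.a₁_mem).1)

lemma p_ne_v : p ≠ v := fun h =>
  c.not_inc_v (mem_inter.1 c.a₁_mem).1 (h ▸ c.isLink₁.inc_right)

lemma inc_b₁ : G.Inc b₁ p := (mem_cut_singleton.1 (by simp [c.cut_p] : b₁ ∈ G.cut {p})).2

lemma b₁_ne : b₁ ≠ a₁ ∧ b₁ ≠ a₂ := by
  have hb := (mem_sdiff.1 c.b₁_mem).2
  exact ⟨fun h => hb (h ▸ (mem_inter.1 c.a₁_mem).2),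
    fun h => hb (h ▸ (mem_inter.1 c.flip.a₁_mem).2)⟩

lemma eq_of_inc_u {k : ι} {g : β} (hg : g ∈ S k) (hgu : G.Inc g u) : g = a₁ ∨ g = a₂ :=
  (hgu.eq_or_eq_or_eq (c.subset_edges k hg) c.cut_u).resolve_left (c.ne_e hg)

lemma eq_of_inc_p {g : β} (hg : g ∈ S i) (hgp : G.Inc g p) : g = a₁ ∨ g = b₁ := by
  rcases hgp.eq_or_eq_or_eq (c.subset_edges i hg) c.cut_p with h | h | h
  · exact Or.inl h
  · exact Or.inr h
  · exact absurd (h ▸ hg) (mem_sdiff.1 c.c₁_mem).2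

/-- Otherwise the edges `e`, `c₁`, `c₂` would form the cut of the triangle `upq`. -/
lemma not_inc_b₁ : ¬G.Inc b₁ q := by
  intro hbq
  have hb₁ := (mem_sdiff.1 c.b₁_mem).1
  have hb₁₂ : b₁ = b₂ := (c.flip.eq_of_inc_p hb₁ hbq).resolve_left c.b₁_ne.2
  have hE : ∀ {g}, g ∈ S i → g ∈ G.edges := fun hg => c.subset_edges i hg
  have ha₁ := hE (mem_inter.1 c.a₁_mem).1
  have ha₂ := hE (mem_inter.1 c.flip.a₁_mem).1
  have hX : ({u, p, q} : Finset α) ⊆ G.verts := by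
    simp [insert_subset_iff, c.isLink₁.inc_left.mem_verts ha₁, c.isLink₁.inc_right.mem_verts ha₁,
      c.isLink₂.inc_right.mem_verts ha₂]
  have h₁ : a₁ ∉ G.cut {u, p, q} := by simp [c.isLink₁.mem_cut_iff]
  have h₂ : a₂ ∉ G.cut {u, p, q} := by simp [c.isLink₂.mem_cut_iff]
  have h₃ : b₁ ∉ G.cut {u, p, q} := by simp [(c.inc_b₁.isLink_of_ne hbq c.ne).mem_cut_iff]
  have hsub : G.cut {u, p, q} ⊆ {e, c₁, c₂} := fun g hg => by
    obtain ⟨x, hx, y, -, hxy⟩ := exists_isLink_of_mem_cut hg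
    have hgE := cut_subset_edges _ hg
    simp only [mem_insert, mem_singleton] at hx ⊢
    rcases hx with rfl | rfl | rfl
    · have := hxy.inc_left.eq_or_eq_or_eq hgE c.cut_u
      grind
    · have := hxy.inc_left.eq_or_eq_or_eq hgE c.cut_p
      grind
    · have := hxy.inc_left.eq_or_eq_or_eq hgE c.cut_q
      grind
  have he : e ∈ G.cut {u, p, q} := by
    simp [c.isLink.mem_cut_iff, c.mem_edges, (c.isLink.ne c.mem_edges).symm, c.p_ne_v.symm,
      c.flip.p_ne_v.symm]
  obtain ⟨w, hw, hcut⟩ := c.essentiallyFourEdgeConnected.exists_cut_eq_singleton hX ⟨e, he⟩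
    ((card_le_card hsub).trans card_le_three)
  rw [hcut] at hsub he
  have hcw : G.cut {w} = {e, c₁, c₂} :=
    eq_of_subset_of_card_le hsub (card_le_three.trans (c.isCubic w hw).ge)
  have hc₁ : G.Inc c₁ w := (mem_cut_singleton.1 (by simp [hcw] : c₁ ∈ G.cut {w})).2
  rcases c.isLink.inc_iff.1 (mem_cut_singleton.1 he).2 with rfl | rfl
  · have hc := c.eq_of_inc_u (mem_sdiff.1 c.c₁_mem).1 hc₁
    have := c.swap.b₁_ne
    tauto
  · exact c.swap.not_inc_v (mem_sdiff.1 c.c₁_mem).1 hc₁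

lemma exists_isLink_b₁ : ∃ y ∈ G.vertexSet (S i) \ {u, p, q}, G.IsLink b₁ p y := by
  have hb₁ := (mem_sdiff.1 c.b₁_mem).1
  obtain ⟨y, hy⟩ := c.inc_b₁.exists_isLink
  refine ⟨y, ?_, hy⟩
  simp only [mem_sdiff, mem_insert, mem_singleton, not_or]
  refine ⟨c.mem_vertexSet.2 ⟨b₁, hb₁, hy.inc_right⟩, ?_, (hy.ne (c.subset_edges i hb₁)).symm, ?_⟩
  · rintro rfl
    have := c.eq_of_inc_u hb₁ hy.inc_right
    have := c.b₁_ne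
    tauto
  · rintro rfl
    exact c.not_inc_b₁ hy.inc_right

/-- `S i` crosses the cut of `Z`, and can do so only along `b₁` and `b₂`. -/
lemma b₁_mem_cut {Z : Finset α} (hZ : Z ⊆ G.vertexSet (S i) \ {u, p, q}) (hne : Z.Nonempty)
    (hl : ¬G.Linked Z ((G.vertexSet (S i) \ {u, p, q}) \ Z)) : b₁ ∈ G.cut Z := by
  have hmem : ∀ x ∈ Z, (∃ f ∈ S i, G.Inc f x) ∧ x ≠ u ∧ x ≠ p ∧ x ≠ q := fun x hx => by
    simpa [c.mem_vertexSet] using hZ hx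
  have hsub : S i ∩ G.cut Z ⊆ {b₁, b₂} := fun g hg => by
    obtain ⟨hgi, hgZ⟩ := mem_inter.1 hg
    obtain ⟨x, hx, y, hy, hxy⟩ := exists_isLink_of_mem_cut hgZ
    have hx' := (hmem x hx).2
    have hgu : ∀ w, w = y → w = u ∨ w = p ∨ w = q := by
      rintro w rfl
      by_contra h
      refine hl ⟨g, c.subset_edges i hgi, x, hx, w, ?_, hxy⟩
      simp only [mem_sdiff, c.mem_vertexSet, mem_insert, mem_singleton]
      exact ⟨⟨⟨g, hgi, hxy.inc_right⟩, h⟩, hy⟩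
    have h₁ : g ≠ a₁ := by
      rintro rfl
      have := c.isLink₁.inc_iff.1 hxy.inc_left
      tauto
    have h₂ : g ≠ a₂ := by
      rintro rfl
      have := c.isLink₂.inc_iff.1 hxy.inc_left
      tauto
    simp only [mem_insert, mem_singleton]
    rcases hgu y rfl with rfl | rfl | rfl
    · have := c.eq_of_inc_u hgi hxy.inc_right
      tauto
    · have := c.eq_of_inc_p hgi hxy.inc_right
      tauto
    · have := c.flip.eq_of_inc_p hgi hxy.inc_right
      tauto
  obtain ⟨x, hx⟩ := hne
  obtain ⟨f, hf, hfx⟩ := (hmem x hx).1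
  obtain ⟨g, hgi, hgZ⟩ := (c.isCircuit i).exists_mem_cut hx (fun h => (hmem u h).2.1 rfl) hf hfx
    (mem_inter.1 c.a₁_mem).1 c.isLink₁.inc_left
  have heven := (c.isCircuit i).isEven.even_card_inter_cut (c.subset_edges i) Z
  have hpos : 0 < #(S i ∩ G.cut Z) := card_pos.2 ⟨g, mem_inter.2 ⟨hgi, hgZ⟩⟩
  have hle : #{b₁, b₂} ≤ #(S i ∩ G.cut Z) := card_le_two.trans (by grind)
  have hb : b₁ ∈ S i ∩ G.cut Z := by simp [eq_of_subset_of_card_le hsub hle]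
  exact (mem_inter.1 hb).2

lemma preconnectedOn : G.PreconnectedOn (G.vertexSet (S i) \ {u, p, q}) := by
  intro Z hZ hZ'
  by_contra hcon
  obtain ⟨y, hy, hpy⟩ := c.exists_isLink_b₁
  have h₁ := c.b₁_mem_cut inter_subset_left hZ (by rwa [sdiff_inter_self_left])
  have h₂ := c.b₁_mem_cut sdiff_subset hZ' fun h => hcon (by
    rw [sdiff_sdiff_self_left] at h
    exact h.symm)
  simp only [hpy.mem_cut_iff, mem_inter, mem_sdiff, mem_insert, mem_singleton] at h₁ h₂ hy
  tauto

lemma exists_inter_eq_singleton {g : β} (hg : g ∈ S i) (hgu : ¬G.Inc g u) :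
    ∃ k, S k ∩ S i = {g} := by
  obtain ⟨k, hk, hki⟩ := exists_mem_ne (by
    rw [c.isDoubleCover.card_eq_two g ((c.isDoubleCover.isCircuit i).subset_edges hg)]
    norm_num : 1 < #{k | g ∈ S k}) i
  have hgk : g ∈ S k := (mem_filter.1 hk).2
  refine ⟨k, eq_singleton_iff_unique_mem.2 ⟨mem_inter.2 ⟨hgk, hg⟩, fun f hf => ?_⟩⟩
  obtain ⟨hfk, hfi⟩ := mem_inter.1 hf
  by_contra hne
  have := c.inc_of_two_common hki (Ne.symm hne) hgk hg hfk hfi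
  have := c.not_inc_v hg
  tauto

section Linked

variable {A : Finset α} (hA : A ⊆ G.verts \ (G.vertexSet (S i) ∪ G.vertexSet (S j)))
include hA

lemma notMem_of_inc {x : α} (hx : x ∈ A) {g : β} (hgx : G.Inc g x) : g ∉ S i := fun hg => by
  have h := hA hx
  simp only [mem_sdiff, mem_union, c.mem_vertexSet, not_or] at h
  exact h.2.1 ⟨g, hg, hgx⟩

lemma exists_mem_vertexSet_of_mem_cut
    (hl : ¬G.Linked A ((G.verts \ (G.vertexSet (S i) ∪ G.vertexSet (S j))) \ A))
    (hl' : ¬G.Linked A (G.vertexSet (S j) \ {u, p, q})) {g : β} (hg : g ∈ G.cut A) (hge : g ≠ e) :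
    ∃ x ∈ A, ∃ y ∈ G.vertexSet (S i) \ {u, p, q}, G.IsLink g x y := by
  obtain ⟨x, hx, y, hy, hxy⟩ := exists_isLink_of_mem_cut hg
  have hgE := cut_subset_edges _ hg
  have hgi := c.notMem_of_inc hA hx hxy.inc_left
  have hgj := c.swap.notMem_of_inc (union_comm (G.vertexSet (S i)) _ ▸ hA) hx hxy.inc_left
  have hnot : y ∉ ({u, p, q} : Finset α) := by
    have := mem_inter.1 c.a₁_mem
    have := mem_inter.1 c.flip.a₁_mem
    have := mem_sdiff.1 c.b₁_mem
    have := mem_sdiff.1 c.b₂_mem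
    have := mem_sdiff.1 c.c₁_mem
    have := mem_sdiff.1 c.c₂_mem
    simp only [mem_insert, mem_singleton]
    rintro (rfl | rfl | rfl)
    · have := hxy.inc_right.eq_or_eq_or_eq hgE c.cut_u
      grind
    · have := hxy.inc_right.eq_or_eq_or_eq hgE c.cut_p
      grind
    · have := hxy.inc_right.eq_or_eq_or_eq hgE c.cut_q
      grind
  refine ⟨x, hx, y, mem_sdiff.2 ⟨?_, hnot⟩, hxy⟩
  by_contra hyi
  by_cases hyj : y ∈ G.vertexSet (S j)
  · exact hl' ⟨g, hgE, x, hx, y, mem_sdiff.2 ⟨hyj, hnot⟩, hxy⟩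
  · refine hl ⟨g, hgE, x, hx, y, ?_, hxy⟩
    simp [hxy.inc_right.mem_verts hgE, hyi, hyj, hy]

/-- If not, let `Z` be the set of ends on `S i` of the edges other than `e` that leave `A`. Then
`S i` leaves `Z` along an edge `g`, and the other member through `g` also leaves `A` at the end of
`g` outside `Z`. -/
lemma linked (hv : v ∈ A)
    (hl : ¬G.Linked A ((G.verts \ (G.vertexSet (S i) ∪ G.vertexSet (S j))) \ A)) :
    G.Linked A (G.vertexSet (S j) \ {u, p, q}) := by
  by_contra hl'
  have hcut := fun {g} => c.exists_mem_vertexSet_of_mem_cut hA hl hl' (g := g)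
  have ha₁ := (mem_inter.1 c.a₁_mem).1
  have huA : u ∉ A := fun h => c.notMem_of_inc hA h c.isLink₁.inc_left ha₁
  let Z : Finset α := {y ∈ G.vertexSet (S i) \ {u, p, q} | ∃ g ∈ G.cut A, g ≠ e ∧ G.Inc g y}
  obtain ⟨z, hz⟩ : Z.Nonempty := by
    have htwo := c.twoEdgeConnected A
      ⟨v, mem_inter.2 ⟨c.isLink.inc_right.mem_verts c.mem_edges, hv⟩⟩
      ⟨u, mem_sdiff.2 ⟨c.isLink.inc_left.mem_verts c.mem_edges, huA⟩⟩
    obtain ⟨g, hg, hge⟩ := exists_mem_ne htwo e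
    obtain ⟨x, -, y, hy, hxy⟩ := hcut hg hge
    exact ⟨y, mem_filter.2 ⟨hy, g, hg, hge, hxy.inc_right⟩⟩
  obtain ⟨f, hf, hfz⟩ := c.mem_vertexSet.1 (mem_sdiff.1 (mem_filter.1 hz).1).1
  obtain ⟨g, hgi, hgZ⟩ := (c.isCircuit i).exists_mem_cut hz
    (fun h => by simpa using (mem_filter.1 h).1) hf hfz ha₁ c.isLink₁.inc_left
  obtain ⟨x, hx, y, hy, hxy⟩ := exists_isLink_of_mem_cut hgZ
  obtain ⟨hx', l, hl, -, hlx⟩ := mem_filter.1 hx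
  have hgu : ¬G.Inc g u := fun h => by
    simp only [mem_sdiff, mem_insert, mem_singleton, not_or] at hx'
    rcases c.eq_of_inc_u hgi h with rfl | rfl
    · have := c.isLink₁.inc_iff.1 hxy.inc_left
      tauto
    · have := c.isLink₂.inc_iff.1 hxy.inc_left
      tauto
  obtain ⟨k, hk⟩ := c.exists_inter_eq_singleton hgi hgu
  obtain ⟨h, hhk, hhA, hhy⟩ := (c.isCircuit i).exists_mem_cut_inc_of_inter_eq_singleton
    (c.isCircuit k) c.isCubic.isSubcubic hk hxy
    (disjoint_left.2 fun g hg hgA =>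
      let ⟨_, ha, _, _, hab⟩ := exists_isLink_of_mem_cut hgA
      c.notMem_of_inc hA ha hab.inc_left hg) hl hlx fun g hg hgA =>
      let ⟨_, _, b, hb, hab⟩ := hcut hgA (c.ne_e hg)
      ⟨b, (mem_sdiff.1 hb).1, hab.inc_right⟩
  obtain ⟨s, hs, t, ht, hst⟩ := hcut hhA (c.ne_e hhk)
  rcases hst.inc_iff.1 hhy with rfl | rfl
  · exact c.notMem_of_inc hA hs hxy.inc_right hgi
  · exact hy (mem_filter.2 ⟨ht, h, hhA, c.ne_e hhk, hhy⟩)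

end Linked

lemma disjoint_vertexSet :
    Disjoint (G.vertexSet (S i) \ {u, p, q}) (G.vertexSet (S j) \ {u, p, q}) := by
  refine disjoint_left.2 fun x hx hx' => ?_
  obtain ⟨hxi, hx₀⟩ := mem_sdiff.1 hx
  obtain ⟨f, hf, hfx⟩ := c.mem_vertexSet.1 hxi
  obtain ⟨f', hf', hfx'⟩ := c.mem_vertexSet.1 (mem_sdiff.1 hx').1
  obtain ⟨g, hgi, hgj, hgx⟩ := (c.isCircuit i).exists_common_inc (c.isCircuit j)
    (c.isCubic x (mem_filter.1 hxi).1).le hf hfx hf' hfx'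
  have hg : g = a₁ ∨ g = a₂ := by simpa [c.inter_eq] using mem_inter.2 ⟨hgi, hgj⟩
  simp only [mem_insert, mem_singleton, not_or] at hx₀
  rcases hg with rfl | rfl
  · have := c.isLink₁.inc_iff.1 hgx
    tauto
  · have := c.isLink₂.inc_iff.1 hgx
    tauto

lemma linked_p : G.Linked {p} (G.vertexSet (S i) \ {u, p, q}) := by
  obtain ⟨y, hy, hpy⟩ := c.exists_isLink_b₁
  exact ⟨b₁, c.subset_edges i (mem_sdiff.1 c.b₁_mem).1, p, mem_singleton_self p, y, hy, hpy⟩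

/-- The branch sets are `{p}`, `{q}`, the component of `v` among the vertices on neither `S i` nor
`S j` against `{u}` and the two parts of `S i` and `S j` away from `u`, `p`, `q`. -/
theorem hasK33Minor : G.HasK33Minor := by
  have ha₁ := c.subset_edges i (mem_inter.1 c.a₁_mem).1
  have ha₂ := c.subset_edges i (mem_inter.1 c.flip.a₁_mem).1
  have hvW : v ∈ G.verts \ (G.vertexSet (S i) ∪ G.vertexSet (S j)) := by
    simp only [mem_sdiff, mem_union, c.mem_vertexSet, not_or, not_exists, not_and]
    exact ⟨c.isLink.inc_right.mem_verts c.mem_edges, fun _ => c.not_inc_v,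
      fun _ => c.swap.not_inc_v⟩
  obtain ⟨A, hAW, hvA, hAc, hAl⟩ := exists_component (G := G) hvW
  have hlj := c.linked hAW hvA hAl
  have hli := c.swap.linked (union_comm (G.vertexSet (S i)) _ ▸ hAW) hvA
    (union_comm (G.vertexSet (S i)) _ ▸ hAl)
  have hpair : ({u, q, p} : Finset α) = {u, p, q} := by rw [pair_comm]
  have hA : ∀ {X : Finset α}, X ⊆ G.vertexSet (S i) ∪ G.vertexSet (S j) → Disjoint A X :=
    fun hX => disjoint_of_subset_left hAW (disjoint_of_subset_right hX sdiff_disjoint)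
  have hV : ∀ k, G.vertexSet (S k) \ {u, p, q} ⊆ G.verts := fun k =>
    sdiff_subset.trans (filter_subset _ _)
  refine hasK33Minor_of_linked (u := u) (p := p) (q := q) (A := A)
    (c.isLink.inc_left.mem_verts c.mem_edges) (c.isLink₁.inc_right.mem_verts ha₁)
    (c.isLink₂.inc_right.mem_verts ha₂) (hAW.trans sdiff_subset) (hV i) (hV j) hAc
    c.preconnectedOn c.swap.preconnectedOn c.u_ne_p c.flip.u_ne_p c.ne (hA ?_) sdiff_disjoint
    sdiff_disjoint (hA (sdiff_subset.trans subset_union_left))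
    (hA (sdiff_subset.trans subset_union_right)) c.disjoint_vertexSet ?_ ?_ c.linked_p
    c.swap.linked_p (hpair ▸ c.flip.linked_p) (hpair ▸ c.flip.swap.linked_p) ?_ hli hlj
  · have := (mem_inter.1 c.a₁_mem).1
    have := (mem_inter.1 c.flip.a₁_mem).1
    simp only [insert_subset_iff, singleton_subset_iff, mem_union, c.mem_vertexSet]
    exact ⟨Or.inl ⟨a₁, ‹_›, c.isLink₁.inc_left⟩, Or.inl ⟨a₁, ‹_›, c.isLink₁.inc_right⟩,
      Or.inl ⟨a₂, ‹_›, c.isLink₂.inc_right⟩⟩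
  · exact ⟨a₁, ha₁, p, mem_singleton_self p, u, mem_singleton_self u, c.isLink₁.symm⟩
  · exact ⟨a₂, ha₂, q, mem_singleton_self q, u, mem_singleton_self u, c.isLink₂.symm⟩
  · exact ⟨e, c.mem_edges, v, hvA, u, mem_singleton_self u, c.isLink.symm⟩

end Obstruction

lemma cut_union {X Y : Finset α} (h : Disjoint X Y) : G.cut (X ∪ Y) = G.cut X ∆ G.cut Y := by
  ext e
  have h₁ : G.src e ∈ X → G.src e ∉ Y := fun hX => disjoint_left.1 h hX
  have h₂ : G.tgt e ∈ X → G.tgt e ∉ Y := fun hX => disjoint_left.1 h hX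
  simp only [mem_symmDiff, mem_cut, mem_union]
  tauto

lemma card_cut_pair {a b : α} (hab : a ≠ b) :
    #(G.cut {a, b}) + 2 * #(G.cut {a} ∩ G.cut {b}) = #(G.cut {a}) + #(G.cut {b}) := by
  have hunion : G.cut {a, b} = (G.cut {a} \ G.cut {b}) ∪ (G.cut {b} \ G.cut {a}) :=
    cut_union (disjoint_singleton.2 hab)
  have ha := card_sdiff_add_card_inter (G.cut {a}) (G.cut {b})
  have hb := card_sdiff_add_card_inter (G.cut {b}) (G.cut {a})
  rw [inter_comm] at hb
  rw [hunion, card_union_of_disjoint disjoint_sdiff_sdiff]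
  omega

lemma IsLink.mem_cut_inter_cut {a b : α} {e : β} (h : G.IsLink e a b) (he : e ∈ G.edges) :
    e ∈ G.cut {a} ∩ G.cut {b} :=
  mem_inter.2 ⟨mem_cut_singleton.2 ⟨he, h.inc_left⟩, mem_cut_singleton.2 ⟨he, h.inc_right⟩⟩

lemma IsLink.pair_subset_verts {a b : α} {e : β} (h : G.IsLink e a b) (he : e ∈ G.edges) :
    {a, b} ⊆ G.verts := by
  simp [insert_subset_iff, h.inc_left.mem_verts he, h.inc_right.mem_verts he]

lemma EssentiallyFourEdgeConnected.eq_of_isLink (h4 : G.EssentiallyFourEdgeConnected)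
    (hG : G.TwoEdgeConnected) (h3 : G.IsCubic) (hV : 3 ≤ #G.verts) {a b : α} {e f : β}
    (he : e ∈ G.edges) (hf : f ∈ G.edges) (hea : G.IsLink e a b) (hfa : G.IsLink f a b) :
    e = f := by
  by_contra hef
  have hsub := hea.pair_subset_verts he
  have hcard := card_cut_pair (G := G) (hea.ne he)
  have hinter : 2 ≤ #(G.cut {a} ∩ G.cut {b}) := by
    rw [← card_pair hef]
    exact card_le_card (by
      simp only [insert_subset_iff, singleton_subset_iff, hea.mem_cut_inter_cut he,
        hfa.mem_cut_inter_cut hf, and_self])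
  rw [h3 a (hea.inc_left.mem_verts he), h3 b (hea.inc_right.mem_verts he)] at hcard
  have hcompl : (G.verts \ {a, b}).Nonempty :=
    sdiff_nonempty.2 fun h => by
      have := (card_le_card h).trans card_le_two
      omega
  have htwo := hG {a, b} ⟨a, by simp [hea.inc_left.mem_verts he]⟩ hcompl
  obtain ⟨w, hw, hcw⟩ := h4.exists_cut_eq_singleton hsub (card_pos.1 (by omega)) (by omega)
  rw [hcw, h3 w hw] at hcard
  omega

lemma IsCircuit.exists_cut_eq {C D : Finset β} (hC : G.IsCircuit C) (hD : G.IsCircuit D) {p : α}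
    (hp : #(G.cut {p}) = 3) {a : β} (haC : a ∈ C) (haD : a ∈ D) (hap : G.Inc a p)
    (h : ∀ g ∈ C ∩ D, G.Inc g p → g = a) :
    ∃ b ∈ C \ D, ∃ c ∈ D \ C, G.cut {p} = {a, b, c} := by
  obtain ⟨b, hb, hba, hbp⟩ := hC.exists_ne_inc haC hap
  obtain ⟨c, hc, hca, hcp⟩ := hD.exists_ne_inc haD hap
  have hbD : b ∉ D := fun hbD => hba (h b (mem_inter.2 ⟨hb, hbD⟩) hbp)
  have hcC : c ∉ C := fun hcC => hca (h c (mem_inter.2 ⟨hcC, hc⟩) hcp)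
  have hbc : b ≠ c := fun hbc => hcC (hbc ▸ hb)
  refine ⟨b, mem_sdiff.2 ⟨hb, hbD⟩, c, mem_sdiff.2 ⟨hc, hcC⟩,
    (eq_of_subset_of_card_le ?_ ?_).symm⟩
  · simp [insert_subset_iff, mem_cut_singleton, hap, hbp, hcp, hC.subset_edges haC,
      hC.subset_edges hb, hD.subset_edges hc]
  · rw [hp, card_eq_three.2 ⟨a, b, c, hba.symm, hca.symm, hbc, rfl⟩]

lemma IsDoubleCover.exists_cut_eq_insert {ι : Type*} [Fintype ι] {S : ι → Finset β} {e : β} {u : α}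
    (hS : (G.deleteEdge e).IsDoubleCover S) (he : e ∈ G.edges) (heu : G.Inc e u)
    (hu : #(G.cut {u}) = 3) :
    ∃ i j a₁ a₂, i ≠ j ∧ a₁ ≠ a₂ ∧ a₁ ∈ S i ∩ S j ∧ a₂ ∈ S i ∩ S j ∧ G.cut {u} = {e, a₁, a₂} := by
  obtain ⟨a₁, ha₁, hne⟩ := exists_mem_ne (hu ▸ by norm_num : 1 < #(G.cut {u})) e
  obtain ⟨ha₁E, ha₁u⟩ := mem_cut_singleton.1 ha₁
  obtain ⟨i, j, hij, hfilter⟩ := Finset.card_eq_two.1 (hS.card_eq_two a₁ (mem_erase.2 ⟨hne, ha₁E⟩))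
  have hmem : ∀ k, a₁ ∈ S k ↔ k = i ∨ k = j := by simpa [Finset.ext_iff] using hfilter
  have hi := (hmem i).2 (Or.inl rfl)
  have hj := (hmem j).2 (Or.inr rfl)
  have hC := fun k => (hS.isCircuit k).of_deleteEdge
  have hnotMem : ∀ {k g}, g ∈ S k → g ≠ e := fun {k} _ hg =>
    ne_of_mem_erase ((hS.isCircuit k).subset_edges hg)
  obtain ⟨a₂, ha₂, ha₂₁, ha₂u⟩ := (hC i).exists_ne_inc hi ha₁u
  obtain ⟨a₃, ha₃, ha₃₁, ha₃u⟩ := (hC j).exists_ne_inc hj ha₁u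
  have hcut : G.cut {u} = {e, a₁, a₂} := by
    refine (eq_of_subset_of_card_le ?_ ?_).symm
    · simp [insert_subset_iff, mem_cut_singleton, he, heu, ha₁E, ha₁u, ha₂u,
        (hC i).subset_edges ha₂]
    · rw [hu, card_eq_three.2 ⟨e, a₁, a₂, hne.symm, (hnotMem ha₂).symm, ha₂₁.symm, rfl⟩]
  have h₃₂ : a₃ = a₂ :=
    ((ha₃u.eq_or_eq_or_eq ((hC j).subset_edges ha₃) hcut).resolve_left (hnotMem ha₃)).resolve_left
      ha₃₁
  exact ⟨i, j, a₁, a₂, hij, ha₂₁.symm, mem_inter.2 ⟨hi, hj⟩, mem_inter.2 ⟨ha₂, h₃₂ ▸ ha₃⟩, hcut⟩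

lemma IsEulerCover.exists_obstruction {ι : Type*} [Fintype ι] {S : ι → Finset β} {e : β} {u v : α}
    (hS : (G.deleteEdge e).IsEulerCover S) (hG : G.TwoEdgeConnected) (h3 : G.IsCubic)
    (h4 : G.EssentiallyFourEdgeConnected) (hV : 3 ≤ #G.verts) (he : e ∈ G.edges)
    (huv : G.IsLink e u v)
    (hnot : ∀ ⦃k f g⦄, f ∈ S k → G.Inc f u → g ∈ S k → ¬G.Inc g v) :
    ∃ i j a₁ a₂ p q b₁ c₁ b₂ c₂, G.Obstruction e u v S i j a₁ a₂ p q b₁ c₁ b₂ c₂ := by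
  have hC := fun k => (hS.isCircuit k).of_deleteEdge
  have hcommon := fun {i j g g'} => hS.inc_of_two_common (i := i) (j := j) (g := g) (g' := g')
    hG h3 h4 huv
  obtain ⟨i, j, a₁, a₂, hij, h₁₂, ha₁, ha₂, hcut⟩ := hS.exists_cut_eq_insert he huv.inc_left
    (h3 u (huv.inc_left.mem_verts he))
  obtain ⟨⟨ha₁i, ha₁j⟩, ⟨ha₂i, ha₂j⟩⟩ := And.intro (mem_inter.1 ha₁) (mem_inter.1 ha₂)
  have ha₁E := (hC i).subset_edges ha₁i
  have ha₂E := (hC i).subset_edges ha₂i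
  have ha₁u : G.Inc a₁ u := (mem_cut_singleton.1 (by simp [hcut] : a₁ ∈ G.cut {u})).2
  have ha₂u : G.Inc a₂ u := (mem_cut_singleton.1 (by simp [hcut] : a₂ ∈ G.cut {u})).2
  have hinter : S i ∩ S j = {a₁, a₂} := by
    refine Subset.antisymm (fun g hg => ?_) (by simp [insert_subset_iff, ha₁, ha₂])
    obtain ⟨hgi, hgj⟩ := mem_inter.1 hg
    by_contra hne
    simp only [mem_insert, mem_singleton, not_or] at hne
    rcases hcommon hij hne.1 hgi hgj ha₁i ha₁j with h | h
    · have hge : g ≠ e := ne_of_mem_erase ((hS.isCircuit i).subset_edges hgi)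
      have := h.1.eq_or_eq_or_eq ((hC i).subset_edges hgi) hcut
      tauto
    · exact hnot ha₁i ha₁u ha₁i h.2
  obtain ⟨p, hp⟩ := ha₁u.exists_isLink
  obtain ⟨q, hq⟩ := ha₂u.exists_isLink
  have hpq : p ≠ q := by
    rintro rfl
    exact h₁₂ (h4.eq_of_isLink hG h3 hV ha₁E ha₂E hp hq)
  obtain ⟨b₁, hb₁, c₁, hc₁, hcp⟩ := (hC i).exists_cut_eq (hC j)
    (h3 p (hp.inc_right.mem_verts ha₁E)) ha₁i ha₁j hp.inc_right fun g hg hgp => by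
      have := hq.ne ha₂E
      have := hp.ne ha₁E
      grind [IsLink.inc_iff]
  obtain ⟨b₂, hb₂, c₂, hc₂, hcq⟩ := (hC i).exists_cut_eq (hC j)
    (h3 q (hq.inc_right.mem_verts ha₂E)) ha₂i ha₂j hq.inc_right fun g hg hgq => by
      have := hq.ne ha₂E
      have := hp.ne ha₁E
      grind [IsLink.inc_iff]
  exact ⟨i, j, a₁, a₂, p, q, b₁, c₁, b₂, c₂, hG, h3, h4, hS.toIsDoubleCover, he, huv, hnot,
    fun _ _ _ _ => hcommon, hinter, hp, hq, hpq, hcut, hcp, hcq, hb₁, hc₁, hb₂, hc₂⟩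

/-- `G` has a double cover by `#E - #V + 2` circuits, the number of faces of a plane drawing. -/
def HasEulerCover (G : Multigraph α β) : Prop :=
  ∃ m, G.HasDoubleCover m ∧ m + #G.verts = #G.edges + 2

theorem HasEulerCover.of_deleteEdge {e : β} (h : (G.deleteEdge e).HasEulerCover)
    (hG : G.Admissible) (h3 : G.IsCubic) (h4 : G.EssentiallyFourEdgeConnected)
    (hV : 3 ≤ #G.verts) (he : e ∈ G.edges) : G.HasEulerCover := by
  obtain ⟨m, ⟨S, hS⟩, hm⟩ := h
  have hE : #(G.deleteEdge e).edges + 1 = #G.edges := card_erase_add_one he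
  have hVeq : (G.deleteEdge e).verts = G.verts := rfl
  refine ⟨m + 1, ?_, by rw [hVeq] at hm; omega⟩
  by_contra hno
  have huv := G.isLink_src_tgt e
  obtain ⟨_, _, _, _, _, _, _, _, _, _, c⟩ :=
    IsEulerCover.exists_obstruction ⟨hS, by rwa [Fintype.card_fin]⟩ hG.twoEdgeConnected h3 h4 hV
      he huv fun k f g hf hfu hg hgv => hno (by
        simpa using hS.hasDoubleCover_of_deleteEdge he huv hf hfu hg hgv)
  exact hG.not_hasK33Minor c.hasK33Minor

lemma Admissible.two_le_card_verts (hG : G.Admissible) : 2 ≤ #G.verts := by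
  obtain ⟨v, -, h3⟩ := hG.exists_branch
  obtain ⟨e, he⟩ := card_pos.1 (by omega : 0 < #(G.cut {v}))
  obtain ⟨heE, hev⟩ := mem_cut_singleton.1 he
  obtain ⟨w, hw⟩ := hev.exists_isLink
  exact card_pair (hw.ne heE) ▸ card_le_card (hw.pair_subset_verts heE)

lemma Admissible.exists_cut_eq_pair (hG : G.Admissible) {v : α} (hv : v ∈ G.verts)
    (h3 : #(G.cut {v}) ≠ 3) :
    ∃ w e f, e ≠ f ∧ G.cut {v} = {e, f} ∧ G.IsLink e v w ∧ ¬G.Inc f w := by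
  have htwo : #(G.cut {v}) = 2 := by
    have hle := hG.isSubcubic v hv
    have hge := hG.twoEdgeConnected {v} ⟨v, by simp [hv]⟩ (sdiff_nonempty.2 fun h => by
      have := (card_le_card h).trans_eq (card_singleton v)
      have := hG.two_le_card_verts
      omega)
    omega
  obtain ⟨e, f, hef, hcut⟩ := card_eq_two.1 htwo
  obtain ⟨heE, hev⟩ := mem_cut_singleton.1 (by simp [hcut] : e ∈ G.cut {v})
  obtain ⟨hfE, hfv⟩ := mem_cut_singleton.1 (by simp [hcut] : f ∈ G.cut {v})
  obtain ⟨w, hw⟩ := hev.exists_isLink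
  refine ⟨w, e, f, hef, hcut, hw, fun hfw => ?_⟩
  have hfvw := hfv.isLink_of_ne hfw (hw.ne heE)
  have hinter : G.cut {v} ∩ G.cut {w} = {e, f} :=
    Subset.antisymm (hcut ▸ inter_subset_left) (by
      simp only [insert_subset_iff, singleton_subset_iff, hw.mem_cut_inter_cut heE,
        hfvw.mem_cut_inter_cut hfE, and_self])
  have hcard := card_cut_pair (G := G) (hw.ne heE)
  rw [hinter, card_pair hef, htwo] at hcard
  have hw3 := hG.isSubcubic w (hw.inc_right.mem_verts heE)
  rcases (G.verts \ {v, w}).eq_empty_or_nonempty with hempty | hne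
  · have hV : {v, w} = G.verts :=
      Subset.antisymm (hw.pair_subset_verts heE) (sdiff_eq_empty_iff_subset.1 hempty)
    obtain ⟨x, hx, hx3⟩ := hG.exists_branch
    rw [hV, cut_verts, card_empty] at hcard
    rw [← hV, mem_insert, mem_singleton] at hx
    rcases hx with rfl | rfl <;> omega
  · have := hG.twoEdgeConnected {v, w} ⟨v, by simp [hv]⟩ hne
    omega

section ContractPair

variable {v w : α} {e f : β} (hv : G.cut {v} = {e, f}) (hvw : G.IsLink e v w)
  (hfw : ¬G.Inc f w)
include hv hvw hfw

lemma card_cut_pair_of_cut_eq_pair (hef : e ≠ f) : #(G.cut {v, w}) = #(G.cut {w}) := by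
  have heE : e ∈ G.edges := cut_subset_edges {v} (by simp [hv])
  have hinter : G.cut {v} ∩ G.cut {w} = {e} := by
    ext g
    have := hvw.inc_right
    simp only [hv, mem_inter, mem_insert, mem_singleton, mem_cut_singleton]
    grind
  have hcard := card_cut_pair (G := G) (hvw.ne heE)
  rw [hinter, hv, card_pair hef, card_singleton] at hcard
  omega

lemma Admissible.contract_pair (hG : G.Admissible) (hef : e ≠ f) :
    (G.contract {v, w} w).Admissible := by
  have heE : e ∈ G.edges := cut_subset_edges {v} (by simp [hv])
  obtain ⟨hfE, hfv⟩ := mem_cut_singleton.1 (by simp [hv] : f ∈ G.cut {v})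
  have hcut := card_cut_pair_of_cut_eq_pair hv hvw hfw hef
  have hle : #(G.cut {v, w}) ≤ 3 := hcut ▸ hG.isSubcubic w (hvw.inc_right.mem_verts heE)
  have hsub := hvw.pair_subset_verts heE
  have hne : (G.verts \ {v, w}).Nonempty := by
    obtain ⟨b, hb⟩ := hfv.exists_isLink
    refine ⟨b, mem_sdiff.2 ⟨hb.inc_right.mem_verts hfE, ?_⟩⟩
    simp only [mem_insert, mem_singleton, not_or]
    exact ⟨(hb.ne hfE).symm, fun h => hfw (h ▸ hb.inc_right)⟩
  refine hG.contract hsub (by simp) hle (hG.twoEdgeConnected.preconnectedOn hsub hne hle) ?_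
  obtain ⟨x, hx, hx3⟩ := hG.exists_branch
  by_cases hxw : x = w
  · exact Or.inl (by rw [hcut, ← hxw, hx3])
  · have hxv : x ≠ v := by
      rintro rfl
      rw [hv, card_pair hef] at hx3
      omega
    exact Or.inr ⟨x, by simp [hx, hxv, hxw], hx3⟩

lemma card_contract_pair :
    #(G.contract {v, w} w).verts + 1 = #G.verts ∧
      #(G.contract {v, w} w).edges + 1 = #G.edges := by
  have heE : e ∈ G.edges := cut_subset_edges {v} (by simp [hv])
  have hV := card_verts_contract (hvw.pair_subset_verts heE) (by simp : w ∈ ({v, w} : Finset α))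
  rw [card_pair (hvw.ne heE)] at hV
  refine ⟨by omega, ?_⟩
  rw [edges_contract_pair hv hvw hfw, card_erase_add_one heE]

lemma HasEulerCover.of_contract_pair (hef : e ≠ f) (h : (G.contract {v, w} w).HasEulerCover) :
    G.HasEulerCover := by
  obtain ⟨m, hm, hcard⟩ := h
  have := card_contract_pair hv hvw hfw
  exact ⟨m, hm.of_contract_pair hef hv hvw hfw, by omega⟩

end ContractPair

lemma Admissible.contract_of_isCubic (hG : G.Admissible) (h3 : G.IsCubic) {X : Finset α} {x : α}
    (hX : X ⊆ G.verts) (hx : x ∈ X) (hne : (G.verts \ X).Nonempty) (hc : #(G.cut X) ≤ 3) :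
    (G.contract X x).Admissible :=
  hG.contract hX hx hc (hG.twoEdgeConnected.preconnectedOn hX hne hc)
    (Or.inr (hne.imp fun v hv => ⟨hv, h3 v (mem_sdiff.1 hv).1⟩))

lemma Admissible.exists_separation (hG : G.Admissible) (h3 : G.IsCubic)
    (h4 : ¬G.EssentiallyFourEdgeConnected) {y : α} (hy : y ∈ G.verts) :
    ∃ X ⊆ G.verts, y ∈ X ∧ ∃ z ∈ G.verts \ X, 2 ≤ #X ∧ 2 ≤ #(G.verts \ X) ∧
      2 ≤ #(G.cut X) ∧ #(G.cut X) ≤ 3 ∧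
      (G.contract X y).Admissible ∧ (G.contract (G.verts \ X) z).Admissible := by
  obtain ⟨X, hX, hyX, hX2, hY2, hc⟩ : ∃ X ⊆ G.verts, y ∈ X ∧ 2 ≤ #X ∧ 2 ≤ #(G.verts \ X) ∧
      #(G.cut X) ≤ 3 := by
    simp only [EssentiallyFourEdgeConnected, not_forall, not_le] at h4
    obtain ⟨X, hX, hX2, hY2, hc⟩ := h4
    by_cases hyX : y ∈ X
    · exact ⟨X, hX, hyX, hX2, hY2, by omega⟩
    · exact ⟨G.verts \ X, sdiff_subset, mem_sdiff.2 ⟨hy, hyX⟩, hY2,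
        by rwa [Finset.sdiff_sdiff_eq_self hX], by rw [cut_sdiff_verts]; omega⟩
  obtain ⟨z, hz⟩ := card_pos.1 (by omega : 0 < #(G.verts \ X))
  refine ⟨X, hX, hyX, z, hz, hX2, hY2, hG.twoEdgeConnected X ⟨y, by simp [hy, hyX]⟩ ⟨z, hz⟩, hc,
    hG.contract_of_isCubic h3 hX hyX ⟨z, hz⟩ hc,
    hG.contract_of_isCubic h3 sdiff_subset hz ?_ (by rwa [cut_sdiff_verts])⟩
  rw [Finset.sdiff_sdiff_eq_self hX]
  exact ⟨y, hyX⟩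

lemma HasEulerCover.glue {X : Finset α} {x y : α} (hX : X ⊆ G.verts) (hx : x ∈ X)
    (hy : y ∈ G.verts \ X) (h2 : 2 ≤ #(G.cut X)) (h3 : #(G.cut X) ≤ 3)
    (h : (G.contract X x).HasEulerCover) (h' : (G.contract (G.verts \ X) y).HasEulerCover) :
    G.HasEulerCover := by
  obtain ⟨m₁, hm₁, h₁⟩ := h
  obtain ⟨m₂, hm₂, h₂⟩ := h'
  obtain ⟨m, hm, hmm⟩ := hm₁.glue hm₂ hX hx hy h2 h3
  have hV := card_verts_contract hX hx
  have hV' := card_verts_contract sdiff_subset hy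
  have hE := card_edges_contract_add hx hy
  have hcard := card_sdiff_add_card_eq_card hX
  exact ⟨m, hm, by omega⟩

theorem Admissible.hasEulerCover (hG : G.Admissible) : G.HasEulerCover := by
  induction hn : #G.verts + #G.edges using Nat.strong_induction_on generalizing G with
  | _ n ih =>
  by_cases h3 : G.IsCubic
  · by_cases h4 : G.EssentiallyFourEdgeConnected
    · rcases hG.two_le_card_verts.eq_or_lt with hV | hV
      · obtain ⟨htheta, hE⟩ := hasDoubleCover_of_card_verts_eq_two hV.symm h3
        exact ⟨3, htheta, by omega⟩
      · obtain ⟨v, -, hv3⟩ := hG.exists_branch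
        obtain ⟨e, he⟩ := card_pos.1 (by omega : 0 < #(G.cut {v}))
        have heE := cut_subset_edges _ he
        have hE : #(G.deleteEdge e).edges + 1 = #G.edges := card_erase_add_one heE
        have hVeq : #(G.deleteEdge e).verts = #G.verts := rfl
        exact (ih _ (by omega) (hG.deleteEdge h3 h4 hV) rfl).of_deleteEdge hG h3 h4 hV heE
    · obtain ⟨v, hv, -⟩ := hG.exists_branch
      obtain ⟨X, hX, hv, z, hz, hX2, hY2, hc2, hc3, hGX, hGY⟩ := hG.exists_separation h3 h4 hv
      have hV := card_verts_contract hX hv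
      have hV' := card_verts_contract sdiff_subset hz
      have hE := card_le_card (edges_contract_subset (G := G) (X := X) (x := v))
      have hE' := card_le_card (edges_contract_subset (G := G) (X := G.verts \ X) (x := z))
      have hcard := card_sdiff_add_card_eq_card hX
      exact HasEulerCover.glue hX hv hz hc2 hc3 (ih _ (by omega) hGX rfl) (ih _ (by omega) hGY rfl)
  · simp only [IsCubic, not_forall] at h3
    obtain ⟨v, hv, hv3⟩ := h3
    obtain ⟨w, e, f, hef, hcut, hvw, hfw⟩ := hG.exists_cut_eq_pair hv hv3
    have := card_contract_pair hcut hvw hfw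
    exact HasEulerCover.of_contract_pair hcut hvw hfw hef
      (ih _ (by omega) (hG.contract_pair hcut hvw hfw hef) rfl)

/-! ### Merging, colouring and measuring circuits -/

lemma isEven_or_isEven_insert {A : Finset β} {h : β} (hA : A ⊆ G.edges) (hh : h ∈ G.edges)
    (hhA : h ∉ A) (hzero : ∀ v, ¬G.Inc h v → G.boundary A v = 0) :
    G.IsEven A ∨ G.IsEven (insert h A) := by
  have hends : G.boundary A (G.src h) = G.boundary A (G.tgt h) := by
    have hsum := sum_verts_boundary hA
    rw [← sum_subset ((isLink_src_tgt h).pair_subset_verts hh) fun v _ hv => hzero v ?_,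
      sum_pair (G.src_ne_tgt h hh)] at hsum
    · exact CharTwo.add_eq_zero.1 hsum
    · simpa [(isLink_src_tgt h).inc_iff] using hv
  have hcases : ∀ a : ZMod 2, a = 0 ∨ a = 1 := by decide
  rcases hcases (G.boundary A (G.src h)) with h0 | h1
  · refine Or.inl fun v => ?_
    by_cases hv : G.Inc h v
    · rcases hv with rfl | rfl
      exacts [h0, hends ▸ h0]
    · exact hzero v hv
  · refine Or.inr fun v => ?_
    rw [insert_eq, boundary_union (disjoint_singleton_left.2 hhA), Multigraph.boundary_singleton]
    by_cases hv : G.Inc h v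
    · have hne := G.src_ne_tgt h hh
      rcases hv with rfl | rfl
      · rw [h1, if_pos rfl, if_neg hne.symm, add_zero, CharTwo.add_self_eq_zero]
      · rw [← hends, h1, if_neg hne, if_pos rfl, zero_add, CharTwo.add_self_eq_zero]
    · rw [hzero v hv]
      unfold Inc at hv
      simp_all

lemma IsCircuit.eq_empty_of_isEven {C A : Finset β} {h : β} (hC : G.IsCircuit C) (hA : A ⊆ C)
    (hAe : G.IsEven A) (hh : h ∈ C) (hhA : h ∉ A) : A = ∅ := by
  by_contra hne
  exact hhA (hC.eq_of_subset A hA (nonempty_iff_ne_empty.2 hne) hAe ▸ hh)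

section Merge

variable {C D : Finset β} {h : β} (hsub : G.IsSubcubic) (hC : G.IsCircuit C)
  (hD : G.IsCircuit D) (hCD : C ∩ D = {h})
include hsub hC hD hCD

lemma IsCircuit.isEven_inter_or_isEven_insert {F : Finset β} (hF : F ⊆ C ∆ D)
    (hFe : G.IsEven F) : G.IsEven (F ∩ C) ∨ G.IsEven (insert h (F ∩ C)) := by
  have hh : h ∈ C ∩ D := hCD ▸ mem_singleton_self h
  have hmem : ∀ g ∈ F, (g ∈ C ∧ g ∉ D) ∨ (g ∈ D ∧ g ∉ C) := fun g hg => mem_symmDiff.1 (hF hg)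
  have hFD : F \ (F ∩ C) = F ∩ D := by grind
  refine isEven_or_isEven_insert (inter_subset_right.trans hC.subset_edges)
    (hC.subset_edges (mem_inter.1 hh).1) (by grind) fun v hv => ?_
  by_cases hvC : ∃ g ∈ F ∩ C, G.Inc g v
  · obtain ⟨g, hg, hgv⟩ := hvC
    have hv3 := hsub v (hgv.mem_verts (hC.subset_edges (mem_inter.1 hg).2))
    have hbd := boundary_sdiff (G := G) (inter_subset_left (s₁ := F) (s₂ := C)) v
    rw [hFe v, zero_add, hFD] at hbd
    rw [← hbd]
    refine boundary_eq_zero_of_not_inc fun g' hg' hgv' => ?_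
    obtain ⟨k, hkC, hkD, hkv⟩ :=
      hC.exists_common_inc hD hv3 (mem_inter.1 hg).2 hgv (mem_inter.1 hg').2 hgv'
    have hk : k = h := mem_singleton.1 (hCD ▸ mem_inter.2 ⟨hkC, hkD⟩)
    exact hv (hk ▸ hkv)
  · exact boundary_eq_zero_of_not_inc (by simpa using hvC)

lemma IsCircuit.symmDiff : G.IsCircuit (C ∆ D) := by
  have hh : h ∈ C ∧ h ∈ D := mem_inter.1 (by rw [hCD, mem_singleton])
  have hunique : ∀ g, g ∈ C → g ∈ D → g = h := fun g hgC hgD =>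
    mem_singleton.1 (hCD ▸ mem_inter.2 ⟨hgC, hgD⟩)
  refine ⟨?_, ?_, hC.isEven.symmDiff hD.isEven, fun F hF hne hFe => ?_⟩
  · exact symmDiff_le_sup.trans (union_subset hC.subset_edges hD.subset_edges)
  · obtain ⟨g, hg, hgh⟩ := exists_mem_ne hC.two_le_card h
    exact ⟨g, mem_symmDiff.2 (Or.inl ⟨hg, fun hgD => hgh (hunique g hg hgD)⟩)⟩
  · have hmem : ∀ g ∈ F, (g ∈ C ∧ g ∉ D) ∨ (g ∈ D ∧ g ∉ C) := fun g hg => mem_symmDiff.1 (hF hg)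
    have hhF : h ∉ F := fun hhF => by grind
    have hFD : F \ (F ∩ C) = F ∩ D := by grind
    rcases hC.isEven_inter_or_isEven_insert hsub hD hCD hF hFe with heven | heven
    · have hFC := hC.eq_empty_of_isEven inter_subset_right heven hh.1 (by grind)
      rw [hFC, sdiff_empty] at hFD
      have := hD.eq_empty_of_isEven (hFD ▸ inter_subset_right) hFe hh.2 hhF
      exact absurd this hne.ne_empty
    · have hinsC : insert h (F ∩ C) = C := hC.eq_of_subset _
        (insert_subset hh.1 inter_subset_right) (insert_nonempty _ _) heven
      have hinsD : insert h (F ∩ D) = D := hD.eq_of_subset _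
        (insert_subset hh.2 inter_subset_right) (insert_nonempty _ _) (by
          convert hFe.symmDiff heven using 1
          ext g
          rw [mem_symmDiff]
          grind)
      refine hF.antisymm fun g hg => ?_
      rw [mem_symmDiff] at hg
      grind

end Merge

lemma IsCircuit.symmDiff_biUnion {ι : Type*} {C : Finset β} {D : ι → Finset β} {T : Finset ι}
    (hsub : G.IsSubcubic) (hC : G.IsCircuit C) (hD : ∀ i ∈ T, G.IsCircuit (D i))
    (hCD : ∀ i ∈ T, ∃ h, C ∩ D i = {h}) (hdisj : (T : Set ι).PairwiseDisjoint D) :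
    G.IsCircuit (C ∆ T.biUnion D) := by
  induction T using Finset.induction_on with
  | empty => rwa [biUnion_empty, ← bot_eq_empty, symmDiff_bot]
  | insert i T hi ih =>
    rw [coe_insert, Set.pairwiseDisjoint_insert_of_notMem (by simpa)] at hdisj
    obtain ⟨h, hh⟩ := hCD i (mem_insert_self i T)
    have hDi : Disjoint (D i) (T.biUnion D) := (disjoint_biUnion_right _ _ _).2 hdisj.2
    have hCT := ih (fun j hj => hD j (mem_insert_of_mem hj))
      (fun j hj => hCD j (mem_insert_of_mem hj)) hdisj.1
    have hassoc : C ∆ (insert i T).biUnion D = (C ∆ T.biUnion D) ∆ D i := by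
      rw [biUnion_insert, symmDiff_assoc, symmDiff_comm _ (D i), hDi.symmDiff_eq_sup, sup_eq_union]
    rw [hassoc]
    refine hCT.symmDiff hsub (hD i (mem_insert_self i T)) (h := h) (hh ▸ ?_)
    ext x
    have hx : x ∈ D i → x ∉ T.biUnion D := fun hx => disjoint_left.1 hDi hx
    simp only [mem_inter, mem_symmDiff]
    tauto

lemma exists_fin_coloring {γ : Type*} {n : ℕ} {r : γ → γ → Prop} [DecidableRel r]
    (hr : Std.Symm r) {C : Finset γ} (hC : ∀ a ∈ C, #{b ∈ C | r a b} ≤ n) :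
    ∃ col : γ → Fin (n + 1), ∀ a ∈ C, ∀ b ∈ C, a ≠ b → r a b → col a ≠ col b := by
  suffices h : ∀ T ⊆ C, ∃ col : γ → Fin (n + 1),
      ∀ a ∈ T, ∀ b ∈ T, a ≠ b → r a b → col a ≠ col b from h C Subset.rfl
  intro T hT
  induction T using Finset.induction_on with
  | empty => exact ⟨fun _ => 0, by simp⟩
  | insert x T hx ih =>
    obtain ⟨col, hcol⟩ := ih ((subset_insert x T).trans hT)
    obtain ⟨k, -, hk⟩ : ∃ k ∈ univ, k ∉ ({b ∈ C | r x b}.image col) := by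
      refine exists_mem_notMem_of_card_lt_card (card_image_le.trans_lt ?_)
      rw [card_univ, Fintype.card_fin]
      exact Nat.lt_succ_of_le (hC x (hT (mem_insert_self x T)))
    have hkx : ∀ b ∈ T, r x b → col b ≠ k := fun b hb hrb hbk =>
      hk (mem_image.2 ⟨b, mem_filter.2 ⟨hT (mem_insert_of_mem hb), hrb⟩, hbk⟩)
    refine ⟨Function.update col x k, fun a ha b hb hab hrab => ?_⟩
    rcases mem_insert.1 ha with rfl | haT <;> rcases mem_insert.1 hb with rfl | hbT
    · exact absurd rfl hab
    · simpa [Function.update_of_ne hab.symm] using (hkx b hbT hrab).symm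
    · simpa [Function.update_of_ne hab] using hkx a haT (hr.symm _ _ hrab)
    · rw [Function.update_of_ne (ne_of_mem_of_not_mem haT hx),
        Function.update_of_ne (ne_of_mem_of_not_mem hbT hx)]
      exact hcol a haT b hbT hab hrab

lemma IsCircuit.exists_coloring {C : Finset β} (hC : G.IsCircuit C) (hsub : G.IsSubcubic) :
    ∃ col : β → Fin 3, ∀ g ∈ C, ∀ g' ∈ C, g ≠ g' → (∃ v, G.Inc g v ∧ G.Inc g' v) →
      col g ≠ col g' := by
  let r : β → β → Prop := fun g g' => g ≠ g' ∧ ∃ v, G.Inc g v ∧ G.Inc g' v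
  suffices hdeg : ∀ g ∈ C, #{g' ∈ C | r g g'} ≤ 2 by
    obtain ⟨col, hcol⟩ := exists_fin_coloring (r := r) (n := 2)
      ⟨fun g g' ⟨hne, v, hv, hv'⟩ => ⟨hne.symm, v, hv', hv⟩⟩ hdeg
    exact ⟨col, fun g hg g' hg' hne hv => hcol g hg g' hg' hne ⟨hne, hv⟩⟩
  intro g hg
  have hone : ∀ v, G.Inc g v → #((C ∩ G.cut {v}).erase g) = 1 := fun v hv => by
    rw [card_erase_of_mem (hC.mem_inter_cut hg hv),
      hC.card_inter_cut_eq_two (hsub v (hv.mem_verts (hC.subset_edges hg))) hg hv]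
  calc #{g' ∈ C | r g g'}
      ≤ #((C ∩ G.cut {G.src g}).erase g ∪ (C ∩ G.cut {G.tgt g}).erase g) := by
        refine card_le_card fun b hb => ?_
        obtain ⟨hb, hne, v, hgv, hbv⟩ := mem_filter.1 hb
        have hmem := hC.mem_inter_cut hb hbv
        rcases hgv with rfl | rfl
        exacts [mem_union_left _ (mem_erase.2 ⟨hne.symm, hmem⟩),
          mem_union_right _ (mem_erase.2 ⟨hne.symm, hmem⟩)]
    _ ≤ 1 + 1 := (card_union_le _ _).trans
        (add_le_add (hone _ (Or.inl rfl)).le (hone _ (Or.inr rfl)).le)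

lemma sum_card_inter_cut {F : Finset β} (hF : F ⊆ G.edges) :
    ∑ v ∈ G.verts, #(F ∩ G.cut {v}) = 2 * #F := by
  have hstar : ∀ v, F ∩ G.cut {v} = {e ∈ F | G.Inc e v} := fun v => by
    ext e
    rw [mem_inter, mem_filter, mem_cut_singleton]
    exact and_congr_right fun he => and_iff_right (hF he)
  simp only [hstar]
  rw [mul_comm]
  refine (sum_card_bipartiteAbove_eq_sum_card_bipartiteBelow (fun v e => G.Inc e v)).trans
    (sum_const_nat fun e he => ?_)
  have hpair : ({v ∈ G.verts | G.Inc e v} : Finset α) = {G.src e, G.tgt e} := by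
    have := (isLink_src_tgt (G := G) e).pair_subset_verts (hF he)
    ext v
    rw [mem_filter, (isLink_src_tgt e).inc_iff]
    grind
  rw [bipartiteBelow, hpair, card_pair (G.src_ne_tgt e (hF he))]

lemma IsCircuit.card_vertexSet {C : Finset β} (hC : G.IsCircuit C) (hsub : G.IsSubcubic) :
    #(G.vertexSet C) = #C := by
  have hV : G.vertexSet C ⊆ G.verts := filter_subset _ _
  have htwo : ∀ v ∈ G.vertexSet C, #(C ∩ G.cut {v}) = 2 := fun v hv => by
    obtain ⟨f, hf, hfv⟩ := (mem_vertexSet hC.subset_edges).1 hv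
    exact hC.card_inter_cut_eq_two (hsub v (hV hv)) hf hfv
  have hsum := sum_card_inter_cut hC.subset_edges
  rw [← sum_subset hV fun v _ hv => ?_, sum_const_nat htwo] at hsum
  · omega
  · rw [card_eq_zero, eq_empty_iff_forall_notMem]
    intro f hf
    rw [mem_inter, mem_cut_singleton] at hf
    exact hv ((mem_vertexSet hC.subset_edges).2 ⟨f, hf.1, hf.2.2⟩)

lemma IsCircuit.card_cut_vertexSet_le {C : Finset β} (hC : G.IsCircuit C)
    (hsub : G.IsSubcubic) : #(G.cut (G.vertexSet C)) ≤ #C := by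
  have hcover : G.cut (G.vertexSet C) ⊆ (G.vertexSet C).biUnion fun v => G.cut {v} \ C := by
    intro e he
    obtain ⟨a, ha, b, hb, hab⟩ := exists_isLink_of_mem_cut he
    refine mem_biUnion.2 ⟨a, ha, mem_sdiff.2
      ⟨mem_cut_singleton.2 ⟨cut_subset_edges _ he, hab.inc_left⟩, fun heC => hb ?_⟩⟩
    exact (mem_vertexSet hC.subset_edges).2 ⟨e, heC, hab.inc_right⟩
  refine (card_le_card hcover).trans ((card_biUnion_le_card_mul _ _ 1 fun v hv => ?_).trans ?_)
  · obtain ⟨f, hf, hfv⟩ := (mem_vertexSet hC.subset_edges).1 hv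
    have hv3 := hsub v (hfv.mem_verts (hC.subset_edges hf))
    have htwo := hC.card_inter_cut_eq_two hv3 hf hfv
    have := card_sdiff_add_card_inter (G.cut {v}) C
    rw [inter_comm] at this
    omega
  · rw [mul_one, hC.card_vertexSet hsub]

lemma IsCircuit.four_le_card_or_card_verts_le {C : Finset β} (hC : G.IsCircuit C)
    (hsub : G.IsSubcubic) (h4 : G.EssentiallyFourEdgeConnected) :
    4 ≤ #C ∨ #G.verts ≤ #C + 1 := by
  have hV : G.vertexSet C ⊆ G.verts := filter_subset _ _
  have hcard := hC.card_vertexSet hsub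
  have hcut := hC.card_cut_vertexSet_le hsub
  have htwo := hC.two_le_card
  have hcompl := card_sdiff_add_card_eq_card hV
  by_contra! hshort
  have := h4 _ hV (by omega) (by omega)
  omega

/-! ### Improving on Euler's formula -/

section MergeColor

variable {ι : Type*} {S : ι → Finset β}

/-- The member `S c` merged with its neighbours `S (n g)` across the edges `g` of colour `k`. The
three sets obtained this way replace `S c` and all its neighbours in a double cover. -/
noncomputable def mergeColor (S : ι → Finset β) (c : ι) (n : β → ι) (col : β → Fin 3)
    (k : Fin 3) : Finset β :=
  S c ∆ {g ∈ S c | col g = k}.biUnion (S ∘ n)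

variable {c : ι} {n : β → ι} {col : β → Fin 3} {e : β}

lemma mem_mergeColor_of_mem (hn : ∀ g ∈ S c, S c ∩ S (n g) = {g}) (he : e ∈ S c) {k : Fin 3} :
    e ∈ mergeColor S c n col k ↔ k ≠ col e := by
  have heg : ∀ g ∈ S c, e ∈ S (n g) ↔ e = g := fun g hg => by
    rw [← mem_singleton, ← hn g hg, mem_inter, and_iff_right he]
  simp only [mergeColor, mem_symmDiff, mem_biUnion, mem_filter, Function.comp_apply]
  grind

lemma mem_mergeColor_of_notMem (he : e ∉ S c) {k : Fin 3} :
    e ∈ mergeColor S c n col k ↔ k ∈ {g ∈ S c | e ∈ S (n g)}.image col := by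
  simp only [mergeColor, mem_symmDiff, mem_biUnion, mem_filter, mem_image, Function.comp_apply]
  grind

lemma injOn_of_inter_eq_singleton (hn : ∀ g ∈ S c, S c ∩ S (n g) = {g}) :
    Set.InjOn n (S c) := fun g hg g' hg' h =>
  singleton_injective (by rw [← hn g hg, ← hn g' hg', h])

end MergeColor

section Cover

variable {ι : Type*} [Fintype ι] {S : ι → Finset β}

lemma IsEulerCover.exists_eq_cut_singleton (hS : G.IsEulerCover S) (hG : G.TwoEdgeConnected)
    (h3 : G.IsCubic) (h4 : G.EssentiallyFourEdgeConnected) {T : Finset β} (hT : T ⊆ G.edges)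
    (hne : T.Nonempty) (hT3 : #T ≤ 3) (heven : ∀ i, Even #(T ∩ S i)) :
    ∃ v ∈ G.verts, T = G.cut {v} := by
  obtain ⟨X, hX, rfl⟩ := hS.exists_cut_eq hG h3.isSubcubic hT heven
  exact h4.exists_cut_eq_singleton hX hne hT3

lemma IsEulerCover.eq_of_two_common (hS : G.IsEulerCover S) (hG : G.TwoEdgeConnected)
    (h3 : G.IsCubic) (h4 : G.EssentiallyFourEdgeConnected) {i j : ι} {g g' : β} (hij : i ≠ j)
    (hgi : g ∈ S i) (hgj : g ∈ S j) (hgi' : g' ∈ S i) (hgj' : g' ∈ S j) : g = g' := by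
  by_contra hgg
  have hcard : #{g, g'} = 2 := card_pair hgg
  obtain ⟨v, hv, hT⟩ := hS.exists_eq_cut_singleton hG h3 h4 (T := {g, g'})
    (insert_subset ((hS.isCircuit i).subset_edges hgi)
      (singleton_subset_iff.2 ((hS.isCircuit i).subset_edges hgi')))
    (insert_nonempty _ _) (by omega) (hS.even_card_inter_of_two_common hij hgg hgi hgj hgi' hgj')
  rw [hT, h3 v hv] at hcard
  omega

lemma IsEulerCover.exists_inc_inc (hS : G.IsEulerCover S) (hG : G.TwoEdgeConnected)
    (h3 : G.IsCubic) (h4 : G.EssentiallyFourEdgeConnected) {i j k : ι} {x y z : β} (hij : i ≠ j)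
    (hik : i ≠ k) (hjk : j ≠ k) (hxi : x ∈ S i) (hxj : x ∈ S j) (hyi : y ∈ S i) (hyk : y ∈ S k)
    (hzj : z ∈ S j) (hzk : z ∈ S k) : ∃ v, G.Inc x v ∧ G.Inc y v := by
  have hx : ∀ l, x ∈ S l ↔ l = i ∨ l = j := fun l => hS.mem_iff hij hxi hxj
  have hy : ∀ l, y ∈ S l ↔ l = i ∨ l = k := fun l => hS.mem_iff hik hyi hyk
  have hz : ∀ l, z ∈ S l ↔ l = j ∨ l = k := fun l => hS.mem_iff hjk hzj hzk
  have hxy : x ≠ y := by grind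
  have hxz : x ≠ z := by grind
  have hyz : y ≠ z := by grind
  have heven : ∀ l, Even #({x, y, z} ∩ S l) := fun l => by
    by_cases hl : l = i ∨ l = j ∨ l = k
    · suffices h : #({x, y, z} ∩ S l) = 2 from h ▸ even_two
      rw [Finset.card_eq_two]
      rcases hl with rfl | rfl | rfl
      exacts [⟨x, y, hxy, by grind⟩, ⟨x, z, hxz, by grind⟩, ⟨y, z, hyz, by grind⟩]
    · rw [disjoint_iff_inter_eq_empty.1 ?_, card_empty]
      · exact Even.zero
      · simp only [disjoint_insert_left, disjoint_singleton_left, hx, hy, hz]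
        tauto
  obtain ⟨v, -, hT⟩ := hS.exists_eq_cut_singleton hG h3 h4 (T := {x, y, z})
    (by simp only [insert_subset_iff, singleton_subset_iff, (hS.isCircuit i).subset_edges hxi,
      (hS.isCircuit i).subset_edges hyi, (hS.isCircuit j).subset_edges hzj, and_self])
    (insert_nonempty _ _) card_le_three heven
  have hmem : ∀ g ∈ ({x, y, z} : Finset β), G.Inc g v := fun g hg =>
    (mem_cut_singleton.1 (hT ▸ hg)).2
  exact ⟨v, hmem x (by simp), hmem y (by simp)⟩

lemma IsDoubleCover.hasDoubleCover_of_replace {κ : Type*} [Fintype κ] {R : Finset ι}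
    {D : κ → Finset β} (hS : G.IsDoubleCover S) (hD : ∀ k, G.IsCircuit (D k))
    (hcount : ∀ e ∈ G.edges, #{k | e ∈ D k} = #{i ∈ R | e ∈ S i}) :
    ∃ m, G.HasDoubleCover m ∧ m + #R = Fintype.card ι + Fintype.card κ := by
  have hcover : G.IsDoubleCover (Sum.elim (fun i : {i // i ∉ R} => S i) D) := by
    refine ⟨Sum.rec (fun i => hS.isCircuit i) hD, fun e he => ?_⟩
    have hcompl : #{i : {i // i ∉ R} | e ∈ S i} = #{i ∈ Rᶜ | e ∈ S i} := by
      rw [← card_map (Function.Embedding.subtype _)]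
      congr 1
      ext i
      simp [and_comm]
    have hsplit : #{i ∈ R | e ∈ S i} + #{i ∈ Rᶜ | e ∈ S i} = #{i | e ∈ S i} := by
      rw [← card_union_of_disjoint (disjoint_filter_filter disjoint_compl_right), ← filter_union,
        union_compl]
    rw [card_filter, Fintype.sum_sum_type, ← card_filter, ← card_filter]
    change #{i : {i // i ∉ R} | e ∈ S i} + #{k | e ∈ D k} = 2
    rw [hcompl, hcount e he, add_comm, hsplit, hS.card_eq_two e he]
  refine ⟨_, hcover.hasDoubleCover, ?_⟩
  have hcard : Fintype.card {i // i ∉ R} + #R = Fintype.card ι := by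
    rw [Fintype.card_subtype_compl, Fintype.card_coe, Nat.sub_add_cancel (card_le_univ R)]
  rw [Fintype.card_sum]
  omega

section MergeColor

variable {c : ι} {n : β → ι} {col : β → Fin 3}
  (hS : G.IsDoubleCover S) (hc : ∀ g ∈ S c, n g ≠ c)
  (hn : ∀ g ∈ S c, S c ∩ S (n g) = {g})
  (hcol : ∀ k, (({g ∈ S c | col g = k} : Finset β) : Set β).PairwiseDisjoint (S ∘ n))
include hS hn hcol

lemma IsDoubleCover.isCircuit_mergeColor (hsub : G.IsSubcubic) (k : Fin 3) :
    G.IsCircuit (mergeColor S c n col k) :=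
  (hS.isCircuit c).symmDiff_biUnion hsub (fun _ _ => hS.isCircuit _)
    (fun g hg => ⟨g, hn g (mem_filter.1 hg).1⟩) (hcol k)

include hc

lemma IsDoubleCover.card_filter_mem_mergeColor (e : β) :
    #{k | e ∈ mergeColor S c n col k} = #{i ∈ insert c ((S c).image n) | e ∈ S i} := by
  have hinj := injOn_of_inter_eq_singleton hn
  by_cases he : e ∈ S c
  · have hmem : e ∈ S (n e) := (mem_inter.1 (by rw [hn e he, mem_singleton])).2
    have hD : ({k | e ∈ mergeColor S c n col k} : Finset (Fin 3)) = univ.erase (col e) := by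
      ext k
      rw [mem_filter, mem_mergeColor_of_mem hn he]
      simp
    have hR : ({i ∈ insert c ((S c).image n) | e ∈ S i} : Finset ι) = {c, n e} := by
      ext i
      rw [mem_filter, hS.mem_iff (hc e he).symm he hmem]
      grind
    rw [hD, hR, card_pair (hc e he).symm, card_erase_of_mem (mem_univ _), card_univ,
      Fintype.card_fin]
  · have hD : ({k | e ∈ mergeColor S c n col k} : Finset (Fin 3)) =
        {g ∈ S c | e ∈ S (n g)}.image col := by
      ext k
      rw [mem_filter, mem_mergeColor_of_notMem he, and_iff_right (mem_univ k)]
    have hR : ({i ∈ insert c ((S c).image n) | e ∈ S i} : Finset ι) =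
        {g ∈ S c | e ∈ S (n g)}.image n := by
      grind
    rw [hD, hR, card_image_of_injOn, card_image_of_injOn]
    · exact hinj.mono fun g hg => (mem_filter.1 hg).1
    · intro g hg g' hg' h
      by_contra hne
      obtain ⟨hg, heg⟩ := mem_filter.1 hg
      obtain ⟨hg', heg'⟩ := mem_filter.1 hg'
      exact disjoint_left.1 (hcol (col g') (by simp [hg, h]) (by simp [hg']) hne) heg heg'

lemma IsDoubleCover.hasDoubleCover_of_mergeColor (hsub : G.IsSubcubic) :
    ∃ m, G.HasDoubleCover m ∧ m + #(S c) = Fintype.card ι + 2 := by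
  obtain ⟨m, hm, hcard⟩ := hS.hasDoubleCover_of_replace (R := insert c ((S c).image n))
    (hS.isCircuit_mergeColor hn hcol hsub)
    fun e _ => hS.card_filter_mem_mergeColor hc hn hcol e
  have hcS : c ∉ (S c).image n := fun h =>
    let ⟨g, hg, hgc⟩ := mem_image.1 h
    hc g hg hgc
  rw [card_insert_of_notMem hcS, card_image_of_injOn (injOn_of_inter_eq_singleton hn),
    Fintype.card_fin] at hcard
  exact ⟨m, hm, by omega⟩

end MergeColor

lemma IsDoubleCover.exists_partner (hS : G.IsDoubleCover S) (c : ι) :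
    ∃ n : β → ι, ∀ g ∈ S c, n g ≠ c ∧ g ∈ S (n g) := by
  have hex : ∀ g, ∃ j, g ∈ S c → j ≠ c ∧ g ∈ S j := fun g => by
    by_cases hg : g ∈ S c
    · have htwo := hS.card_eq_two g ((hS.isCircuit c).subset_edges hg)
      obtain ⟨j, hj, hjc⟩ := exists_mem_ne (by omega : 1 < #{i | g ∈ S i}) c
      exact ⟨j, fun _ => ⟨hjc, (mem_filter.1 hj).2⟩⟩
    · exact ⟨c, fun h => absurd h hg⟩
  choose n hn using hex
  exact ⟨n, hn⟩

/-- Three members of `S` that pairwise share an edge meet in a vertex. So the neighbours of `S c`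
across two edges of the same colour are disjoint, and merging keeps circuits. -/
theorem IsEulerCover.exists_hasDoubleCover (hS : G.IsEulerCover S) (hG : G.TwoEdgeConnected)
    (h3 : G.IsCubic) (h4 : G.EssentiallyFourEdgeConnected) (c : ι) :
    ∃ m, G.HasDoubleCover m ∧ m + #(S c) = Fintype.card ι + 2 := by
  have hsub : G.IsSubcubic := h3.isSubcubic
  obtain ⟨n, hn⟩ := hS.exists_partner c
  obtain ⟨col, hcol⟩ := (hS.isCircuit c).exists_coloring hsub
  have hinter : ∀ g ∈ S c, S c ∩ S (n g) = {g} := fun g hg => by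
    obtain ⟨hne, hmem⟩ := hn g hg
    refine eq_singleton_iff_unique_mem.2 ⟨mem_inter.2 ⟨hg, hmem⟩, fun g' hg' => ?_⟩
    obtain ⟨hgc', hgn'⟩ := mem_inter.1 hg'
    exact hS.eq_of_two_common hG h3 h4 hne.symm hgc' hgn' hg hmem
  refine hS.hasDoubleCover_of_mergeColor (fun g hg => (hn g hg).1) hinter (col := col)
    (fun k g hgk g' hgk' hne => ?_) hsub
  obtain ⟨hg, hk⟩ := mem_filter.1 hgk
  obtain ⟨hg', hk'⟩ := mem_filter.1 hgk'
  refine Finset.disjoint_left.2 fun z hz hz' => hcol g hg g' hg' hne ?_ (hk.trans hk'.symm)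
  exact hS.exists_inc_inc hG h3 h4 (hn g hg).1.symm (hn g' hg').1.symm
    (fun h => hne (injOn_of_inter_eq_singleton hinter hg hg' h)) hg (hn g hg).2 hg'
    (hn g' hg').2 hz hz'

end Cover

lemma Admissible.exists_hasDoubleCover_lt (hG : G.Admissible) (h3 : G.IsCubic)
    (h4 : G.EssentiallyFourEdgeConnected) (hV : 4 ≤ #G.verts) :
    ∃ m, G.HasDoubleCover m ∧ m + #G.verts ≤ #G.edges + 1 ∧
      (5 ≤ #G.verts → m + #G.verts ≤ #G.edges) := by
  obtain ⟨m, ⟨S, hS⟩, hcard⟩ := hG.hasEulerCover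
  obtain ⟨v, -, hv3⟩ := hG.exists_branch
  obtain ⟨e, he⟩ := card_pos.1 (by omega : 0 < #(G.cut {v}))
  obtain ⟨c, -⟩ := hS.exists_mem (cut_subset_edges _ he)
  have hcover : G.IsEulerCover S := ⟨hS, by rwa [Fintype.card_fin]⟩
  obtain ⟨m', hm', hmm⟩ := hcover.exists_hasDoubleCover hG.twoEdgeConnected h3 h4 c
  rw [Fintype.card_fin] at hmm
  have := (hS.isCircuit c).four_le_card_or_card_verts_le h3.isSubcubic h4
  exact ⟨m', hm', by omega, by omega⟩

/-! ### Graphs with few parallel edges -/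

/-- Any two parallel edges of `G` have `y` as an end. -/
def ParallelOnlyAt (G : Multigraph α β) (y : α) : Prop :=
  ∀ ⦃a b e f⦄, e ∈ G.edges → f ∈ G.edges → e ≠ f → G.IsLink e a b → G.IsLink f a b →
    a = y ∨ b = y

/-- All vertices other than `y` have degree 3. -/
def IsCubicAwayFrom (G : Multigraph α β) (y : α) : Prop :=
  ∀ v ∈ G.verts, v ≠ y → #(G.cut {v}) = 3

/-- `G` has a double cover by at least `k` circuits fewer than the Euler count `#E - #V + 2`. -/
def HasSlackCover (G : Multigraph α β) (k : ℕ) : Prop :=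
  ∃ m, G.HasDoubleCover m ∧ m + #G.verts + k ≤ #G.edges + 2

lemma HasEulerCover.hasSlackCover (h : G.HasEulerCover) : G.HasSlackCover 0 :=
  h.imp fun _ hm => ⟨hm.1, hm.2.le⟩

lemma IsLink.of_contract {X : Finset α} {x a b : α} {e : β} (h : (G.contract X x).IsLink e a b)
    (ha : a ≠ x) (hb : b ≠ x) : a ∉ X ∧ b ∉ X ∧ G.IsLink e a b := by
  obtain ⟨a', b', ha', hb', hab⟩ := h.exists_of_map
  grind

lemma ParallelOnlyAt.contract {X : Finset α} {x y : α} (h : G.ParallelOnlyAt y) (hy : y ∈ X) :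
    (G.contract X x).ParallelOnlyAt x := by
  intro a b e f he hf hef hea hfa
  by_contra! hne
  obtain ⟨ha, hb, hea⟩ := hea.of_contract hne.1 hne.2
  obtain ⟨-, -, hfa⟩ := hfa.of_contract hne.1 hne.2
  rcases h (edges_contract_subset he) (edges_contract_subset hf) hef hea hfa with rfl | rfl
  · exact ha hy
  · exact hb hy

lemma IsCubicAwayFrom.contract {X : Finset α} {x y : α} (h : G.IsCubicAwayFrom y) (hx : x ∈ X)
    (hy : y ∈ X) : (G.contract X x).IsCubicAwayFrom x := by
  intro v hv hvx
  have hvX : v ∈ G.verts \ X := by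
    obtain ⟨a, ha, rfl⟩ := mem_image.1 hv
    grind
  rw [cut_contract_other hx hvX]
  exact h v (mem_sdiff.1 hvX).1 fun hvy => (mem_sdiff.1 hvX).2 (hvy ▸ hy)

lemma IsCubic.isCubicAwayFrom (h : G.IsCubic) (y : α) : G.IsCubicAwayFrom y :=
  fun v hv _ => h v hv

lemma IsCubicAwayFrom.isCubic {y : α} (h : G.IsCubicAwayFrom y) (hy : #(G.cut {y}) = 3) :
    G.IsCubic := fun v hv => (eq_or_ne v y).elim (fun hvy => hvy ▸ hy) (h v hv)

lemma IsCubic.three_mul_card_verts (h : G.IsCubic) : 3 * #G.verts = 2 * #G.edges := by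
  rw [← sum_card_inter_cut Subset.rfl, mul_comm, ← smul_eq_mul]
  exact (sum_const_nat fun v hv => by
    rw [inter_eq_right.2 (cut_subset_edges {v}), h v hv]).symm

lemma HasSlackCover.glue {X : Finset α} {x y : α} {k₁ k₂ : ℕ} (hX : X ⊆ G.verts) (hx : x ∈ X)
    (hy : y ∈ G.verts \ X) (h2 : 2 ≤ #(G.cut X)) (h3 : #(G.cut X) ≤ 3)
    (h₁ : (G.contract X x).HasSlackCover k₁)
    (h₂ : (G.contract (G.verts \ X) y).HasSlackCover k₂) : G.HasSlackCover (k₁ + k₂) := by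
  obtain ⟨m₁, hm₁, hk₁⟩ := h₁
  obtain ⟨m₂, hm₂, hk₂⟩ := h₂
  obtain ⟨m, hm, hmm⟩ := hm₁.glue hm₂ hX hx hy h2 h3
  have hV := card_verts_contract hX hx
  have hV' := card_verts_contract sdiff_subset hy
  have hE := card_edges_contract_add hx hy
  have hcard := card_sdiff_add_card_eq_card hX
  exact ⟨m, hm, by omega⟩

lemma ParallelOnlyAt.four_le_card_verts {y : α} (hp : G.ParallelOnlyAt y)
    (h3 : G.IsCubicAwayFrom y) (hy : y ∈ G.verts) (hy2 : #(G.cut {y}) ≤ 2) (hV : 3 ≤ #G.verts) :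
    4 ≤ #G.verts := by
  by_contra hlt
  have hcard := card_sdiff_add_card_eq_card (singleton_subset_iff.2 hy)
  rw [card_singleton] at hcard
  obtain ⟨w, z, hwz, hwzV⟩ := card_eq_two.1 (by omega : #(G.verts \ {y}) = 2)
  obtain ⟨hw, hwy⟩ := mem_sdiff.1 (hwzV ▸ mem_insert_self w {z} : w ∈ G.verts \ {y})
  obtain ⟨hz, hzy⟩ := mem_sdiff.1 (by simp [hwzV] : z ∈ G.verts \ {y})
  rw [mem_singleton] at hwy hzy
  have hcut := card_cut_pair (G := G) hwz
  rw [← hwzV, cut_sdiff_verts, h3 w hw hwy, h3 z hz hzy] at hcut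
  obtain ⟨e, he, f, hf, hef⟩ :=
    one_lt_card.1 (by omega : 1 < #(G.cut {w} ∩ G.cut {z}))
  simp only [mem_inter, mem_cut_singleton] at he hf
  rcases hp he.1.1 hf.1.1 hef (he.1.2.isLink_of_ne he.2.2 hwz) (hf.1.2.isLink_of_ne hf.2.2 hwz)
    with h | h
  · exact hwy h
  · exact hzy h

theorem Admissible.hasSlackCover_one {y : α} (hG : G.Admissible) (hy : y ∈ G.verts)
    (h3 : G.IsCubicAwayFrom y) (hp : G.ParallelOnlyAt y) (hV : 3 ≤ #G.verts) :
    G.HasSlackCover 1 := by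
  induction hn : #G.verts using Nat.strong_induction_on generalizing G y with
  | _ n ih =>
  by_cases hy3 : #(G.cut {y}) = 3
  · have hcubic := h3.isCubic hy3
    by_cases h4 : G.EssentiallyFourEdgeConnected
    · have := hcubic.three_mul_card_verts
      obtain ⟨m, hm, hle, -⟩ := hG.exists_hasDoubleCover_lt hcubic h4 (by omega)
      exact ⟨m, hm, by omega⟩
    · obtain ⟨X, hX, hyX, z, hz, hX2, hY2, hc2, hc3, hGX, hGY⟩ :=
        hG.exists_separation hcubic h4 hy
      have hcard := card_verts_contract hX hyX
      have hcard' := card_sdiff_add_card_eq_card hX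
      exact HasSlackCover.glue hX hyX hz hc2 hc3
        (ih _ (by omega) hGX (self_mem_verts_contract hX hyX) (h3.contract hyX hyX)
          (hp.contract hyX) (by omega) rfl)
        hGY.hasEulerCover.hasSlackCover
  · obtain ⟨w, e, f, hef, hcut, hyw, hfw⟩ := hG.exists_cut_eq_pair hy hy3
    have hV4 := hp.four_le_card_verts h3 hy (hcut ▸ card_le_two) hV
    have hcard := card_contract_pair hcut hyw hfw
    have heE : e ∈ G.edges := cut_subset_edges {y} (by simp [hcut])
    have hyX : y ∈ ({y, w} : Finset α) := mem_insert_self _ _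
    have hwX : w ∈ ({y, w} : Finset α) := by simp
    obtain ⟨m, hm, hle⟩ := ih _ (by omega) (hG.contract_pair hcut hyw hfw hef)
      (self_mem_verts_contract (hyw.pair_subset_verts heE) hwX) (h3.contract hwX hyX)
      (hp.contract hyX) (by omega) rfl
    exact ⟨m, hm.of_contract_pair hef hcut hyw hfw, by omega⟩

theorem Admissible.hasSlackCover_two (hG : G.Admissible) (h3 : G.IsCubic)
    (hp : ∀ y, G.ParallelOnlyAt y) (hV : 5 ≤ #G.verts) : G.HasSlackCover 2 := by
  by_cases h4 : G.EssentiallyFourEdgeConnected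
  · obtain ⟨m, hm, -, hle⟩ := hG.exists_hasDoubleCover_lt h3 h4 (by omega)
    have := hle hV
    exact ⟨m, hm, by omega⟩
  · obtain ⟨x, hx, -⟩ := hG.exists_branch
    obtain ⟨X, hX, hxX, z, hz, hX2, hY2, hc2, hc3, hGX, hGY⟩ := hG.exists_separation h3 h4 hx
    have hcard := card_verts_contract hX hxX
    have hcard' := card_verts_contract sdiff_subset hz
    have := card_sdiff_add_card_eq_card hX
    exact HasSlackCover.glue (k₁ := 1) (k₂ := 1) hX hxX hz hc2 hc3
      (hGX.hasSlackCover_one (self_mem_verts_contract hX hxX)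
        ((h3.isCubicAwayFrom x).contract hxX hxX) ((hp x).contract hxX) (by omega))
      (hGY.hasSlackCover_one (self_mem_verts_contract sdiff_subset hz)
        ((h3.isCubicAwayFrom z).contract hz hz) ((hp z).contract hz) (by omega))

theorem Admissible.exists_hasDoubleCover_two_mul_le (hG : G.Admissible) (h3 : G.IsCubic)
    (hp : ∀ y, G.ParallelOnlyAt y) (hV : 5 ≤ #G.verts) :
    ∃ m, G.HasDoubleCover m ∧ 2 * m ≤ #G.verts := by
  obtain ⟨m, hm, hle⟩ := hG.hasSlackCover_two h3 hp hV
  have := h3.three_mul_card_verts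
  exact ⟨m, hm, by omega⟩

/-! ### Simple graphs -/

section SimpleGraph

variable {V : Type*} {H : SimpleGraph V}

lemma coe_connected_iff_exists_adj {K : H.Subgraph} :
    K.coe.Connected ↔ K.verts.Nonempty ∧
      ∀ Z : Set V, (K.verts ∩ Z).Nonempty → (K.verts \ Z).Nonempty →
        ∃ a ∈ Z, ∃ b ∉ Z, K.Adj a b := by
  rw [connected_iff, Set.nonempty_coe_sort, and_comm]
  refine and_congr_right fun _ => ⟨fun h Z => ?_, fun h x y => ?_⟩
  · rintro ⟨x, hx, hxZ⟩ ⟨y, hy, hyZ⟩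
    obtain ⟨p⟩ := h ⟨x, hx⟩ ⟨y, hy⟩
    obtain ⟨d, -, hd, hd'⟩ := p.exists_boundary_dart (Subtype.val ⁻¹' Z) hxZ hyZ
    exact ⟨_, hd, _, hd', d.adj⟩
  · by_contra hxy
    obtain ⟨_, ⟨a, hxa, rfl⟩, b, hb, hab⟩ := h (Subtype.val '' {z | K.coe.Reachable x z})
      ⟨x, x.2, x, Reachable.refl x, rfl⟩
      ⟨y, y.2, fun ⟨z, hxz, hzy⟩ => hxy (Subtype.ext hzy ▸ hxz)⟩
    have hadj : K.coe.Adj a ⟨b, hab.snd_mem⟩ := hab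
    exact hb ⟨_, hxa.trans hadj.reachable, rfl⟩

lemma connected_induce_iff_exists_adj {s : Set V} :
    (H.induce s).Connected ↔ s.Nonempty ∧
      ∀ Z : Set V, (s ∩ Z).Nonempty → (s \ Z).Nonempty →
        ∃ a ∈ s ∩ Z, ∃ b ∈ s \ Z, H.Adj a b := by
  rw [connected_induce_iff, Subgraph.connected_iff', coe_connected_iff_exists_adj]
  simp only [Subgraph.induce_verts, Subgraph.induce_adj, Subgraph.top_adj, Set.mem_inter_iff,
    Set.mem_sdiff]
  grind

lemma mk_out_fst_out_snd (e : Sym2 V) : s((Quot.out e).1, (Quot.out e).2) = e := Quot.out_eq e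

/-- The subgraph of `H` formed by a set of edges and their ends. -/
def edgeSubgraph (H : SimpleGraph V) (C : Finset (Sym2 V)) : H.Subgraph where
  verts := {v | ∃ w, H.Adj v w ∧ s(v, w) ∈ C}
  Adj a b := H.Adj a b ∧ s(a, b) ∈ C
  adj_sub h := h.1
  edge_vert h := ⟨_, h⟩
  symm := ⟨fun _ _ h => ⟨h.1.symm, Sym2.eq_swap ▸ h.2⟩⟩

lemma mem_edgeSet_edgeSubgraph {C : Finset (Sym2 V)} {e : Sym2 V} :
    e ∈ (edgeSubgraph H C).edgeSet ↔ e ∈ H.edgeSet ∧ e ∈ C := by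
  induction e with
  | h a b => rfl

variable [Fintype V]

/-- A simple graph as a multigraph: the edges are unordered pairs, with arbitrarily ordered
ends. -/
noncomputable def ofSimpleGraph (H : SimpleGraph V) : Multigraph V (Sym2 V) where
  verts := univ
  edges := {e | e ∈ H.edgeSet}
  src e := (Quot.out e).1
  tgt e := (Quot.out e).2
  src_mem _ _ := mem_univ _
  tgt_mem _ _ := mem_univ _
  src_ne_tgt e he := by
    have hadj : s((Quot.out e).1, (Quot.out e).2) ∈ H.edgeSet := by
      rw [mk_out_fst_out_snd]
      exact (mem_filter.1 he).2
    exact hadj.ne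

lemma verts_ofSimpleGraph : (ofSimpleGraph H).verts = univ := rfl

lemma mem_edges_ofSimpleGraph {e : Sym2 V} : e ∈ (ofSimpleGraph H).edges ↔ e ∈ H.edgeSet :=
  mem_filter_univ e

lemma isLink_ofSimpleGraph {e : Sym2 V} {a b : V} :
    (ofSimpleGraph H).IsLink e a b ↔ e = s(a, b) := by
  conv_rhs => rw [← mk_out_fst_out_snd e]
  exact Sym2.eq_iff.symm

lemma inc_ofSimpleGraph {e : Sym2 V} {v : V} : (ofSimpleGraph H).Inc e v ↔ v ∈ e := by
  rw [Sym2.mem_iff_exists]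
  refine ⟨fun h => h.exists_isLink.imp fun _ => isLink_ofSimpleGraph.1, ?_⟩
  rintro ⟨w, hw⟩
  exact (isLink_ofSimpleGraph.2 hw).inc_left

lemma Linked.exists_adj {A B : Finset V} (h : (ofSimpleGraph H).Linked A B) :
    ∃ a ∈ A, ∃ b ∈ B, H.Adj a b := by
  obtain ⟨e, he, a, ha, b, hb, hlink⟩ := h
  rw [isLink_ofSimpleGraph] at hlink
  exact ⟨a, ha, b, hb, by rwa [← mem_edgeSet, ← hlink, ← mem_edges_ofSimpleGraph]⟩

lemma mk_mem_cut_ofSimpleGraph {X : Finset V} {a b : V} (h : H.Adj a b) (ha : a ∈ X)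
    (hb : b ∉ X) : s(a, b) ∈ (ofSimpleGraph H).cut X :=
  (isLink_ofSimpleGraph.2 rfl).mem_cut_iff.2 ⟨mem_edges_ofSimpleGraph.2 h, by simp [ha, hb]⟩

lemma ncard_setOf_mk_mem {F : Finset (Sym2 V)} (hF : F ⊆ (ofSimpleGraph H).edges) (v : V) :
    {w | s(v, w) ∈ F}.ncard = #(F ∩ (ofSimpleGraph H).cut {v}) := by
  have hinj : Function.Injective fun w : V => s(v, w) := fun _ _ h => Sym2.congr_right.1 h
  rw [← Set.ncard_image_of_injective _ hinj, ← Set.ncard_coe_finset]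
  congr 1
  ext e
  simp only [Set.mem_image, Set.mem_ofPred_eq, mem_coe, mem_inter, mem_cut_singleton,
    inc_ofSimpleGraph]
  constructor
  · rintro ⟨w, hw, rfl⟩
    exact ⟨hw, hF hw, Sym2.mem_mk_left v w⟩
  · rintro ⟨heF, -, hv⟩
    obtain ⟨w, rfl⟩ := Sym2.mem_iff_exists.1 hv
    exact ⟨w, heF, rfl⟩

lemma card_cut_singleton_ofSimpleGraph (v : V) :
    #((ofSimpleGraph H).cut {v}) = (H.neighborSet v).ncard := by
  rw [← inter_eq_right.2 (cut_subset_edges {v}), ← ncard_setOf_mk_mem Subset.rfl]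
  simp only [mem_edges_ofSimpleGraph, mem_edgeSet, neighborSet]

lemma parallelOnlyAt_ofSimpleGraph (y : V) : (ofSimpleGraph H).ParallelOnlyAt y :=
  fun _ _ _ _ _ _ hef he hf =>
    absurd ((isLink_ofSimpleGraph.1 he).trans (isLink_ofSimpleGraph.1 hf).symm) hef

lemma exists_adj_of_isKConnected {k : ℕ} (h : IsKConnected k H) {s Z : Set V} (hs : s.ncard < k)
    {x y : V} (hx : x ∈ Z \ s) (hy : y ∉ Z ∪ s) : ∃ a ∈ Z \ s, ∃ b ∉ Z, H.Adj a b := by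
  rw [Set.mem_union, not_or] at hy
  obtain ⟨a, ha, b, hb, hab⟩ := (connected_induce_iff_exists_adj.1 (h.2 s hs)).2 Z
    ⟨x, hx.2, hx.1⟩ ⟨y, hy.2, hy.1⟩
  exact ⟨a, ⟨ha.2, ha.1⟩, b, hb.2, hab⟩

lemma twoEdgeConnected_ofSimpleGraph (h : IsKConnected 2 H)
    (hcubic : ∀ v : V, (H.neighborSet v).ncard = 3) : (ofSimpleGraph H).TwoEdgeConnected := by
  rintro X ⟨x, hx⟩ ⟨y, hy⟩
  simp only [verts_ofSimpleGraph, mem_inter, mem_univ, mem_sdiff, true_and] at hx hy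
  obtain ⟨a, ⟨ha, -⟩, b, hb, hab⟩ := exists_adj_of_isKConnected h (s := ∅) (Z := X) (by simp)
    (by simpa using hx) (by simpa using hy)
  rcases eq_singleton_or_nontrivial ha with rfl | hX
  · rw [card_cut_singleton_ofSimpleGraph, hcubic]
    norm_num
  · -- Once the end `a` of the first cut edge is removed, another edge still crosses the cut.
    obtain ⟨z, hz, hza⟩ := hX.exists_ne a
    have hba : b ≠ a := fun hba => hb (hba ▸ ha)
    obtain ⟨c, ⟨hc, hca⟩, d, hd, hcd⟩ := exists_adj_of_isKConnected h (s := {a}) (Z := X)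
      (by simp) ⟨hz, hza⟩ (by simpa using ⟨hba, hb⟩)
    refine one_lt_card.2 ⟨_, mk_mem_cut_ofSimpleGraph hab ha hb, _,
      mk_mem_cut_ofSimpleGraph hcd hc hd, fun heq => ?_⟩
    rcases Sym2.eq_iff.1 heq with ⟨hac, -⟩ | ⟨had, -⟩
    · exact hca hac.symm
    · exact hd (had ▸ ha)

lemma PreconnectedOn.connected_induce {X : Finset V} (h : (ofSimpleGraph H).PreconnectedOn X)
    (hX : X.Nonempty) : (H.induce (X : Set V)).Connected := by
  refine connected_induce_iff_exists_adj.2 ⟨hX, fun Z ⟨x, hxX, hxZ⟩ ⟨y, hyX, hyZ⟩ => ?_⟩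
  obtain ⟨a, ha, b, hb, hab⟩ := (h {v | v ∈ Z} ⟨x, by simpa using ⟨hxX, hxZ⟩⟩
    ⟨y, by simpa using ⟨hyX, hyZ⟩⟩).exists_adj
  exact ⟨a, by simpa using ha, b, by simpa using hb, hab⟩

lemma HasK33Minor.hasGraphMinor (h : (ofSimpleGraph H).HasK33Minor) :
    HasGraphMinor H (completeBipartiteGraph (Fin 3) (Fin 3)) := by
  obtain ⟨B, hB, hdisj, hlink⟩ := h
  refine ⟨fun w => B w, fun w => (hB w).1, fun w => (hB w).2.2.connected_induce (hB w).1,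
    fun _ _ hw => disjoint_coe.2 (hdisj hw), ?_⟩
  rintro (i | i) (j | j) hij
  · simp at hij
  · exact (hlink i j).exists_adj
  · exact (hlink j i).symm.exists_adj
  · simp at hij

lemma isCubic_ofSimpleGraph (hcubic : ∀ v : V, (H.neighborSet v).ncard = 3) :
    (ofSimpleGraph H).IsCubic :=
  fun v _ => (card_cut_singleton_ofSimpleGraph v).trans (hcubic v)

lemma admissible_ofSimpleGraph (h : IsKConnected 2 H)
    (hcubic : ∀ v : V, (H.neighborSet v).ncard = 3)
    (hminor : ¬HasGraphMinor H (completeBipartiteGraph (Fin 3) (Fin 3))) :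
    (ofSimpleGraph H).Admissible where
  twoEdgeConnected := twoEdgeConnected_ofSimpleGraph h hcubic
  isSubcubic := (isCubic_ofSimpleGraph hcubic).isSubcubic
  exists_branch := by
    obtain ⟨v⟩ := Fintype.card_pos_iff.1 (Nat.zero_lt_of_lt h.1)
    exact ⟨v, mem_univ v, isCubic_ofSimpleGraph hcubic v (mem_univ v)⟩
  not_hasK33Minor := fun hK => hminor hK.hasGraphMinor

lemma IsCircuit.connected_edgeSubgraph {C : Finset (Sym2 V)}
    (hC : (ofSimpleGraph H).IsCircuit C) : (edgeSubgraph H C).coe.Connected := by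
  have hadj : ∀ {a b}, s(a, b) ∈ C → H.Adj a b := fun h =>
    mem_edges_ofSimpleGraph.1 (hC.subset_edges h)
  refine coe_connected_iff_exists_adj.2 ⟨?_, fun Z => ?_⟩
  · obtain ⟨e, he⟩ := hC.nonempty
    induction e with
    | h a b => exact ⟨a, b, hadj he, he⟩
  · rintro ⟨x, ⟨x', -, hx⟩, hxZ⟩ ⟨y, ⟨y', -, hy⟩, hyZ⟩
    obtain ⟨e, he, hcut⟩ := hC.exists_mem_cut (X := {v | v ∈ Z}) (x := x) (y := y)
      (by simpa using hxZ) (by simpa using hyZ) hx (inc_ofSimpleGraph.2 (Sym2.mem_mk_left x x'))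
      hy (inc_ofSimpleGraph.2 (Sym2.mem_mk_left y y'))
    obtain ⟨a, ha, b, hb, hab⟩ := exists_isLink_of_mem_cut hcut
    rw [isLink_ofSimpleGraph.1 hab] at he
    exact ⟨a, by simpa using ha, b, by simpa using hb, hadj he, he⟩

lemma IsCircuit.isCycleSubgraph (hcubic : ∀ v : V, (H.neighborSet v).ncard = 3)
    {C : Finset (Sym2 V)} (hC : (ofSimpleGraph H).IsCircuit C) :
    IsCycleSubgraph (edgeSubgraph H C) := by
  refine ⟨hC.connected_edgeSubgraph, fun v ⟨w, _, hw⟩ => ?_⟩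
  have hneighbor : (edgeSubgraph H C).neighborSet v = {u | s(v, u) ∈ C} := by
    ext u
    exact ⟨fun h => h.2, fun h => ⟨mem_edges_ofSimpleGraph.1 (hC.subset_edges h), h⟩⟩
  rw [hneighbor, ncard_setOf_mk_mem hC.subset_edges]
  convert hC.card_inter_cut_eq_two (isCubic_ofSimpleGraph hcubic v (mem_univ v)).le hw
    (inc_ofSimpleGraph.2 (Sym2.mem_mk_left v w))

lemma IsDoubleCover.isCDC {ι : Type*} [Fintype ι] {S : ι → Finset (Sym2 V)}
    (hS : (ofSimpleGraph H).IsDoubleCover S) (hcubic : ∀ v : V, (H.neighborSet v).ncard = 3) :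
    IsCDC H ((univ : Finset ι).val.map fun i => edgeSubgraph H (S i)) := by
  constructor
  · intro C hC
    obtain ⟨i, -, rfl⟩ := Multiset.mem_map.1 hC
    exact (hS.isCircuit i).isCycleSubgraph hcubic
  · intro e he
    rw [← hS.card_eq_two e (mem_edges_ofSimpleGraph.2 he), Multiset.countP_map, card_def,
      filter_val]
    simp only [mem_edgeSet_edgeSubgraph, he, true_and]
    congr!

end SimpleGraph

end Multigraph

/-- Every planar 2-connected cubic simple graph on `n > 4` vertices has a cycle double
cover of size at most `n/2`. -/
theorem statement_14 {V : Type*} [Fintype V] (G : SimpleGraph V)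
    (hplanar : IsPlanar G) (h2 : IsKConnected 2 G)
    (hcubic : ∀ v : V, (G.neighborSet v).ncard = 3)
    (hn : 4 < Fintype.card V) :
    ∃ S : Multiset G.Subgraph, IsCDC G S ∧
      2 * Multiset.card S ≤ Fintype.card V := by
  have hG := Multigraph.admissible_ofSimpleGraph h2 hcubic hplanar.2
  obtain ⟨m, ⟨S, hS⟩, hm⟩ := hG.exists_hasDoubleCover_two_mul_le
    (Multigraph.isCubic_ofSimpleGraph hcubic) Multigraph.parallelOnlyAt_ofSimpleGraph hn
  exact ⟨_, hS.isCDC hcubic, by simpa [Multigraph.verts_ofSimpleGraph] using hm⟩
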